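/- Let k be an algebraically closed field, S a polynomial ring over k, and I ⊆ S a homogeneous ideal of height 3 generated by n quadrics. If I has an associated prime p with height(p) = 3 and Hilbert–Samuel multiplicity e(S/p) = 5, then pd_S(S/I) ≤ 6. -/

import Mathlib

open CategoryTheory Opposite

universe u

/-- The height of an ideal: the infimum of the heights (in the prime spectrum,
ordered by inclusion) of the primes containing it. -/
noncomputable def Ideal.heightENat {R : Type u} [CommRing R] (I : Ideal R) : ℕ∞ :=
  ⨅ (p : PrimeSpectrum R) (_ : I ≤ p.asIdeal), Order.height p

/-- The projective dimension of an `R`-module `M`: the least `n` such that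
`Ext^i(M, N) = 0` for all `i > n` and all modules `N` (and `⊤` if no such `n` exists). -/
noncomputable def projDim (R : Type u) [CommRing R] (M : Type u) [AddCommGroup M]
    [Module R M] : ℕ∞ :=
  sInf ((↑) '' {n : ℕ | ∀ i : ℕ, n < i → ∀ N : ModuleCat.{u} R,
    Subsingleton (((Ext R (ModuleCat.{u} R) i).obj (op (ModuleCat.of R M))).obj N)})

/-- The Hilbert function of the standard graded ring `S/J`, where
`S = k[x_1, ..., x_N]`: the `k`-dimension of the degree-`d` graded piece of `S/J`. -/
noncomputable def hilbertFunction (k : Type u) [Field k] {N : ℕ}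
    (J : Ideal (MvPolynomial (Fin N) k)) (d : ℕ) : ℕ :=
  Module.finrank k (Submodule.map (Ideal.Quotient.mkₐ k J).toLinearMap
    (MvPolynomial.homogeneousSubmodule (Fin N) k d))

open scoped Classical in
/-- The Hilbert–Samuel multiplicity `e(S/J)` of the graded ring `S/J`:
`(deg P)!` times the leading coefficient of the Hilbert polynomial `P` of `S/J`,
i.e. of the polynomial agreeing with the Hilbert function in all large degrees
(the degree of the Hilbert polynomial being `dim(S/J) - 1`). -/
noncomputable def hilbertSamuelMultiplicity (k : Type u) [Field k] {N : ℕ}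
    (J : Ideal (MvPolynomial (Fin N) k)) : ℚ :=
  if h : ∃ P : Polynomial ℚ, ∀ᶠ d : ℕ in Filter.atTop,
      (hilbertFunction k J d : ℚ) = P.eval (d : ℚ)
  then (h.choose.natDegree).factorial * h.choose.leadingCoeff
  else 0

/-!
Since `k` is infinite, linear changes of coordinates and three general quadrics `g 0, g 1, g 2` in
`I` can be chosen so that `S = R[X 0, X 1, X 2]` with `R = k[x_1, …, x_d]`, and the leading forms
`F i` of the `g i` in the variables `X` form a regular sequence of quadrics in `k[X 0, X 1, X 2]`.
The complete intersection `S ⧸ (g)` is then free over `R` of rank `8`, and a multiplicity of at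
least `5` makes the rank of `S ⧸ p` at least `5` as well, so the `R`-module `p ⧸ (g)` has rank at
most `3`.

A further quadric in `I`, taken modulo `(g)`, has a leading form `φ` that is a nonzero quadratic
form modulo `(F)`, because `p` contains no nonzero polynomial of degree at most `1` in `X`. If two
of these forms are independent, the rank bound forces `I ⧸ (g)` to be free over `R`. If all of them
are multiples of one, `I ⧸ (g)` is generated by a single element `q`, and the rank bound gives
`I ⧸ (g)` projective dimension at most `1`. In every case `S ⧸ I` has projective dimension at most
`2` over `R`, hence at most `2 + 3 = 5` over `S`.
-/

/-! ### Projective dimension -/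

section ProjectiveDimension

theorem projDim_le_of_hasProjectiveDimensionLE (R : Type u) [CommRing R] (M : Type u)
    [AddCommGroup M] [Module R M] (n : ℕ) (h : HasProjectiveDimensionLE (ModuleCat.of R M) n) :
    projDim R M ≤ n := by
  refine sInf_le ⟨n, fun i hi N ↦ ?_, rfl⟩
  obtain ⟨i, rfl⟩ : ∃ j, i = j + 1 := ⟨i - 1, by lia⟩
  let P := projectiveResolution (ModuleCat.of R M)
  rw [← ModuleCat.isZero_iff_subsingleton]
  refine .of_iso ?_ (P.isoExt (i + 1) N)
  rw [← HomologicalComplex.exactAt_iff_isZero_homology,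
    HomologicalComplex.exactAt_iff' _ i (i + 1) (i + 2) (by simp) (by simp),
    ShortComplex.moduleCat_exact_iff]
  intro (f : P.complex.X (i + 1) ⟶ N) (hf : P.complex.d (i + 2) (i + 1) ≫ f = 0)
  exact (P.extMk_eq_zero_iff f (i + 2) rfl hf i rfl).1
    (Abelian.Ext.eq_zero_of_hasProjectiveDimensionLT _ (n + 1) hi)

variable {A : Type u} [CommRing A]

theorem hasProjectiveDimensionLE_zero_iff (M : Type u) [AddCommGroup M] [Module A M] :
    HasProjectiveDimensionLE (ModuleCat.of A M) 0 ↔ Module.Projective A M := by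
  rw [← projective_iff_hasProjectiveDimensionLE_zero, ← IsProjective.iff_projective]

theorem hasProjectiveDimensionLE_succ_iff_of_exact {K P M : Type u} [AddCommGroup K] [Module A K]
    [AddCommGroup P] [Module A P] [AddCommGroup M] [Module A M] [hP : Module.Projective A P]
    {f : K →ₗ[A] P} {g : P →ₗ[A] M} (hf : Function.Injective f) (hg : Function.Surjective g)
    (hfg : Function.Exact f g) (n : ℕ) :
    HasProjectiveDimensionLE (ModuleCat.of A M) (n + 1) ↔
      HasProjectiveDimensionLE (ModuleCat.of A K) n := by
  let S : ShortComplex (ModuleCat.{u} A) :=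
    .mk (ModuleCat.ofHom f) (ModuleCat.ofHom g) (by ext x; exact hfg.apply_apply_eq_zero x)
  have hS : S.ShortExact := .mk' ((ShortComplex.moduleCat_exact_iff _).2 fun x hx ↦ (hfg x).1 hx)
    ((ModuleCat.mono_iff_injective _).2 hf) ((ModuleCat.epi_iff_surjective _).2 hg)
  exact hS.hasProjectiveDimensionLT_X₃_iff n ((IsProjective.iff_projective (R := A) P).1 hP)

attribute [local instance] RingHomInvPair.of_ringEquiv in
theorem hasProjectiveDimensionLE_of_ringEquiv {B : Type u} [CommRing B] (e : A ≃+* B)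
    {M N : Type u} [AddCommGroup M] [Module A M] [AddCommGroup N] [Module B N] (e' : M ≃+ N)
    (he : ∀ (a : A) (m : M), e' (a • m) = e a • e' m) {n : ℕ}
    (h : HasProjectiveDimensionLE (ModuleCat.of A M) n) :
    HasProjectiveDimensionLE (ModuleCat.of B N) n := by
  let e'' : (ModuleCat.of A M) ≃ₛₗ[RingHomClass.toRingHom e] (ModuleCat.of B N) :=
    { e' with map_smul' := he }
  exact ModuleCat.hasProjectiveDimensionLE_of_semiLinearEquiv e e'' n

theorem hasProjectiveDimensionLE_quotient_of_map_ringEquiv {B : Type u} [CommRing B] (e : A ≃+* B)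
    (I : Ideal A) {n : ℕ}
    (h : HasProjectiveDimensionLE (ModuleCat.of B (B ⧸ I.map (e : A →+* B))) n) :
    HasProjectiveDimensionLE (ModuleCat.of A (A ⧸ I)) n := by
  let E := Ideal.quotientEquiv I (I.map (e : A →+* B)) e rfl
  refine hasProjectiveDimensionLE_of_ringEquiv e.symm E.symm.toAddEquiv (fun b m ↦ ?_) h
  obtain ⟨m, rfl⟩ := Ideal.Quotient.mk_surjective m
  exact map_mul E.symm (Ideal.Quotient.mk _ b) (Ideal.Quotient.mk _ m)

section CharacteristicSequence

open Polynomial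

variable (M : Type u) [AddCommGroup M] [Module A M] [Module A[X] M] [IsScalarTower A A[X] M]

/-- The `A[X]`-linear map `M[X] → M`, `∑ mᵢ Xⁱ ↦ ∑ Xⁱ • mᵢ`, on the right of the
characteristic sequence `0 → M[X] → M[X] → M → 0` of an `A[X]`-module `M`. -/
noncomputable def characteristicEval : PolynomialModule A M →ₗ[A[X]] M :=
  (LinearMap.liftBaseChange A[X] (LinearMap.id : M →ₗ[A] M)).comp
    (PolynomialModule.polynomialTensorProductLEquivPolynomialModule A M).symm.toLinearMap

/-- The `A[X]`-linear endomorphism `X ⊗ 1 - 1 ⊗ X` of `M[X] = A[X] ⊗ M`, on the left of the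
characteristic sequence `0 → M[X] → M[X] → M → 0` of an `A[X]`-module `M`. -/
noncomputable def characteristicMap : PolynomialModule A M →ₗ[A[X]] PolynomialModule A M where
  toFun q := (X : A[X]) • q -
    PolynomialModule.map A ((Module.toModuleEnd A (S := A[X]) M X : M →ₗ[A] M)) q
  map_add' p q := by rw [smul_add, map_add, add_sub_add_comm]
  map_smul' a q := by
    rw [PolynomialModule.map_smul, Algebra.algebraMap_self, Polynomial.map_id, RingHom.id_apply,
      smul_sub, smul_comm]

variable {M}

theorem characteristicEval_single (i : ℕ) (m : M) :
    characteristicEval M (PolynomialModule.single A i m) = (X ^ i : A[X]) • m := by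
  have h : PolynomialModule.single A i m =
      PolynomialModule.polynomialTensorProductLEquivPolynomialModule A M
        ((X ^ i : A[X]) ⊗ₜ m) := by
    change _ = LinearMap.liftBaseChange A[X] (PolynomialModule.lsingle A (M := M) 0) _
    rw [LinearMap.liftBaseChange_tmul, ← monomial_one_right_eq_X_pow,
      PolynomialModule.monomial_smul_lsingle, one_smul, add_zero]
    rfl
  simp [h, characteristicEval]

theorem characteristicMap_single (i : ℕ) (m : M) :
    characteristicMap M (PolynomialModule.single A i m) =
      PolynomialModule.single A (i + 1) m - PolynomialModule.single A i ((X : A[X]) • m) := by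
  change (X : A[X]) • PolynomialModule.single A i m - PolynomialModule.map A _ _ = _
  rw [PolynomialModule.map_single, ← monomial_one_one_eq_X, PolynomialModule.monomial_smul_single,
    one_smul, add_comm]
  rfl

theorem coeff_succ_characteristicMap (q : PolynomialModule A M) (n : ℕ) :
    (characteristicMap M q).coeff (n + 1) = q.coeff n - (X : A[X]) • q.coeff (n + 1) := by
  have h : ((X : A[X]) • q).coeff (n + 1) = q.coeff n := by
    rw [← monomial_one_one_eq_X, PolynomialModule.monomial_smul_apply]; simp
  change ((X : A[X]) • q).coeff (n + 1) - _ = _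
  rw [h]
  simp [PolynomialModule.map]

theorem characteristicMap_injective : Function.Injective (characteristicMap (A := A) M) := by
  rw [injective_iff_map_eq_zero]
  intro q hq
  have hstep n : q.coeff n = (X : A[X]) • q.coeff (n + 1) :=
    sub_eq_zero.1 (by rw [← coeff_succ_characteristicMap, hq]; rfl)
  have hpow n j : q.coeff n = (X ^ j : A[X]) • q.coeff (n + j) := by
    induction j with
    | zero => simp
    | succ j ih => rw [ih, hstep (n + j), smul_smul, pow_succ, add_assoc]
  refine PolynomialModule.ext (Finsupp.ext fun n ↦ ?_)
  obtain ⟨j, hj⟩ := Infinite.exists_notMem_finset (q.coeff.support.preimage (n + ·) (by simp))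
  rw [hpow n j, Finsupp.notMem_support_iff.1 (by simpa using hj), smul_zero]
  rfl

theorem characteristicEval_surjective : Function.Surjective (characteristicEval (A := A) M) :=
  fun m ↦ ⟨PolynomialModule.single A 0 m, by simp [characteristicEval_single]⟩

theorem exists_eq_single_add_characteristicMap (q : PolynomialModule A M) :
    ∃ r, q = PolynomialModule.single A 0 (characteristicEval M q) + characteristicMap M r := by
  induction q using PolynomialModule.induction_linear with
  | zero => exact ⟨0, by simp⟩
  | add x y hx hy =>
    obtain ⟨r, hr⟩ := hx
    obtain ⟨s, hs⟩ := hy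
    refine ⟨r + s, ?_⟩
    rw [map_add, map_add, PolynomialModule.single_add, add_add_add_comm, ← hr, ← hs]
  | single n m =>
    induction n generalizing m with
    | zero => exact ⟨0, by simp [characteristicEval_single]⟩
    | succ n ih =>
      obtain ⟨r, hr⟩ := ih ((X : A[X]) • m)
      refine ⟨r + PolynomialModule.single A n m, ?_⟩
      rw [characteristicEval_single, smul_smul, ← pow_succ] at hr
      rw [map_add, characteristicMap_single, characteristicEval_single, ← add_assoc, ← hr]
      abel

theorem characteristicSequence_exact :
    Function.Exact (characteristicMap (A := A) M) (characteristicEval M) := by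
  refine fun q ↦ ⟨fun hq ↦ ?_, ?_⟩
  · obtain ⟨r, hr⟩ := exists_eq_single_add_characteristicMap q
    exact ⟨r, by rw [hr, hq]; simp⟩
  · rintro ⟨r, rfl⟩
    induction r using PolynomialModule.induction_linear with
    | zero => simp
    | add x y hx hy => simp [hx, hy]
    | single n m =>
      rw [characteristicMap_single, map_sub, characteristicEval_single, characteristicEval_single,
        smul_smul, ← pow_succ, sub_self]

end CharacteristicSequence

open Polynomial in
theorem hasProjectiveDimensionLE_polynomial (n : ℕ) (M : Type u) [AddCommGroup M] [Module A M]
    [Module A[X] M] [IsScalarTower A A[X] M]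
    (h : HasProjectiveDimensionLE (ModuleCat.of A M) n) :
    HasProjectiveDimensionLE (ModuleCat.of A[X] M) (n + 1) := by
  induction n generalizing M with
  | zero =>
    rw [hasProjectiveDimensionLE_zero_iff] at h
    have : Module.Projective A[X] (PolynomialModule A M) :=
      .of_equiv (PolynomialModule.polynomialTensorProductLEquivPolynomialModule A M)
    rwa [hasProjectiveDimensionLE_succ_iff_of_exact characteristicMap_injective
      characteristicEval_surjective characteristicSequence_exact, hasProjectiveDimensionLE_zero_iff]
  | succ n ih =>
    let g : (M →₀ A[X]) →ₗ[A[X]] M := Finsupp.linearCombination A[X] id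
    have hg : Function.Surjective g := fun m ↦ ⟨Finsupp.single m 1, by simp [g]⟩
    have hex : Function.Exact (LinearMap.ker g).subtype g := fun x ↦ by simp
    rw [hasProjectiveDimensionLE_succ_iff_of_exact (Submodule.subtype_injective _) hg hex]
    refine ih _ ((hasProjectiveDimensionLE_succ_iff_of_exact
      (f := (LinearMap.ker g).subtype.restrictScalars A) (g := g.restrictScalars A)
      (Submodule.subtype_injective _) hg hex n).1 h)

theorem hasProjectiveDimensionLE_mvPolynomial (m n : ℕ) (M : Type u) [AddCommGroup M] [Module A M]
    [instModule : Module (MvPolynomial (Fin m) A) M] [IsScalarTower A (MvPolynomial (Fin m) A) M]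
    (h : HasProjectiveDimensionLE (ModuleCat.of A M) n) :
    HasProjectiveDimensionLE (ModuleCat.of (MvPolynomial (Fin m) A) M) (n + m) := by
  induction m generalizing instModule with
  | zero =>
    refine hasProjectiveDimensionLE_of_ringEquiv
      (MvPolynomial.isEmptyAlgEquiv A (Fin 0)).symm.toRingEquiv (AddEquiv.refl M) (fun a x ↦ ?_) h
    change a • x = (MvPolynomial.isEmptyAlgEquiv A (Fin 0)).symm (algebraMap A A a) • x
    rw [AlgEquiv.commutes, algebraMap_smul]
  | succ m ih =>
    let e := MvPolynomial.finSuccEquiv A m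
    let _ : Module (MvPolynomial (Fin m) A) (M) :=
      Module.compHom M (e.symm.toRingHom.comp Polynomial.C)
    let _ : Module (Polynomial (MvPolynomial (Fin m) A)) M := Module.compHom M e.symm.toRingHom
    have hCsmul (a : MvPolynomial (Fin m) A) (x : M) : a • x = e.symm (Polynomial.C a) • x := rfl
    have hsmul (a : Polynomial (MvPolynomial (Fin m) A)) (x : M) : a • x = e.symm a • x := rfl
    have : IsScalarTower A (MvPolynomial (Fin m) A) M :=
      ⟨fun a b x ↦ by rw [hCsmul, hCsmul, ← Polynomial.smul_C, map_smul, smul_assoc]⟩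
    have : IsScalarTower (MvPolynomial (Fin m) A) (Polynomial (MvPolynomial (Fin m) A)) M :=
      ⟨fun a b x ↦ by
        rw [hsmul, hsmul, hCsmul, smul_smul, ← map_mul, Polynomial.smul_eq_C_mul]⟩
    exact hasProjectiveDimensionLE_of_ringEquiv e.symm.toRingEquiv (AddEquiv.refl M)
      (fun _ _ ↦ rfl) (hasProjectiveDimensionLE_polynomial (n + m) M ih)

end ProjectiveDimension

/-! ### Forms modulo homogeneous ideals -/

section Forms

open MvPolynomial

variable {σ R : Type*} [CommRing R]

theorem homogeneousComponent_add_mul {q : MvPolynomial σ R} {m : ℕ} (hq : q.IsHomogeneous m)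
    (a : MvPolynomial σ R) (n : ℕ) :
    homogeneousComponent (n + m) (a * q) = homogeneousComponent n a * q := by
  conv_lhs => rw [← sum_homogeneousComponent a, Finset.sum_mul, map_sum]
  have component_mul (i : ℕ) : homogeneousComponent (n + m) (homogeneousComponent i a * q)
      = if i = n then homogeneousComponent n a * q else 0 := by
    rw [homogeneousComponent_of_mem ((homogeneousComponent_isHomogeneous i a).mul hq)]
    aesop
  simp only [component_mul, Finset.sum_ite_eq', Finset.mem_range, ite_eq_left_iff]
  intro hn
  rw [homogeneousComponent_eq_zero _ _ (by omega), zero_mul]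

theorem homogeneousComponent_mul_eq_zero {q : MvPolynomial σ R} {m : ℕ}
    (hq : q.IsHomogeneous m) (a : MvPolynomial σ R) {n : ℕ} (h : n < m) :
    homogeneousComponent n (a * q) = 0 := by
  conv_lhs => rw [← sum_homogeneousComponent a, Finset.sum_mul, map_sum]
  refine Finset.sum_eq_zero fun i _ ↦ ?_
  rw [homogeneousComponent_of_mem ((homogeneousComponent_isHomogeneous i a).mul hq),
    if_neg (by omega)]

theorem exists_isHomogeneous_coeffs_of_mem_span {ι : Type*} [Fintype ι]
    {F : ι → MvPolynomial σ R} {m : ℕ} (hF : ∀ i, (F i).IsHomogeneous m) {n : ℕ}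
    {g : MvPolynomial σ R} (hg : g.IsHomogeneous (n + m)) (h : g ∈ Ideal.span (Set.range F)) :
    ∃ c : ι → MvPolynomial σ R, (∀ i, (c i).IsHomogeneous n) ∧ g = ∑ i, c i * F i := by
  obtain ⟨c, hc⟩ := Ideal.mem_span_range_iff_exists_fun.1 h
  refine ⟨fun i ↦ homogeneousComponent n (c i),
    fun i ↦ homogeneousComponent_isHomogeneous _ _, ?_⟩
  rw [← homogeneousComponent_eq_self hg, ← hc, map_sum]
  exact Finset.sum_congr rfl fun i _ ↦ homogeneousComponent_add_mul (hF i) _ _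

theorem eq_zero_of_mem_span_of_isHomogeneous_lt {ι : Type*} [Finite ι]
    {F : ι → MvPolynomial σ R} {m : ℕ} (hF : ∀ i, (F i).IsHomogeneous m) {n : ℕ} (hn : n < m)
    {g : MvPolynomial σ R} (hg : g.IsHomogeneous n) (h : g ∈ Ideal.span (Set.range F)) :
    g = 0 := by
  have := Fintype.ofFinite ι
  obtain ⟨c, hc⟩ := Ideal.mem_span_range_iff_exists_fun.1 h
  rw [← homogeneousComponent_eq_self hg, ← hc, map_sum]
  exact Finset.sum_eq_zero fun i _ ↦ homogeneousComponent_mul_eq_zero (hF i) _ hn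

theorem eq_C_of_isHomogeneous_zero {c : MvPolynomial σ R} (hc : c.IsHomogeneous 0) :
    c = C (coeff 0 c) :=
  totalDegree_eq_zero_iff_eq_C.1 ((totalDegree_zero_iff_isHomogeneous ..).2 hc)

theorem exists_eq_sum_C_mul_X_of_isHomogeneous_one [Fintype σ] {c : MvPolynomial σ R}
    (hc : c.IsHomogeneous 1) : ∃ a : σ → R, c = ∑ i, C (a i) * X i := by
  rw [← mem_homogeneousSubmodule, homogeneousSubmodule_one_eq_span_X,
    Submodule.mem_span_range_iff_exists_fun] at hc
  obtain ⟨a, ha⟩ := hc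
  exact ⟨a, by simp only [← ha, smul_eq_C_mul]⟩

theorem coeff_single_sum_C_mul_X [Fintype σ] (a : σ → R) (j : σ) :
    coeff (Finsupp.single j 1) (∑ i, C (a i) * X i : MvPolynomial σ R) = a j := by
  classical
  simp [coeff_sum, coeff_X, Finsupp.single_left_inj]

theorem finrank_homogeneousSubmodule (k : Type*) [Field k] (d t : ℕ) :
    Module.finrank k (homogeneousSubmodule (Fin d) k t) = (d + t - 1).choose t := by
  have support_eq : homogeneousSubmodule (Fin d) k t = restrictSupport k
      ((Finset.univ : Finset (Fin d)).finsuppAntidiag t : Set (Fin d →₀ ℕ)) := by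
    rw [homogeneousSubmodule_eq_finsupp_supported]
    congr 1
    ext m
    simp [Finsupp.degree_eq_sum]
  rw [support_eq, Module.finrank_eq_card_basis (basisRestrictSupport k _)]
  simpa using Finset.card_finsuppAntidiag_nat_eq_choose (s := (Finset.univ : Finset (Fin d))) t

instance finite_homogeneousSubmodule [Finite σ] (t : ℕ) :
    Module.Finite R (homogeneousSubmodule σ R t) :=
  Module.Finite.iff_fg.2 (homogeneousSubmodule_fg σ R t)

theorem isSMulRegular_quotient_span_X_image (s : Set σ) {i : σ} (hi : i ∉ s) :
    IsSMulRegular (MvPolynomial σ R ⧸ Ideal.span (X '' s : Set (MvPolynomial σ R)))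
      (X i : MvPolynomial σ R) := by
  classical
  rw [isSMulRegular_quotient_iff_mem_of_smul_mem]
  intro g hg
  rw [smul_eq_mul, mem_ideal_span_X_image] at hg
  rw [mem_ideal_span_X_image]
  intro m hm
  obtain ⟨j, hj, hmj⟩ := hg (m + Finsupp.single i 1) (by
    rw [mem_support_iff, mul_comm, coeff_mul_X]
    exact mem_support_iff.1 hm)
  have hij : i ≠ j := fun h ↦ hi (h ▸ hj)
  exact ⟨j, hj, by simpa [Finsupp.single_apply, hij] using hmj⟩

end Forms

/-! ### Exchanging generators of a regular sequence -/

section Exchange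

variable {T : Type*} [CommRing T] {I : Ideal T}

theorem mem_sup_span_singleton {v g : T} : g ∈ I ⊔ Ideal.span {v} ↔ ∃ w, g - w * v ∈ I := by
  rw [Submodule.mem_sup]
  constructor
  · rintro ⟨a, ha, _, hb, rfl⟩
    obtain ⟨w, rfl⟩ := Ideal.mem_span_singleton'.1 hb
    exact ⟨w, by rwa [add_sub_cancel_right]⟩
  · rintro ⟨w, hw⟩
    exact ⟨_, hw, w * v, Ideal.mem_span_singleton'.2 ⟨w, rfl⟩, sub_add_cancel _ _⟩

theorem isSMulRegular_quotient_of_mem_radical {u v : T} (hu : IsSMulRegular (T ⧸ I) u)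
    (h : u ∈ (I ⊔ Ideal.span {v}).radical) : IsSMulRegular (T ⧸ I) v := by
  obtain ⟨s, hs⟩ := h
  obtain ⟨w, hw⟩ := mem_sup_span_singleton.1 hs
  refine (isSMulRegular_quotient_iff_mem_of_smul_mem I v).2 fun g hg ↦ ?_
  refine mem_of_isSMulRegular_quotient_of_smul_mem (hu.pow s) ?_
  rw [smul_eq_mul, show u ^ s * g = (u ^ s - w * v) * g + w * (v * g) by ring]
  exact I.add_mem (I.mul_mem_right _ hw) (I.mul_mem_left _ hg)

theorem isSMulRegular_quotient_sup_swap {u v : T} (hu : IsSMulRegular (T ⧸ I) u)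
    (hv : IsSMulRegular (T ⧸ I ⊔ Ideal.span {u}) v) :
    IsSMulRegular (T ⧸ I ⊔ Ideal.span {v}) u := by
  refine (isSMulRegular_quotient_iff_mem_of_smul_mem _ u).2 fun g hg ↦ ?_
  obtain ⟨h, hh⟩ := mem_sup_span_singleton.1 hg
  rw [smul_eq_mul] at hh
  have hvh : v * h ∈ I ⊔ Ideal.span {u} := mem_sup_span_singleton.2
    ⟨g, by rw [show v * h - g * u = -(u * g - h * v) by ring]; exact I.neg_mem hh⟩
  obtain ⟨h', hh'⟩ := mem_sup_span_singleton.1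
    (mem_of_isSMulRegular_quotient_of_smul_mem hv hvh)
  refine mem_sup_span_singleton.2
    ⟨h', mem_of_isSMulRegular_quotient_of_smul_mem hu ?_⟩
  rw [smul_eq_mul, show u * (g - h' * v) = (u * g - h * v) + v * (h - h' * u) by ring]
  exact I.add_mem hh (I.mul_mem_left _ hh')

theorem mem_sup_span_of_exchange {u v φ e : T} (hu : IsSMulRegular (T ⧸ I) u)
    (h : u * φ - e * v ∈ I) (he : e ∈ I ⊔ Ideal.span {u}) : φ ∈ I ⊔ Ideal.span {v} := by
  obtain ⟨w, hw⟩ := mem_sup_span_singleton.1 he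
  refine mem_sup_span_singleton.2
    ⟨w, mem_of_isSMulRegular_quotient_of_smul_mem hu ?_⟩
  rw [smul_eq_mul, show u * (φ - w * v) = (u * φ - e * v) + v * (e - w * u) by ring]
  exact I.add_mem h (I.mul_mem_left _ hw)

open MvPolynomial

attribute [local instance] MvPolynomial.gradedAlgebra

variable {σ k : Type*} [CommRing k]

/-- The class of `φ` modulo the ideal `I` is annihilated by all variables, that is, it lies in the
socle of the quotient. -/
def IsSocleModulo (I : Ideal (MvPolynomial σ k)) (φ : MvPolynomial σ k) : Prop :=
  ∀ j, X j * φ ∈ I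

theorem isHomogeneous_sup_span_singleton {I : Ideal (MvPolynomial σ k)}
    (hI : I.IsHomogeneous (homogeneousSubmodule σ k)) {q : MvPolynomial σ k} {m : ℕ}
    (hq : q.IsHomogeneous m) :
    (I ⊔ Ideal.span {q}).IsHomogeneous (homogeneousSubmodule σ k) :=
  hI.sup (Ideal.homogeneous_span _ _ (by rintro _ rfl; exact ⟨m, hq⟩))

theorem exists_isHomogeneous_sub_mul_mem {I : Ideal (MvPolynomial σ k)}
    (hI : I.IsHomogeneous (homogeneousSubmodule σ k)) {v g : MvPolynomial σ k} {m t : ℕ}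
    (hv : v.IsHomogeneous m) (hg : g.IsHomogeneous t) (h : g ∈ I ⊔ Ideal.span {v}) :
    ∃ e : MvPolynomial σ k, e.IsHomogeneous (t - m) ∧ (t < m → e = 0) ∧ g - e * v ∈ I := by
  obtain ⟨w, hw⟩ := mem_sup_span_singleton.1 h
  have hcomp := homogeneousComponent_mem_of_mem hI hw t
  rw [map_sub, homogeneousComponent_eq_self hg] at hcomp
  rcases lt_or_ge t m with ht | ht
  · refine ⟨0, isHomogeneous_zero _ _ _, fun _ ↦ rfl, ?_⟩
    rwa [homogeneousComponent_mul_eq_zero hv _ ht, ← zero_mul v] at hcomp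
  · obtain ⟨n, rfl⟩ := Nat.exists_eq_add_of_le' ht
    rw [homogeneousComponent_add_mul hv] at hcomp
    refine ⟨_, ?_, fun h ↦ absurd h (by omega), hcomp⟩
    rw [add_tsub_cancel_right]
    exact homogeneousComponent_isHomogeneous n w

theorem IsSocleModulo.exchange {I : Ideal (MvPolynomial σ k)} {v φ e : MvPolynomial σ k}
    {i : σ} (hs : IsSocleModulo (I ⊔ Ideal.span {v}) φ)
    (hv : IsSMulRegular (MvPolynomial σ k ⧸ I) v) (he : X i * φ - e * v ∈ I) :
    IsSocleModulo (I ⊔ Ideal.span {X i}) e := by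
  intro j
  obtain ⟨w, hw⟩ := mem_sup_span_singleton.1 (hs j)
  refine mem_sup_span_singleton.2
    ⟨w, mem_of_isSMulRegular_quotient_of_smul_mem hv ?_⟩
  rw [smul_eq_mul, show v * (X j * e - w * X i) =
    X i * (X j * φ - w * v) - X j * (X i * φ - e * v) by ring]
  exact I.sub_mem (I.mul_mem_left _ hw) (I.mul_mem_left _ he)

end Exchange

/-! ### Three quadratic forms in three variables -/

section HilbertFunction

open MvPolynomial

variable {k : Type u} [Field k] {N : ℕ}

theorem hilbertFunction_add_finrank (J : Ideal (MvPolynomial (Fin N) k)) (t : ℕ) :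
    hilbertFunction k J t +
      Module.finrank k ↥(J.restrictScalars k ⊓ homogeneousSubmodule (Fin N) k t) =
        (N + t - 1).choose t := by
  have rank_nullity := LinearMap.finrank_range_add_finrank_ker
    ((Ideal.Quotient.mkₐ k J).toLinearMap.domRestrict (homogeneousSubmodule (Fin N) k t))
  have ker_eq : (Ideal.Quotient.mkₐ k J).toLinearMap.ker = J.restrictScalars k :=
    Submodule.ext fun g ↦ Ideal.Quotient.eq_zero_iff_mem
  rwa [LinearMap.range_domRestrict, finrank_homogeneousSubmodule, LinearMap.ker_domRestrict,
    ← Submodule.finrank_map_subtype_eq, Submodule.map_comap_subtype, inf_comm, ker_eq]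
    at rank_nullity

end HilbertFunction

section GeneralPosition

open MvPolynomial

attribute [local instance] MvPolynomial.gradedAlgebra

/-- Three quadratic forms in `X 0, X 1, X 2` that can replace the variables one at a time: each of
`(X 0, X 1, F 2)`, `(X 0, F 2, F 1)` and `(F 2, F 1, F 0)` is still primary to the ideal of the
variables. Only the membership of the variables that the exchanges need is recorded. -/
structure InGeneralPosition {k : Type*} [Field k] (F : Fin 3 → MvPolynomial (Fin 3) k) :
    Prop where
  isHomogeneous : ∀ i, (F i).IsHomogeneous 2
  X_two_mem_radical : X 2 ∈ (Ideal.span {X 0} ⊔ Ideal.span {X 1} ⊔ Ideal.span {F 2}).radical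
  X_one_mem_radical : X 1 ∈ (Ideal.span {X 0} ⊔ Ideal.span {F 2} ⊔ Ideal.span {F 1}).radical
  X_mem_radical : ∀ j, X j ∈ (Ideal.span (Set.range F)).radical

theorem span_range_fin_three {T : Type*} [CommRing T] (F : Fin 3 → T) :
    Ideal.span (Set.range F) = Ideal.span {F 2} ⊔ Ideal.span {F 1} ⊔ Ideal.span {F 0} := by
  rw [← Ideal.span_union, ← Ideal.span_union]
  congr 1
  ext x
  simp [Fin.exists_fin_succ, eq_comm]

theorem mem_pow_idealOfVars_of_isHomogeneous {σ R : Type*} [CommRing R] {c : MvPolynomial σ R}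
    {s t : ℕ} (hc : c.IsHomogeneous t) (hst : s ≤ t) : c ∈ idealOfVars σ R ^ s :=
  (mem_pow_idealOfVars_iff s c).2 fun m hm ↦
    hst.trans (by rw [← hc (mem_support_iff.1 hm), Finsupp.degree_eq_weight_one]; rfl)

variable {k : Type u} [Field k] {F : Fin 3 → MvPolynomial (Fin 3) k}

theorem isSMulRegular_X_zero_X_one :
    IsSMulRegular
      (MvPolynomial (Fin 3) k ⧸
        (Ideal.span {X 0} ⊔ Ideal.span {X 1} : Ideal (MvPolynomial (Fin 3) k)))
      (X 2 : MvPolynomial (Fin 3) k) := by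
  have := isSMulRegular_quotient_span_X_image (R := k) {0, 1} (i := (2 : Fin 3)) (by decide)
  rwa [Set.image_pair, Ideal.span_insert] at this

namespace InGeneralPosition

theorem isSMulRegular_two (hF : InGeneralPosition F) :
    IsSMulRegular
      (MvPolynomial (Fin 3) k ⧸
        (Ideal.span {X 0} ⊔ Ideal.span {X 1} : Ideal (MvPolynomial (Fin 3) k))) (F 2) :=
  isSMulRegular_quotient_of_mem_radical isSMulRegular_X_zero_X_one hF.X_two_mem_radical

theorem isSMulRegular_X_one (hF : InGeneralPosition F) :
    IsSMulRegular (MvPolynomial (Fin 3) k ⧸ Ideal.span {X 0} ⊔ Ideal.span {F 2})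
      (X 1 : MvPolynomial (Fin 3) k) := by
  have := isSMulRegular_quotient_span_X_image (R := k) {0} (i := (1 : Fin 3)) (by decide)
  rw [Set.image_singleton] at this
  exact isSMulRegular_quotient_sup_swap this hF.isSMulRegular_two

theorem isSMulRegular_one (hF : InGeneralPosition F) :
    IsSMulRegular (MvPolynomial (Fin 3) k ⧸ Ideal.span {X 0} ⊔ Ideal.span {F 2}) (F 1) :=
  isSMulRegular_quotient_of_mem_radical hF.isSMulRegular_X_one hF.X_one_mem_radical

theorem two_notMem_span_X_zero (hF : InGeneralPosition F) :
    F 2 ∉ (Ideal.span {X 0} : Ideal (MvPolynomial (Fin 3) k)) := by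
  intro h
  obtain ⟨s, hs⟩ := hF.X_two_mem_radical
  have le_ker : Ideal.span {X 0} ⊔ Ideal.span {X 1} ⊔ Ideal.span {F 2} ≤
      RingHom.ker (eval (![0, 0, 1] : Fin 3 → k)) := by
    obtain ⟨w, hw⟩ := Ideal.mem_span_singleton'.1 h
    simp [Ideal.span_le, ← hw]
  simpa using RingHom.mem_ker.1 (le_ker hs)

theorem isSMulRegular_X_zero (hF : InGeneralPosition F) :
    IsSMulRegular (MvPolynomial (Fin 3) k ⧸ Ideal.span {F 2} ⊔ Ideal.span {F 1})
      (X 0 : MvPolynomial (Fin 3) k) := by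
  have hX : IsSMulRegular (MvPolynomial (Fin 3) k ⧸ ⊥ ⊔ Ideal.span {F 2})
      (X 0 : MvPolynomial (Fin 3) k) := by
    refine isSMulRegular_quotient_sup_swap ?_ ?_
    · have := isSMulRegular_quotient_span_X_image (R := k) ∅ (i := (0 : Fin 3)) (by simp)
      rwa [Set.image_empty, Ideal.span_empty] at this
    · rw [bot_sup_eq, isSMulRegular_quotient_iff_mem_of_smul_mem]
      have hprime : (Ideal.span {X 0} : Ideal (MvPolynomial (Fin 3) k)).IsPrime :=
        (Ideal.span_singleton_prime (X_ne_zero _)).2 X_prime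
      exact fun g hg ↦ (hprime.mem_or_mem hg).resolve_left hF.two_notMem_span_X_zero
  rw [bot_sup_eq] at hX
  refine isSMulRegular_quotient_sup_swap hX ?_
  rw [sup_comm]
  exact hF.isSMulRegular_one

theorem isSMulRegular_zero (hF : InGeneralPosition F) :
    IsSMulRegular (MvPolynomial (Fin 3) k ⧸ Ideal.span {F 2} ⊔ Ideal.span {F 1}) (F 0) :=
  isSMulRegular_quotient_of_mem_radical hF.isSMulRegular_X_zero
    (span_range_fin_three F ▸ hF.X_mem_radical 0)

end InGeneralPosition

/-- Multiplication by `X 0 * X 1 * X 2` carries `φ` to `c * F 0 * F 1 * F 2`, one factor at a time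
and modulo the ideals of the successive exchanges. -/
def ExchangesTo (F : Fin 3 → MvPolynomial (Fin 3) k) (φ c : MvPolynomial (Fin 3) k) : Prop :=
  ∃ e g : MvPolynomial (Fin 3) k,
    X 0 * φ - e * F 0 ∈ Ideal.span {F 2} ⊔ Ideal.span {F 1} ∧
    X 1 * e - g * F 1 ∈ Ideal.span {X 0} ⊔ Ideal.span {F 2} ∧
    X 2 * g - c * F 2 ∈ Ideal.span {X 0} ⊔ Ideal.span {X 1}

theorem ExchangesTo.sub_C_mul {φ ψ c c' : MvPolynomial (Fin 3) k} (h : ExchangesTo F φ c)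
    (h' : ExchangesTo F ψ c') (a : k) : ExchangesTo F (φ - C a * ψ) (c - C a * c') := by
  obtain ⟨e, g, h₁, h₂, h₃⟩ := h
  obtain ⟨e', g', h₁', h₂', h₃'⟩ := h'
  refine ⟨e - C a * e', g - C a * g', ?_, ?_, ?_⟩
  · convert Ideal.sub_mem _ h₁ (Ideal.mul_mem_left _ (C a) h₁') using 1; ring
  · convert Ideal.sub_mem _ h₂ (Ideal.mul_mem_left _ (C a) h₂') using 1; ring
  · convert Ideal.sub_mem _ h₃ (Ideal.mul_mem_left _ (C a) h₃') using 1; ring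

namespace InGeneralPosition

theorem mem_of_exchangesTo (hF : InGeneralPosition F) {φ c : MvPolynomial (Fin 3) k}
    (h : ExchangesTo F φ c) (hc : c ∈ idealOfVars (Fin 3) k) :
    φ ∈ Ideal.span (Set.range F) := by
  obtain ⟨e, g, h₁, h₂, h₃⟩ := h
  rw [idealOfVars, span_range_fin_three, sup_comm, ← sup_assoc, sup_right_comm] at hc
  have hg : g ∈ Ideal.span {X 0} ⊔ Ideal.span {X 1} ⊔ Ideal.span {F 2} :=
    mem_sup_span_of_exchange isSMulRegular_X_zero_X_one h₃ hc
  have he : e ∈ Ideal.span {X 0} ⊔ Ideal.span {F 2} ⊔ Ideal.span {F 1} :=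
    mem_sup_span_of_exchange hF.isSMulRegular_X_one h₂ (by rwa [sup_right_comm])
  rw [span_range_fin_three]
  exact mem_sup_span_of_exchange hF.isSMulRegular_X_zero h₁ (by
    rwa [sup_assoc, sup_comm] at he)

theorem exists_exchangesTo (hF : InGeneralPosition F) {φ : MvPolynomial (Fin 3) k} {t : ℕ}
    (hφ : φ.IsHomogeneous t) (hs : IsSocleModulo (Ideal.span (Set.range F)) φ) :
    ∃ c : MvPolynomial (Fin 3) k, c.IsHomogeneous (t - 3) ∧ (t < 3 → c = 0) ∧
      ExchangesTo F φ c := by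
  rw [span_range_fin_three] at hs
  have span_hom {q : MvPolynomial (Fin 3) k} {m : ℕ} (hq : q.IsHomogeneous m) :
      (Ideal.span {q}).IsHomogeneous (homogeneousSubmodule (Fin 3) k) :=
    Ideal.homogeneous_span _ _ (by rintro _ rfl; exact ⟨m, hq⟩)
  have X_mul_hom (i : Fin 3) {ψ : MvPolynomial (Fin 3) k} {n : ℕ} (hψ : ψ.IsHomogeneous n) :
      (X i * ψ).IsHomogeneous (1 + n) := (isHomogeneous_X _ i).mul hψ
  obtain ⟨e, he, _, h₁⟩ := exists_isHomogeneous_sub_mul_mem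
    (isHomogeneous_sup_span_singleton (span_hom (hF.isHomogeneous 2)) (hF.isHomogeneous 1))
    (hF.isHomogeneous 0) (X_mul_hom 0 hφ) (hs 0)
  have hse : IsSocleModulo (Ideal.span {X 0} ⊔ Ideal.span {F 2} ⊔ Ideal.span {F 1}) e := by
    rw [sup_assoc, sup_comm]
    exact hs.exchange hF.isSMulRegular_zero h₁
  obtain ⟨g, hg, _, h₂⟩ := exists_isHomogeneous_sub_mul_mem
    (isHomogeneous_sup_span_singleton (span_hom (isHomogeneous_X k 0)) (hF.isHomogeneous 2))
    (hF.isHomogeneous 1) (X_mul_hom 1 he) (hse 1)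
  have hsg : IsSocleModulo (Ideal.span {X 0} ⊔ Ideal.span {X 1} ⊔ Ideal.span {F 2}) g := by
    rw [sup_right_comm]
    exact hse.exchange hF.isSMulRegular_one h₂
  obtain ⟨c, hc, hc0, h₃⟩ := exists_isHomogeneous_sub_mul_mem
    (isHomogeneous_sup_span_singleton (span_hom (isHomogeneous_X k 0)) (isHomogeneous_X k 1))
    (hF.isHomogeneous 2) (X_mul_hom 2 hg) (hsg 2)
  have degree_eq : 1 + (1 + (1 + t - 2) - 2) - 2 = t - 3 := by omega
  exact ⟨c, degree_eq ▸ hc, fun ht ↦ hc0 (by omega), e, g, h₁, h₂, h₃⟩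

theorem mem_of_isSocleModulo (hF : InGeneralPosition F) {φ : MvPolynomial (Fin 3) k} {t : ℕ}
    (hφ : φ.IsHomogeneous t) (ht : t ≠ 3) (hs : IsSocleModulo (Ideal.span (Set.range F)) φ) :
    φ ∈ Ideal.span (Set.range F) := by
  obtain ⟨c, hc, hc0, hex⟩ := hF.exists_exchangesTo hφ hs
  refine hF.mem_of_exchangesTo hex ?_
  rcases ht.lt_or_gt with h | h
  · rw [hc0 h]
    exact zero_mem _
  · simpa only [pow_one] using mem_pow_idealOfVars_of_isHomogeneous hc (show 1 ≤ t - 3 by omega)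

theorem exists_X_mul_notMem (hF : InGeneralPosition F) {φ : MvPolynomial (Fin 3) k} {t : ℕ}
    (hφ : φ.IsHomogeneous t) (ht : t ≠ 3) (h : φ ∉ Ideal.span (Set.range F)) :
    ∃ j, X j * φ ∉ Ideal.span (Set.range F) := by
  by_contra! hs
  exact h (hF.mem_of_isSocleModulo hφ ht hs)

theorem mem_of_isHomogeneous (hF : InGeneralPosition F) {φ : MvPolynomial (Fin 3) k} {t : ℕ}
    (hφ : φ.IsHomogeneous t) (ht : 4 ≤ t) : φ ∈ Ideal.span (Set.range F) := by
  obtain ⟨s, hs⟩ := Ideal.exists_pow_le_of_le_radical_of_fg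
    (Ideal.span_le.2 (Set.range_subset_iff.2 hF.X_mem_radical)) (idealOfVars_fg (Fin 3) k)
  suffices ∀ n t, 4 ≤ t → s ≤ t + n → ∀ φ : MvPolynomial (Fin 3) k, φ.IsHomogeneous t →
      φ ∈ Ideal.span (Set.range F) from this s t ht (by omega) φ hφ
  intro n
  induction n with
  | zero => exact fun t _ h φ hφ ↦ hs (mem_pow_idealOfVars_of_isHomogeneous hφ h)
  | succ n ih =>
    intro t ht h φ hφ
    exact hF.mem_of_isSocleModulo hφ (by omega) fun j ↦
      ih (1 + t) (by omega) (by omega) _ ((isHomogeneous_X _ j).mul hφ)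

theorem exists_sub_smul_mem (hF : InGeneralPosition F) {φ ψ : MvPolynomial (Fin 3) k}
    (hφ : φ.IsHomogeneous 3) (hψ : ψ.IsHomogeneous 3) (hn : ψ ∉ Ideal.span (Set.range F)) :
    ∃ a : k, φ - a • ψ ∈ Ideal.span (Set.range F) := by
  have isSocle {φ : MvPolynomial (Fin 3) k} (hφ : φ.IsHomogeneous 3) :
      IsSocleModulo (Ideal.span (Set.range F)) φ :=
    fun j ↦ hF.mem_of_isHomogeneous ((isHomogeneous_X _ j).mul hφ) le_rfl
  obtain ⟨c, hc, _, hex⟩ := hF.exists_exchangesTo hφ (isSocle hφ)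
  obtain ⟨c', hc', _, hex'⟩ := hF.exists_exchangesTo hψ (isSocle hψ)
  have coeff_ne_zero : coeff 0 c' ≠ 0 := fun h ↦ hn <| hF.mem_of_exchangesTo hex' <| by
    rw [eq_C_of_isHomogeneous_zero hc', h, C_0]
    exact zero_mem _
  refine ⟨coeff 0 c / coeff 0 c', ?_⟩
  rw [smul_eq_C_mul]
  refine hF.mem_of_exchangesTo (hex.sub_C_mul hex' _) ?_
  rw [eq_C_of_isHomogeneous_zero hc, eq_C_of_isHomogeneous_zero hc', coeff_zero_C, coeff_zero_C,
    ← C_mul, div_mul_cancel₀ _ coeff_ne_zero, sub_self]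
  exact zero_mem _

theorem inf_homogeneousSubmodule_two (hF : InGeneralPosition F) :
    (Ideal.span (Set.range F)).restrictScalars k ⊓ homogeneousSubmodule (Fin 3) k 2 =
      Submodule.span k (Set.range F) := by
  apply le_antisymm
  · rintro g ⟨hg, hg2⟩
    obtain ⟨c, hc, rfl⟩ := exists_isHomogeneous_coeffs_of_mem_span (n := 0) hF.isHomogeneous hg2 hg
    refine Submodule.sum_mem _ fun i _ ↦ ?_
    rw [eq_C_of_isHomogeneous_zero (hc i), ← smul_eq_C_mul]
    exact Submodule.smul_mem _ _ (Submodule.subset_span ⟨i, rfl⟩)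
  · rw [Submodule.span_le]
    rintro _ ⟨i, rfl⟩
    exact ⟨Ideal.subset_span ⟨i, rfl⟩, hF.isHomogeneous i⟩

theorem inf_homogeneousSubmodule_three (hF : InGeneralPosition F) :
    (Ideal.span (Set.range F)).restrictScalars k ⊓ homogeneousSubmodule (Fin 3) k 3 =
      Submodule.span k (Set.range fun p : Fin 3 × Fin 3 ↦ X p.1 * F p.2) := by
  apply le_antisymm
  · rintro g ⟨hg, hg3⟩
    obtain ⟨c, hc, rfl⟩ := exists_isHomogeneous_coeffs_of_mem_span (n := 1) hF.isHomogeneous hg3 hg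
    refine Submodule.sum_mem _ fun i _ ↦ ?_
    obtain ⟨a, ha⟩ := exists_eq_sum_C_mul_X_of_isHomogeneous_one (hc i)
    rw [ha, Finset.sum_mul]
    refine Submodule.sum_mem _ fun j _ ↦ ?_
    rw [mul_assoc, ← smul_eq_C_mul]
    exact Submodule.smul_mem _ _ (Submodule.subset_span ⟨(j, i), rfl⟩)
  · rw [Submodule.span_le]
    rintro _ ⟨p, rfl⟩
    exact ⟨Ideal.mul_mem_left _ _ (Ideal.subset_span ⟨p.2, rfl⟩),
      (isHomogeneous_X k p.1).mul (hF.isHomogeneous p.2)⟩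

theorem linearIndependent_X_mul (hF : InGeneralPosition F) :
    LinearIndependent k fun p : Fin 3 × Fin 3 ↦ X p.1 * F p.2 := by
  set W := Submodule.span k (Set.range fun p : Fin 3 × Fin 3 ↦ X p.1 * F p.2) with hW
  obtain ⟨ψ, hψ⟩ : ∃ ψ, homogeneousSubmodule (Fin 3) k 3 ≤ W ⊔ Submodule.span k {ψ} := by
    rw [hW, ← hF.inf_homogeneousSubmodule_three]
    by_cases h : ∃ ψ : MvPolynomial (Fin 3) k, ψ.IsHomogeneous 3 ∧ ψ ∉ Ideal.span (Set.range F)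
    · obtain ⟨ψ, hψ, hn⟩ := h
      refine ⟨ψ, fun φ hφ ↦ ?_⟩
      obtain ⟨a, ha⟩ := hF.exists_sub_smul_mem hφ hψ hn
      rw [← sub_add_cancel φ (a • ψ)]
      exact Submodule.add_mem_sup ⟨ha, Submodule.sub_mem _ hφ (Submodule.smul_mem _ _ hψ)⟩
        (Submodule.smul_mem _ _ (Submodule.mem_span_singleton_self _))
    · push Not at h
      exact ⟨0, fun φ hφ ↦ Submodule.mem_sup_left ⟨h φ hφ, hφ⟩⟩
  have : Module.Finite k W := Module.Finite.span_of_finite k (Set.finite_range _)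
  have finrank_le := Submodule.finrank_mono hψ
  have finrank_sup_le := Submodule.finrank_add_le_finrank_add_finrank W (Submodule.span k {ψ})
  have finrank_singleton_le := finrank_span_le_card (R := k) ({ψ} : Set (MvPolynomial (Fin 3) k))
  rw [finrank_homogeneousSubmodule] at finrank_le
  norm_num [Nat.choose] at finrank_le
  rw [Set.toFinset_singleton, Finset.card_singleton] at finrank_singleton_le
  rw [linearIndependent_iff_card_le_finrank_span, Fintype.card_prod, Fintype.card_fin, Set.finrank,
    ← hW]
  omega

theorem eq_zero_of_sum_mul_eq_zero (hF : InGeneralPosition F) {c : Fin 3 → MvPolynomial (Fin 3) k}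
    (hc : ∀ i, (c i).IsHomogeneous 1) (h : ∑ i, c i * F i = 0) : c = 0 := by
  choose a ha using fun i ↦ exists_eq_sum_C_mul_X_of_isHomogeneous_one (hc i)
  have coeff_eq_zero := Fintype.linearIndependent_iff.1 hF.linearIndependent_X_mul
    (fun p ↦ a p.2 p.1) (by
      simp only [← h, Fintype.sum_prod_type_right, ha, Finset.sum_mul, smul_eq_C_mul, mul_assoc])
  funext i
  rw [ha i]
  exact Finset.sum_eq_zero fun j _ ↦ by rw [coeff_eq_zero (j, i), C_0, zero_mul]

theorem linearIndependent (hF : InGeneralPosition F) : LinearIndependent k F := by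
  refine LinearIndependent.of_comp (LinearMap.mulLeft k (X 0)) ?_
  exact hF.linearIndependent_X_mul.comp (fun i ↦ (0, i)) (Prod.mk_right_injective 0)

theorem hilbertFunction_eq_choose (hF : InGeneralPosition F) (t : ℕ) :
    hilbertFunction k (Ideal.span (Set.range F)) t = Nat.choose 3 t := by
  have hdim := hilbertFunction_add_finrank (Ideal.span (Set.range F)) t
  have inf_eq_bot (ht : t < 2) :
      (Ideal.span (Set.range F)).restrictScalars k ⊓ homogeneousSubmodule (Fin 3) k t = ⊥ :=
    (Submodule.eq_bot_iff _).2 fun g hg ↦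
      eq_zero_of_mem_span_of_isHomogeneous_lt hF.isHomogeneous ht hg.2 hg.1
  match t with
  | 0 | 1 =>
    rw [inf_eq_bot (by omega), finrank_bot] at hdim
    exact hdim
  | 2 =>
    rw [hF.inf_homogeneousSubmodule_two, finrank_span_eq_card hF.linearIndependent] at hdim
    simpa [Nat.choose] using hdim
  | 3 =>
    rw [hF.inf_homogeneousSubmodule_three, finrank_span_eq_card hF.linearIndependent_X_mul] at hdim
    simpa [Nat.choose] using hdim
  | t + 4 =>
    rw [inf_eq_right.2 fun g hg ↦ hF.mem_of_isHomogeneous hg (by omega),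
      finrank_homogeneousSubmodule, Nat.add_eq_right] at hdim
    rw [hdim, Nat.choose_eq_zero_of_lt (by omega)]

theorem exists_eq_smul_of_mul_mem (hF : InGeneralPosition F) {l m m' : MvPolynomial (Fin 3) k}
    (hl : l.IsHomogeneous 1) (hm : m.IsHomogeneous 1) (hm' : m'.IsHomogeneous 1) (hl0 : l ≠ 0)
    (hm0 : m ≠ 0) (h : l * m ∈ Ideal.span (Set.range F))
    (h' : l * m' ∈ Ideal.span (Set.range F)) : ∃ a : k, m' = a • m := by
  have exists_eq_sum {g : MvPolynomial (Fin 3) k} (hg : g.IsHomogeneous 2)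
      (hgF : g ∈ Ideal.span (Set.range F)) : ∃ a : Fin 3 → k, ∑ i, a i • F i = g :=
    (Submodule.mem_span_range_iff_exists_fun k).1 (hF.inf_homogeneousSubmodule_two.le ⟨hgF, hg⟩)
  obtain ⟨a, ha⟩ := exists_eq_sum (hl.mul hm) h
  obtain ⟨b, hb⟩ := exists_eq_sum (hl.mul hm') h'
  have linear_syzygy : ∑ i, (a i • m' - b i • m) * F i = 0 := by
    have : ∑ i, (a i • m' - b i • m) * F i = m' * ∑ i, a i • F i - m * ∑ i, b i • F i := by
      simp only [Finset.mul_sum, ← Finset.sum_sub_distrib, sub_mul, smul_mul_assoc, mul_smul_comm]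
    rw [this, ha, hb]
    ring
  have smul_eq (i : Fin 3) : a i • m' = b i • m := sub_eq_zero.1 <| congrFun
    (hF.eq_zero_of_sum_mul_eq_zero (fun i ↦ Submodule.sub_mem (homogeneousSubmodule (Fin 3) k 1)
      (Submodule.smul_mem _ (a i) hm') (Submodule.smul_mem _ (b i) hm)) linear_syzygy) i
  obtain ⟨i, hi⟩ : ∃ i, a i ≠ 0 := by
    by_contra! ha0
    refine mul_ne_zero hl0 hm0 ?_
    rw [← ha]
    exact Finset.sum_eq_zero fun i _ ↦ by rw [ha0 i, zero_smul]
  exact ⟨(a i)⁻¹ * b i, by rw [mul_smul, ← smul_eq, inv_smul_smul₀ hi]⟩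

theorem exists_forall_coeff_ne_zero (hF : InGeneralPosition F) {l : MvPolynomial (Fin 3) k}
    (hl : l.IsHomogeneous 1) (hl0 : l ≠ 0) :
    ∃ i : Fin 3, ∀ m : MvPolynomial (Fin 3) k, m.IsHomogeneous 1 →
      l * m ∈ Ideal.span (Set.range F) → m ≠ 0 → coeff (Finsupp.single i 1) m ≠ 0 := by
  by_cases! h : ∃ m : MvPolynomial (Fin 3) k,
      m.IsHomogeneous 1 ∧ m ≠ 0 ∧ l * m ∈ Ideal.span (Set.range F)
  · obtain ⟨m, hm, hm0, hlm⟩ := h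
    obtain ⟨a, rfl⟩ := exists_eq_sum_C_mul_X_of_isHomogeneous_one hm
    obtain ⟨i, hi⟩ : ∃ i, a i ≠ 0 := by
      by_contra! ha
      exact hm0 (by simp [ha])
    refine ⟨i, fun m' hm' hlm' hm0' ↦ ?_⟩
    obtain ⟨b, rfl⟩ := hF.exists_eq_smul_of_mul_mem hl hm hm' hl0 hm0 hlm hlm'
    rw [coeff_smul, coeff_single_sum_C_mul_X]
    exact mul_ne_zero (left_ne_zero_of_smul hm0') hi
  · exact ⟨0, fun m hm hlm hm0 ↦ absurd hlm (h m hm hm0)⟩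

theorem exists_linearIndependent_X_mul (hF : InGeneralPosition F) {l : MvPolynomial (Fin 3) k}
    (hl : l.IsHomogeneous 1) (hl0 : l ≠ 0) :
    ∃ p q : Fin 3, LinearIndependent k
      (Ideal.Quotient.mk (Ideal.span (Set.range F)) ∘ ![X p * l, X q * l]) := by
  obtain ⟨i, hi⟩ := hF.exists_forall_coeff_ne_zero hl hl0
  obtain ⟨p, q, hp, hq, hpq⟩ : ∃ p q : Fin 3, p ≠ i ∧ q ≠ i ∧ p ≠ q :=
    (by decide : ∀ i : Fin 3, ∃ p q : Fin 3, p ≠ i ∧ q ≠ i ∧ p ≠ q) i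
  refine ⟨p, q, Fintype.linearIndependent_iff.2 fun c hc ↦ ?_⟩
  set m : MvPolynomial (Fin 3) k := c 0 • X p + c 1 • X q with hm
  have coeff_m (j : Fin 3) : coeff (Finsupp.single j 1) m =
      (if p = j then c 0 else 0) + if q = j then c 1 else 0 := by
    simp [hm, coeff_X, Finsupp.single_left_inj]
  have isHomogeneous_m : m.IsHomogeneous 1 :=
    Submodule.add_mem (homogeneousSubmodule (Fin 3) k 1)
      (Submodule.smul_mem _ _ (isHomogeneous_X k p)) (Submodule.smul_mem _ _ (isHomogeneous_X k q))
  have mul_m_mem : l * m ∈ Ideal.span (Set.range F) := by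
    rw [← Ideal.Quotient.eq_zero_iff_mem, ← hc, Fin.sum_univ_two, mul_comm l]
    simp only [hm, add_mul, smul_mul_assoc, map_add, ← Ideal.Quotient.mkₐ_eq_mk k,
      map_smul, Function.comp_apply, Matrix.cons_val_zero, Matrix.cons_val_one]
  have m_eq_zero : m = 0 := by
    by_contra hm0
    exact hi m isHomogeneous_m mul_m_mem hm0 (by rw [coeff_m, if_neg hp, if_neg hq, add_zero])
  have hcp := coeff_m p
  have hcq := coeff_m q
  rw [m_eq_zero, coeff_zero, if_pos rfl, if_neg hpq.symm, add_zero] at hcp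
  rw [m_eq_zero, coeff_zero, if_pos rfl, if_neg hpq, zero_add] at hcq
  exact Fin.forall_fin_two.2 ⟨hcp.symm, hcq.symm⟩

theorem exists_eval_ne_zero (hF : InGeneralPosition F) {c : Fin 3 → k} (hc : c ≠ 0) :
    ∃ m, eval c (F m) ≠ 0 := by
  by_contra! h
  obtain ⟨j, hj⟩ := Function.ne_iff.1 hc
  obtain ⟨s, hs⟩ := hF.X_mem_radical j
  have le_ker : Ideal.span (Set.range F) ≤ RingHom.ker (eval c) :=
    Ideal.span_le.2 (Set.range_subset_iff.2 h)
  have := RingHom.mem_ker.1 (le_ker hs)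
  rw [map_pow, eval_X] at this
  exact hj (eq_zero_of_pow_eq_zero this)

end InGeneralPosition

end GeneralPosition

/-! ### Bases lifted from leading forms -/

section LeadingForm

open MvPolynomial

/-- The module of polynomials over `R` of total degree less than `t`; the strict inequality makes it
the zero module for `t = 0`. -/
noncomputable def totalDegreeLT (σ R : Type*) [CommRing R] (t : ℕ) :
    Submodule R (MvPolynomial σ R) :=
  restrictSupport R {m | m.degree < t}

variable {σ R : Type*} [CommRing R]

theorem mem_totalDegreeLT {t : ℕ} {p : MvPolynomial σ R} :
    p ∈ totalDegreeLT σ R t ↔ ∀ m ∈ p.support, m.degree < t := by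
  rw [totalDegreeLT, mem_restrictSupport_iff]
  rfl

theorem totalDegreeLT_mono : Monotone (totalDegreeLT σ R) := fun _ _ h ↦
  restrictSupport_mono _ fun _ hm ↦ hm.trans_le h

theorem mul_mem_totalDegreeLT {a b : ℕ} {p q : MvPolynomial σ R}
    (hp : p ∈ totalDegreeLT σ R (a + 1)) (hq : q ∈ totalDegreeLT σ R b) :
    p * q ∈ totalDegreeLT σ R (a + b) := by
  classical
  rw [mem_totalDegreeLT] at *
  intro m hm
  obtain ⟨x, hx, y, hy, rfl⟩ := Finset.mem_add.1 (support_mul p q hm)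
  rw [map_add]
  have hx' := hp x hx
  have hy' := hq y hy
  lia

theorem mem_totalDegreeLT_of_isHomogeneous {t : ℕ} {p : MvPolynomial σ R}
    (hp : p.IsHomogeneous t) : p ∈ totalDegreeLT σ R (t + 1) :=
  mem_totalDegreeLT.2 fun m hm ↦ Nat.lt_succ_of_le <| by
    rw [Finsupp.degree_eq_weight_one]
    exact (hp (mem_support_iff.1 hm)).le

theorem monomial_mem_totalDegreeLT {t : ℕ} {m : σ →₀ ℕ} (h : m.degree < t) (r : R) :
    monomial m r ∈ totalDegreeLT σ R t :=
  mem_totalDegreeLT.2 fun x hx ↦ by rwa [Finset.mem_singleton.1 (support_monomial_subset hx)]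

theorem exists_mem_totalDegreeLT (p : MvPolynomial σ R) : ∃ t, p ∈ totalDegreeLT σ R t :=
  ⟨p.support.sup Finsupp.degree + 1, mem_totalDegreeLT.2 fun _ hm ↦
    Nat.lt_succ_of_le (Finset.le_sup (f := Finsupp.degree) hm)⟩

theorem totalDegreeLT_le {t : ℕ} {W : Submodule R (MvPolynomial σ R)}
    (h : ∀ m : σ →₀ ℕ, m.degree < t → monomial m 1 ∈ W) : totalDegreeLT σ R t ≤ W := by
  rw [totalDegreeLT, restrictSupport_eq_span, Submodule.span_le]
  rintro _ ⟨m, hm, rfl⟩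
  exact h m hm

theorem map_mem_totalDegreeLT {K : Type*} [CommRing K] (φ : R →+* K) {t : ℕ}
    {p : MvPolynomial σ R} (h : p ∈ totalDegreeLT σ R t) :
    MvPolynomial.map φ p ∈ totalDegreeLT σ K t :=
  mem_totalDegreeLT.2 fun m hm ↦ mem_totalDegreeLT.1 h m (support_map_subset _ _ hm)

theorem prod_pow_mem_totalDegreeLT {f : σ → MvPolynomial σ R} {d : ℕ}
    (hf : ∀ i, f i ∈ totalDegreeLT σ R (d + 1)) (s : Finset σ) (a : σ → ℕ) :
    ∏ i ∈ s, f i ^ a i ∈ totalDegreeLT σ R (d * ∑ i ∈ s, a i + 1) := by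
  have pow_mem (i : σ) (n : ℕ) : f i ^ n ∈ totalDegreeLT σ R (d * n + 1) := by
    induction n with
    | zero => simpa using mem_totalDegreeLT_of_isHomogeneous (isHomogeneous_one σ R)
    | succ n ih =>
      rw [pow_succ', Nat.mul_succ, add_comm (d * n), add_assoc]
      exact mul_mem_totalDegreeLT (hf i) ih
  classical
  induction s using Finset.induction_on with
  | empty => simpa using mem_totalDegreeLT_of_isHomogeneous (isHomogeneous_one σ R)
  | insert i s hi ih =>
    rw [Finset.prod_insert hi, Finset.sum_insert hi, mul_add, add_assoc]
    exact mul_mem_totalDegreeLT (pow_mem i _) ih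

instance [Finite σ] (t : ℕ) : Module.Finite R (totalDegreeLT σ R t) := by
  cases nonempty_fintype σ
  have : Finite {m : σ →₀ ℕ | m.degree < t} := by
    classical
    refine (Set.Finite.biUnion (Finset.range t).finite_toSet fun i _ ↦
      ((Finset.univ : Finset σ).finsuppAntidiag i).finite_toSet).subset fun m hm ↦ ?_
    simpa [Finsupp.degree_eq_sum] using hm
  exact Module.Finite.of_basis (basisRestrictSupport R _)

variable {k : Type*} [Field k] [Algebra k R]

/-- `p` has degree at most `t` and its component of degree `t` is the form `φ`, whose coefficients
lie in the ground field `k` of the coefficient ring `R`. The form `φ` may be zero. -/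
structure HasLeadingForm (R : Type*) [CommRing R] [Algebra k R] (t : ℕ) (φ : MvPolynomial σ k)
    (p : MvPolynomial σ R) : Prop where
  isHomogeneous : φ.IsHomogeneous t
  sub_mem : p - map (algebraMap k R) φ ∈ totalDegreeLT σ R t

namespace HasLeadingForm

theorem mem {t : ℕ} {φ : MvPolynomial σ k} {p : MvPolynomial σ R} (h : HasLeadingForm R t φ p) :
    p ∈ totalDegreeLT σ R (t + 1) := by
  rw [← sub_add_cancel p (map (algebraMap k R) φ)]
  exact add_mem (totalDegreeLT_mono t.le_succ h.sub_mem)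
    (mem_totalDegreeLT_of_isHomogeneous (h.isHomogeneous.map _))

theorem mul {a b : ℕ} {φ ψ : MvPolynomial σ k} {p q : MvPolynomial σ R}
    (hp : HasLeadingForm R a φ p) (hq : HasLeadingForm R b ψ q) :
    HasLeadingForm R (a + b) (φ * ψ) (p * q) := by
  refine ⟨hp.isHomogeneous.mul hq.isHomogeneous, ?_⟩
  have split : p * q - map (algebraMap k R) (φ * ψ) = p * (q - map (algebraMap k R) ψ) +
      map (algebraMap k R) ψ * (p - map (algebraMap k R) φ) := by
    rw [map_mul]
    ring
  rw [split]
  refine add_mem (mul_mem_totalDegreeLT hp.mem hq.sub_mem) ?_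
  rw [add_comm a b]
  exact mul_mem_totalDegreeLT (mem_totalDegreeLT_of_isHomogeneous (hq.isHomogeneous.map _))
    hp.sub_mem

theorem map_algebraMap {t : ℕ} {φ : MvPolynomial σ k} (h : φ.IsHomogeneous t) :
    HasLeadingForm R t φ (map (algebraMap k R) φ) :=
  ⟨h, by simp⟩

theorem X (i : σ) : HasLeadingForm R 1 (X i : MvPolynomial σ k) (X i) :=
  ⟨isHomogeneous_X _ _, by simp⟩

theorem add {t : ℕ} {φ ψ : MvPolynomial σ k} {p q : MvPolynomial σ R}
    (hp : HasLeadingForm R t φ p) (hq : HasLeadingForm R t ψ q) :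
    HasLeadingForm R t (φ + ψ) (p + q) := by
  refine ⟨hp.isHomogeneous.add hq.isHomogeneous, ?_⟩
  rw [map_add, add_sub_add_comm]
  exact add_mem hp.sub_mem hq.sub_mem

theorem zero (t : ℕ) : HasLeadingForm R t (0 : MvPolynomial σ k) 0 :=
  ⟨isHomogeneous_zero _ _ _, by simp⟩

theorem smul {t : ℕ} {φ : MvPolynomial σ k} {p : MvPolynomial σ R} (a : k)
    (h : HasLeadingForm R t φ p) : HasLeadingForm R t (a • φ) (a • p) := by
  refine ⟨(homogeneousSubmodule σ k t).smul_mem a h.isHomogeneous, ?_⟩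
  have map_smul : map (algebraMap k R) (a • φ) = a • map (algebraMap k R) φ := by
    rw [smul_eq_C_mul, map_mul, map_C, ← smul_eq_C_mul, algebraMap_smul]
  rw [map_smul, ← smul_sub]
  exact Submodule.smul_of_tower_mem _ a h.sub_mem

theorem sum {ι : Type*} (s : Finset ι) {t : ℕ} {φ : ι → MvPolynomial σ k}
    {p : ι → MvPolynomial σ R} (h : ∀ i ∈ s, HasLeadingForm R t (φ i) (p i)) :
    HasLeadingForm R t (∑ i ∈ s, φ i) (∑ i ∈ s, p i) := by
  classical
  induction s using Finset.induction_on with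
  | empty => simpa using zero t
  | insert i s hi ih =>
    rw [Finset.sum_insert hi, Finset.sum_insert hi]
    exact (h i (Finset.mem_insert_self i s)).add
      (ih fun j hj ↦ h j (Finset.mem_insert_of_mem hj))

theorem sub_mem_of_eq {t : ℕ} {φ : MvPolynomial σ k} {p q : MvPolynomial σ R}
    (hp : HasLeadingForm R t φ p) (hq : HasLeadingForm R t φ q) :
    p - q ∈ totalDegreeLT σ R t := by
  rw [← sub_sub_sub_cancel_right p q (MvPolynomial.map (algebraMap k R) φ)]
  exact _root_.sub_mem hp.sub_mem hq.sub_mem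

end HasLeadingForm

end LeadingForm

section MixedMonomial

open MvPolynomial

theorem exists_eq_add_single_two {σ : Type*} {m : σ →₀ ℕ} {i : σ}
    (hi : 2 ≤ m i) :
    ∃ m', m = m' + Finsupp.single i 2 :=
  ⟨m - Finsupp.single i 2, (tsub_add_cancel_of_le (Finsupp.single_le_iff.2 hi)).symm⟩

variable {σ R : Type*} [Fintype σ] [CommRing R]

open scoped Classical in
/-- The set of variables that occur to an odd power in the monomial with exponent `m`. -/
noncomputable def oddSupport (m : σ →₀ ℕ) : Finset σ := {i | Odd (m i)}

open scoped Classical in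
/-- The exponent of the squarefree monomial `∏ i ∈ s, X i`. -/
noncomputable def squarefreeExponent (s : Finset σ) : σ →₀ ℕ :=
  Finsupp.equivFunOnFinite.symm fun i ↦ if i ∈ s then 1 else 0

/-- The product obtained from the monomial with exponent `m` by replacing each factor `X i ^ 2` by
`f i` and the remaining squarefree monomial, with set of variables `s`, by `E s`. -/
noncomputable def mixedMonomial (f : σ → MvPolynomial σ R) (E : Finset σ → MvPolynomial σ R)
    (m : σ →₀ ℕ) : MvPolynomial σ R :=
  (∏ i, f i ^ (m i / 2)) * E (oddSupport m)

/-- The `R`-linear endomorphism of the polynomial ring that sends each monomial to the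
corresponding mixed monomial. -/
noncomputable def mixedMonomialMap (f : σ → MvPolynomial σ R) (E : Finset σ → MvPolynomial σ R) :
    MvPolynomial σ R →ₗ[R] MvPolynomial σ R :=
  (basisMonomials σ R).constr R (mixedMonomial f E)

theorem mem_oddSupport {m : σ →₀ ℕ} {i : σ} : i ∈ oddSupport m ↔ Odd (m i) := by
  simp [oddSupport]

theorem squarefreeExponent_le_one (s : Finset σ) (i : σ) : squarefreeExponent s i ≤ 1 := by
  classical
  simp only [squarefreeExponent, Finsupp.equivFunOnFinite_symm_apply_apply]
  split_ifs <;> simp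

theorem oddSupport_squarefreeExponent (s : Finset σ) : oddSupport (squarefreeExponent s) = s := by
  classical
  ext i
  simp only [mem_oddSupport, squarefreeExponent, Finsupp.equivFunOnFinite_symm_apply_apply]
  split_ifs with hi <;> simp [hi]

theorem squarefreeExponent_injective :
    Function.Injective (squarefreeExponent : Finset σ → σ →₀ ℕ) :=
  Function.LeftInverse.injective oddSupport_squarefreeExponent

theorem squarefreeExponent_oddSupport {m : σ →₀ ℕ} (hm : ∀ i, m i ≤ 1) :
    squarefreeExponent (oddSupport m) = m := by
  classical
  ext i
  simp only [squarefreeExponent, Finsupp.equivFunOnFinite_symm_apply_apply, mem_oddSupport]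
  have hi := hm i
  interval_cases m i <;> simp

theorem degree_squarefreeExponent (s : Finset σ) : (squarefreeExponent s).degree = s.card := by
  classical
  simp [Finsupp.degree_eq_sum, squarefreeExponent]

theorem two_mul_sum_div_add_card_oddSupport (m : σ →₀ ℕ) :
    2 * ∑ i, m i / 2 + (oddSupport m).card = m.degree := by
  classical
  rw [oddSupport, Finset.card_filter, Finset.mul_sum, ← Finset.sum_add_distrib,
    Finsupp.degree_eq_sum]
  refine Finset.sum_congr rfl fun i _ ↦ ?_
  split_ifs with hi
  · rw [← Nat.odd_iff.1 hi, Nat.div_add_mod]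
  · rw [add_zero, Nat.two_mul_div_two_of_even (Nat.not_odd_iff_even.1 hi)]

variable (f : σ → MvPolynomial σ R) (E : Finset σ → MvPolynomial σ R)

theorem mixedMonomialMap_monomial (m : σ →₀ ℕ) :
    mixedMonomialMap f E (monomial m 1) = mixedMonomial f E m := by
  simpa [mixedMonomialMap] using (basisMonomials σ R).constr_basis R (mixedMonomial f E) m

theorem mixedMonomial_squarefreeExponent (s : Finset σ) :
    mixedMonomial f E (squarefreeExponent s) = E s := by
  rw [mixedMonomial, oddSupport_squarefreeExponent, Finset.prod_eq_one, one_mul]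
  intro i _
  rw [Nat.div_eq_of_lt (Nat.lt_succ_of_le (squarefreeExponent_le_one s i)), pow_zero]

theorem mixedMonomial_add_single_two (m : σ →₀ ℕ) (i : σ) :
    mixedMonomial f E (m + Finsupp.single i 2) = f i * mixedMonomial f E m := by
  classical
  have oddSupport_eq : oddSupport (m + Finsupp.single i 2) = oddSupport m := by
    ext j
    rw [mem_oddSupport, mem_oddSupport, Finsupp.add_apply, Nat.odd_add]
    refine iff_true_right ?_
    rw [Finsupp.single_apply]
    split_ifs <;> decide
  rw [mixedMonomial, mixedMonomial, oddSupport_eq, ← mul_assoc,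
    ← Finset.mul_prod_erase _ _ (Finset.mem_univ i),
    ← Finset.mul_prod_erase _ _ (Finset.mem_univ i), ← mul_assoc]
  congr 2
  · simp [pow_succ']
  · refine Finset.prod_congr rfl fun j hj ↦ ?_
    rw [Finsupp.add_apply, Finsupp.single_eq_of_ne (Finset.ne_of_mem_erase hj), add_zero]

theorem mixedMonomialMap_X_sq_mul (i : σ) (g : MvPolynomial σ R) :
    mixedMonomialMap f E (X i ^ 2 * g) = f i * mixedMonomialMap f E g := by
  have comp_eq : mixedMonomialMap f E ∘ₗ LinearMap.mulLeft R (X i ^ 2) =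
      LinearMap.mulLeft R (f i) ∘ₗ mixedMonomialMap f E := by
    refine (basisMonomials σ R).ext fun m ↦ ?_
    simp only [coe_basisMonomials, LinearMap.comp_apply, LinearMap.mulLeft_apply]
    rw [X_pow_eq_monomial, monomial_mul, one_mul, add_comm, mixedMonomialMap_monomial,
      mixedMonomialMap_monomial, mixedMonomial_add_single_two]
  exact LinearMap.congr_fun comp_eq g

theorem mk_mixedMonomialMap (g : MvPolynomial σ R) :
    Ideal.Quotient.mk (Ideal.span (Set.range f)) (mixedMonomialMap f E g) =
      ∑ s, coeff (squarefreeExponent s) g • Ideal.Quotient.mk (Ideal.span (Set.range f)) (E s) := by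
  classical
  let expansion : MvPolynomial σ R →ₗ[R] MvPolynomial σ R ⧸ Ideal.span (Set.range f) :=
    ∑ s, (lcoeff R (squarefreeExponent s)).smulRight (Ideal.Quotient.mk _ (E s))
  have expansion_apply (g : MvPolynomial σ R) : expansion g =
      ∑ s, coeff (squarefreeExponent s) g • Ideal.Quotient.mk _ (E s) := by
    simp [expansion, LinearMap.sum_apply]
  rw [← expansion_apply]
  refine LinearMap.congr_fun (f := (Ideal.Quotient.mkₐ R _).toLinearMap ∘ₗ mixedMonomialMap f E)
    ((basisMonomials σ R).ext fun m ↦ ?_) g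
  simp only [coe_basisMonomials, LinearMap.comp_apply, mixedMonomialMap_monomial, expansion_apply,
    coeff_monomial, ite_smul, one_smul, zero_smul]
  by_cases hm : ∀ i, m i ≤ 1
  · rw [← squarefreeExponent_oddSupport hm, mixedMonomial_squarefreeExponent]
    simp [squarefreeExponent_injective.eq_iff]
  · push Not at hm
    obtain ⟨i, hi⟩ := hm
    obtain ⟨m', rfl⟩ := exists_eq_add_single_two hi
    rw [mixedMonomial_add_single_two, Finset.sum_eq_zero]
    · exact Ideal.Quotient.eq_zero_iff_mem.2
        (Ideal.mul_mem_right _ _ (Ideal.subset_span ⟨i, rfl⟩))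
    · intro s _
      refine if_neg fun h ↦ ?_
      have le_one := squarefreeExponent_le_one s i
      lia

theorem coeff_squarefreeExponent_X_sq_mul (s : Finset σ) (i : σ) (g : MvPolynomial σ R) :
    coeff (squarefreeExponent s) (X i ^ 2 * g) = 0 := by
  rw [X_pow_eq_monomial, coeff_monomial_mul', if_neg]
  rw [Finsupp.single_le_iff]
  have le_one := squarefreeExponent_le_one s i
  lia

end MixedMonomial

section LiftedBasis

open MvPolynomial

variable {σ k R : Type*} [Fintype σ] [Field k] [CommRing R] [Algebra k R]
  {F : σ → MvPolynomial σ k} {φ : Finset σ → MvPolynomial σ k}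
  {f : σ → MvPolynomial σ R} {E : Finset σ → MvPolynomial σ R}

/-- Forms `φ s` of degree `s.card` that span the quotient of the polynomial ring by the ideal of
the forms `F i`, degree by degree. -/
structure SpansModulo (F : σ → MvPolynomial σ k) (φ : Finset σ → MvPolynomial σ k) : Prop where
  isHomogeneous : ∀ s, (φ s).IsHomogeneous s.card
  exists_sub_sum_mem : ∀ {t : ℕ} {ψ : MvPolynomial σ k}, ψ.IsHomogeneous t →
    ∃ α : Finset σ → k, (∀ s, s.card ≠ t → α s = 0) ∧
      ψ - ∑ s, α s • φ s ∈ Ideal.span (Set.range F)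

theorem mixedMonomialMap_mem_totalDegreeLT (hf : ∀ i, HasLeadingForm R 2 (F i) (f i))
    (hE : ∀ s, HasLeadingForm R s.card (φ s) (E s)) {t : ℕ} {p : MvPolynomial σ R}
    (hp : p ∈ totalDegreeLT σ R t) : mixedMonomialMap f E p ∈ totalDegreeLT σ R t := by
  suffices h : totalDegreeLT σ R t ≤ (totalDegreeLT σ R t).comap (mixedMonomialMap f E) from h hp
  refine totalDegreeLT_le fun m hm ↦ ?_
  rw [Submodule.mem_comap, mixedMonomialMap_monomial, mixedMonomial]
  have mem := mul_mem_totalDegreeLT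
    (prod_pow_mem_totalDegreeLT (fun i ↦ (hf i).mem) Finset.univ (fun i ↦ m i / 2))
    (hE (oddSupport m)).mem
  rw [← add_assoc, two_mul_sum_div_add_card_oddSupport] at mem
  exact totalDegreeLT_mono hm mem

theorem exists_hasLeadingForm_mem_map {t d : ℕ} (hf : ∀ i, HasLeadingForm R 2 (F i) (f i))
    (hE : ∀ s, HasLeadingForm R s.card (φ s) (E s)) (hφ : SpansModulo F φ) (hd : d < t)
    (ih : ∀ d < t, totalDegreeLT σ R d ≤ (totalDegreeLT σ R d).map (mixedMonomialMap f E))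
    {ψ : MvPolynomial σ k} (hψ : ψ.IsHomogeneous d) :
    ∃ p ∈ (totalDegreeLT σ R t).map (mixedMonomialMap f E), HasLeadingForm R d ψ p := by
  obtain ⟨α, hα, sub_mem⟩ := hφ.exists_sub_sum_mem hψ
  set combination := ∑ s, α s • E s
  have combination_mem :
      combination ∈ (totalDegreeLT σ R t).map (mixedMonomialMap f E) := by
    refine Submodule.sum_mem _ fun s _ ↦ ?_
    by_cases hs : s.card = d
    · refine Submodule.smul_of_tower_mem _ _ ⟨monomial (squarefreeExponent s) 1,
        monomial_mem_totalDegreeLT (by rwa [degree_squarefreeExponent, hs]) _, ?_⟩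
      rw [mixedMonomialMap_monomial, mixedMonomial_squarefreeExponent]
    · rw [hα s hs, zero_smul]
      exact zero_mem _
  have combination_leadingForm : HasLeadingForm R d (∑ s, α s • φ s) combination := by
    refine HasLeadingForm.sum _ fun s _ ↦ ?_
    by_cases hs : s.card = d
    · exact hs ▸ (hE s).smul (α s)
    · rw [hα s hs, zero_smul, zero_smul]
      exact HasLeadingForm.zero d
  have sub_isHomogeneous := hψ.sub combination_leadingForm.isHomogeneous
  suffices ∃ q ∈ (totalDegreeLT σ R t).map (mixedMonomialMap f E),
      HasLeadingForm R d (ψ - ∑ s, α s • φ s) q by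
    obtain ⟨q, q_mem, hq⟩ := this
    exact ⟨q + combination, add_mem q_mem combination_mem,
      by simpa using hq.add combination_leadingForm⟩
  have F_isHomogeneous (i : σ) := (hf i).isHomogeneous
  obtain hd2 | ⟨e, rfl⟩ : d < 2 ∨ ∃ e, d = e + 2 :=
    (lt_or_ge d 2).imp_right fun h ↦ ⟨d - 2, (Nat.sub_add_cancel h).symm⟩
  · rw [eq_zero_of_mem_span_of_isHomogeneous_lt F_isHomogeneous hd2 sub_isHomogeneous sub_mem]
    exact ⟨0, zero_mem _, HasLeadingForm.zero d⟩
  · obtain ⟨c, hc, eq_sum⟩ :=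
      exists_isHomogeneous_coeffs_of_mem_span F_isHomogeneous sub_isHomogeneous sub_mem
    rw [eq_sum]
    refine ⟨∑ i, map (algebraMap k R) (c i) * f i, Submodule.sum_mem _ fun i _ ↦ ?_,
      HasLeadingForm.sum _ fun i _ ↦ (HasLeadingForm.map_algebraMap (hc i)).mul (hf i)⟩
    obtain ⟨g, hg, hg'⟩ := ih (e + 1) (by lia)
      (mem_totalDegreeLT_of_isHomogeneous ((hc i).map (algebraMap k R)))
    refine ⟨X i ^ 2 * g, totalDegreeLT_mono (show 2 + (e + 1) ≤ t by lia)
      (mul_mem_totalDegreeLT ?_ hg), ?_⟩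
    · simpa using mem_totalDegreeLT_of_isHomogeneous ((isHomogeneous_X R i).pow 2)
    · rw [mixedMonomialMap_X_sq_mul, hg', mul_comm]

theorem totalDegreeLT_le_map_mixedMonomialMap (hf : ∀ i, HasLeadingForm R 2 (F i) (f i))
    (hE : ∀ s, HasLeadingForm R s.card (φ s) (E s)) (hφ : SpansModulo F φ) (t : ℕ) :
    totalDegreeLT σ R t ≤ (totalDegreeLT σ R t).map (mixedMonomialMap f E) := by
  induction t using Nat.strong_induction_on with
  | _ t ih =>
  refine totalDegreeLT_le fun m hm ↦ ?_
  have isHomogeneous : (monomial m 1 : MvPolynomial σ k).IsHomogeneous m.degree :=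
    isHomogeneous_monomial _ rfl
  obtain ⟨p, p_mem, hp⟩ := exists_hasLeadingForm_mem_map hf hE hφ hm ih isHomogeneous
  have monomial_leadingForm := HasLeadingForm.map_algebraMap (R := R) isHomogeneous
  rw [map_monomial, RingHom.map_one] at monomial_leadingForm
  have diff_mem := Submodule.map_mono (totalDegreeLT_mono hm.le)
    (ih m.degree hm (monomial_leadingForm.sub_mem_of_eq hp))
  simpa using add_mem diff_mem p_mem

theorem mixedMonomialMap_bijective (hf : ∀ i, HasLeadingForm R 2 (F i) (f i))
    (hE : ∀ s, HasLeadingForm R s.card (φ s) (E s)) (hφ : SpansModulo F φ) :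
    Function.Bijective (mixedMonomialMap f E) := by
  refine ⟨?_, fun p ↦ ?_⟩
  · rw [← LinearMap.ker_eq_bot, LinearMap.ker_eq_bot']
    intro p hp
    obtain ⟨t, ht⟩ := exists_mem_totalDegreeLT p
    let restricted : totalDegreeLT σ R t →ₗ[R] totalDegreeLT σ R t :=
      (mixedMonomialMap f E).restrict fun x ↦ mixedMonomialMap_mem_totalDegreeLT hf hE
    have surjective : Function.Surjective restricted := by
      rintro ⟨y, hy⟩
      obtain ⟨x, hx, rfl⟩ := totalDegreeLT_le_map_mixedMonomialMap hf hE hφ t hy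
      exact ⟨⟨x, hx⟩, rfl⟩
    have injective := OrzechProperty.injective_of_surjective_endomorphism restricted surjective
    exact congrArg Subtype.val (injective (a₁ := ⟨p, ht⟩) (a₂ := 0) (Subtype.ext hp))
  · obtain ⟨t, ht⟩ := exists_mem_totalDegreeLT p
    obtain ⟨q, -, hq⟩ := totalDegreeLT_le_map_mixedMonomialMap hf hE hφ t ht
    exact ⟨q, hq⟩

theorem linearIndependent_mk_of_hasLeadingForm (hf : ∀ i, HasLeadingForm R 2 (F i) (f i))
    (hE : ∀ s, HasLeadingForm R s.card (φ s) (E s)) (hφ : SpansModulo F φ) :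
    LinearIndependent R fun s ↦ Ideal.Quotient.mk (Ideal.span (Set.range f)) (E s) := by
  classical
  obtain ⟨injective, surjective⟩ := mixedMonomialMap_bijective hf hE hφ
  refine Fintype.linearIndependent_iff.2 fun r hr s ↦ ?_
  have mem_span : ∑ s, r s • E s ∈ Ideal.span (Set.range f) := by
    rw [← Ideal.Quotient.eq_zero_iff_mem, ← hr, ← Ideal.Quotient.mkₐ_eq_mk R, map_sum]
    simp only [map_smul]
  obtain ⟨c, hc⟩ := Ideal.mem_span_range_iff_exists_fun.1 mem_span
  choose g hg using fun i ↦ surjective (c i)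
  have eq : ∑ s, monomial (squarefreeExponent s) (r s) = ∑ i, X i ^ 2 * g i := by
    refine injective ?_
    rw [map_sum, map_sum]
    simp only [mixedMonomialMap_X_sq_mul, hg, mul_comm (f _), hc]
    refine Finset.sum_congr rfl fun s _ ↦ ?_
    rw [← mul_one (r s), ← smul_eq_mul, ← smul_monomial, map_smul, mixedMonomialMap_monomial,
      mixedMonomial_squarefreeExponent, smul_eq_mul, mul_one]
  replace eq := congrArg (coeff (squarefreeExponent s)) eq
  simpa [coeff_sum, coeff_monomial, squarefreeExponent_injective.eq_iff,
    coeff_squarefreeExponent_X_sq_mul] using eq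

theorem exists_basis_of_hasLeadingForm (hf : ∀ i, HasLeadingForm R 2 (F i) (f i))
    (hE : ∀ s, HasLeadingForm R s.card (φ s) (E s)) (hφ : SpansModulo F φ) :
    ∃ b : Module.Basis (Finset σ) R (MvPolynomial σ R ⧸ Ideal.span (Set.range f)),
      (∀ s, b s = Ideal.Quotient.mk (Ideal.span (Set.range f)) (E s)) ∧
      ∀ {t : ℕ} {g : MvPolynomial σ R}, g ∈ totalDegreeLT σ R t → ∀ s : Finset σ, t ≤ s.card →
        b.repr (Ideal.Quotient.mk _ g) s = 0 := by
  let b := Module.Basis.mk (linearIndependent_mk_of_hasLeadingForm hf hE hφ) fun y _ ↦ by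
    obtain ⟨g, rfl⟩ := Ideal.Quotient.mk_surjective y
    obtain ⟨h, rfl⟩ := (mixedMonomialMap_bijective hf hE hφ).2 g
    rw [mk_mixedMonomialMap]
    exact Submodule.sum_mem _ fun s _ ↦
      Submodule.smul_mem _ _ (Submodule.subset_span ⟨s, rfl⟩)
  have b_apply (s : Finset σ) : b s = Ideal.Quotient.mk (Ideal.span (Set.range f)) (E s) := by
    simp [b]
  refine ⟨b, b_apply, fun {t g} hg s hs ↦ ?_⟩
  obtain ⟨h, hh, rfl⟩ := totalDegreeLT_le_map_mixedMonomialMap hf hE hφ t hg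
  simp only [mk_mixedMonomialMap, ← b_apply]
  rw [b.repr_sum_self]
  by_contra coeff_ne
  have degree_lt := mem_totalDegreeLT.1 hh _ (mem_support_iff.2 coeff_ne)
  rw [degree_squarefreeExponent] at degree_lt
  lia

end LiftedBasis

section ExtendToBasis

open MvPolynomial

theorem exists_basis_extending_linearIndependent {k V κ ι : Type*} [Field k] [AddCommGroup V]
    [Module k V] [FiniteDimensional k V] [Fintype ι] {v : κ → V} (hv : LinearIndependent k v)
    (hι : Fintype.card ι = Module.finrank k V) :
    ∃ (j : κ ↪ ι) (b : Module.Basis ι k V), ∀ i, b (j i) = v i := by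
  let extended := Module.Basis.extend hv.linearIndepOn_id
  have : Fintype (hv.linearIndepOn_id.extend (Set.subset_univ (Set.range v))) :=
    @Fintype.ofFinite _ (Module.Finite.finite_basis extended)
  let e : hv.linearIndepOn_id.extend (Set.subset_univ (Set.range v)) ≃ ι :=
    Fintype.equivOfCardEq ((Module.finrank_eq_card_basis extended).symm.trans hι.symm)
  let inclusion (i : κ) : hv.linearIndepOn_id.extend (Set.subset_univ (Set.range v)) :=
    ⟨v i, hv.linearIndepOn_id.subset_extend _ ⟨i, rfl⟩⟩
  have inclusion_injective : Function.Injective inclusion := fun _ _ h ↦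
    hv.injective (congrArg Subtype.val h)
  exact ⟨⟨e ∘ inclusion, e.injective.comp inclusion_injective⟩, extended.reindex e, fun i ↦ by
    simp [extended, inclusion]⟩

variable {k : Type u} [Field k] {n : ℕ}

theorem exists_spanning_forms_extending {J : Ideal (MvPolynomial (Fin n) k)} {t : ℕ}
    {κ ι : Type*} [Fintype ι] (hι : Fintype.card ι = hilbertFunction k J t)
    {φ : κ → MvPolynomial (Fin n) k} (hφ : ∀ i, (φ i).IsHomogeneous t)
    (indep : LinearIndependent k fun i ↦ Ideal.Quotient.mk J (φ i)) :
    ∃ (j : κ ↪ ι) (ψ : ι → MvPolynomial (Fin n) k), (∀ s, (ψ s).IsHomogeneous t) ∧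
      (∀ i, ψ (j i) = φ i) ∧
      ∀ χ : MvPolynomial (Fin n) k, χ.IsHomogeneous t → ∃ α : ι → k, χ - ∑ s, α s • ψ s ∈ J := by
  let piece : Submodule k (MvPolynomial (Fin n) k ⧸ J) :=
    Submodule.map (Ideal.Quotient.mkₐ k J).toLinearMap (homogeneousSubmodule (Fin n) k t)
  have mk_mem {χ : MvPolynomial (Fin n) k} (h : χ.IsHomogeneous t) :
      Ideal.Quotient.mk J χ ∈ piece := ⟨χ, h, rfl⟩
  obtain ⟨j, b, hb⟩ := exists_basis_extending_linearIndependent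
    (v := fun i ↦ (⟨Ideal.Quotient.mk J (φ i), mk_mem (hφ i)⟩ : piece))
    (LinearIndependent.of_comp piece.subtype indep) hι
  have exists_lift (s : ι) : ∃ ψ : MvPolynomial (Fin n) k,
      ψ.IsHomogeneous t ∧ Ideal.Quotient.mk J ψ = b s := (b s).2
  choose lift lift_isHomogeneous mk_lift using exists_lift
  let ψ : ι → MvPolynomial (Fin n) k := Function.extend j φ lift
  have ψ_apply (i : κ) : ψ (j i) = φ i := j.injective.extend_apply φ lift i
  have ψ_spec (s : ι) : (ψ s).IsHomogeneous t ∧ Ideal.Quotient.mk J (ψ s) = b s := by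
    by_cases hs : ∃ i, j i = s
    · obtain ⟨i, rfl⟩ := hs
      rw [ψ_apply, hb]
      exact ⟨hφ i, rfl⟩
    · rw [show ψ s = lift s from Function.extend_apply' φ lift s hs]
      exact ⟨lift_isHomogeneous s, mk_lift s⟩
  refine ⟨j, ψ, fun s ↦ (ψ_spec s).1, ψ_apply, fun χ hχ ↦ ?_⟩
  refine ⟨b.repr ⟨Ideal.Quotient.mk J χ, mk_mem hχ⟩, Ideal.Quotient.eq.1 ?_⟩
  have mk_sum (α : ι → k) :
      Ideal.Quotient.mk J (∑ s, α s • ψ s) = ∑ s, α s • (b s : MvPolynomial (Fin n) k ⧸ J) := by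
    rw [← Ideal.Quotient.mkₐ_eq_mk k, map_sum]
    simp only [map_smul, Ideal.Quotient.mkₐ_eq_mk, (ψ_spec _).2]
  rw [mk_sum]
  have expansion := congrArg piece.subtype (b.sum_repr ⟨Ideal.Quotient.mk J χ, mk_mem hχ⟩)
  rw [map_sum] at expansion
  exact expansion.symm

variable {F : Fin n → MvPolynomial (Fin n) k} {κ : Type*} {d : κ → ℕ}
  {φ : κ → MvPolynomial (Fin n) k}

theorem exists_spansModulo_extending
    (hF : ∀ t, hilbertFunction k (Ideal.span (Set.range F)) t = n.choose t)
    (hφ : ∀ i, (φ i).IsHomogeneous (d i))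
    (indep : ∀ t, LinearIndepOn k (fun i ↦ Ideal.Quotient.mk (Ideal.span (Set.range F)) (φ i))
      {i | d i = t}) :
    ∃ (s : κ ↪ Finset (Fin n)) (φ' : Finset (Fin n) → MvPolynomial (Fin n) k),
      SpansModulo F φ' ∧ ∀ i, (s i).card = d i ∧ φ' (s i) = φ i := by
  have isHomogeneous {t : ℕ} {i : κ} (h : d i = t) : (φ i).IsHomogeneous t := h ▸ hφ i
  choose j ψ hψ ψ_apply ψ_span using fun t ↦ exists_spanning_forms_extending
    (ι := {s : Finset (Fin n) // s.card = t})
    (by rw [Fintype.card_finset_len, Fintype.card_fin, hF t]) (fun i ↦ isHomogeneous i.2) (indep t)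
  let position (i : κ) : Finset (Fin n) := j (d i) ⟨i, rfl⟩
  have position_eq {t : ℕ} (i : κ) (h : d i = t) : position i = j t ⟨i, h⟩ := by
    subst h
    rfl
  let form (s : Finset (Fin n)) : MvPolynomial (Fin n) k := ψ s.card ⟨s, rfl⟩
  have form_eq {t : ℕ} (s : {s : Finset (Fin n) // s.card = t}) : form s = ψ t s := by
    obtain ⟨s, rfl⟩ := s
    rfl
  have card_position (i : κ) : (position i).card = d i := (j (d i) ⟨i, rfl⟩).2
  have position_injective : Function.Injective position := fun i i' h ↦ by
    have hd : d i = d i' := by rw [← card_position, h, card_position]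
    rw [position_eq i hd] at h
    exact congrArg Subtype.val ((j (d i')).injective (Subtype.ext h))
  refine ⟨⟨position, position_injective⟩, form, ⟨fun s ↦ hψ s.card ⟨s, rfl⟩, fun {t χ} hχ ↦ ?_⟩,
    fun i ↦ ⟨card_position i, (form_eq (j (d i) ⟨i, rfl⟩)).trans (ψ_apply (d i) ⟨i, rfl⟩)⟩⟩
  obtain ⟨α, hα⟩ := ψ_span t χ hχ
  refine ⟨fun s ↦ if h : s.card = t then α ⟨s, h⟩ else 0, fun s hs ↦ dif_neg hs, ?_⟩
  convert hα using 2
  refine (Fintype.sum_of_injective Subtype.val Subtype.val_injective _ _ (fun s hs ↦ ?_)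
    fun s ↦ ?_).symm
  · simp only [dif_neg (show ¬ s.card = t by simpa using hs), zero_smul]
  · simp only [dif_pos s.2, form_eq s]

variable {R : Type*} [CommRing R] [Algebra k R] {f : Fin n → MvPolynomial (Fin n) R}
  {E : κ → MvPolynomial (Fin n) R}

theorem exists_basis_extending_of_hasLeadingForm
    (hF : ∀ t, hilbertFunction k (Ideal.span (Set.range F)) t = n.choose t)
    (hf : ∀ i, HasLeadingForm R 2 (F i) (f i)) (hE : ∀ i, HasLeadingForm R (d i) (φ i) (E i))
    (indep : ∀ t, LinearIndepOn k (fun i ↦ Ideal.Quotient.mk (Ideal.span (Set.range F)) (φ i))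
      {i | d i = t}) :
    ∃ (s : κ ↪ Finset (Fin n))
      (b : Module.Basis (Finset (Fin n)) R (MvPolynomial (Fin n) R ⧸ Ideal.span (Set.range f))),
      (∀ i, (s i).card = d i ∧ b (s i) = Ideal.Quotient.mk (Ideal.span (Set.range f)) (E i)) ∧
      ∀ {t : ℕ} {g : MvPolynomial (Fin n) R}, g ∈ totalDegreeLT (Fin n) R t →
        ∀ j : Finset (Fin n), t ≤ j.card → b.repr (Ideal.Quotient.mk _ g) j = 0 := by
  obtain ⟨s, φ', hφ', s_spec⟩ :=
    exists_spansModulo_extending hF (fun i ↦ (hE i).isHomogeneous) indep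
  let E' : Finset (Fin n) → MvPolynomial (Fin n) R :=
    Function.extend s E fun j ↦ map (algebraMap k R) (φ' j)
  have E'_apply (i : κ) : E' (s i) = E i := s.injective.extend_apply E _ i
  have hE' (j : Finset (Fin n)) : HasLeadingForm R j.card (φ' j) (E' j) := by
    by_cases hj : ∃ i, s i = j
    · obtain ⟨i, rfl⟩ := hj
      rw [E'_apply, (s_spec i).1, (s_spec i).2]
      exact hE i
    · rw [show E' j = _ from Function.extend_apply' E _ j hj]
      exact HasLeadingForm.map_algebraMap (hφ'.isHomogeneous j)
  obtain ⟨b, b_apply, repr_eq_zero⟩ := exists_basis_of_hasLeadingForm hf hE' hφ'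
  exact ⟨s, b, fun i ↦ ⟨(s_spec i).1, by rw [b_apply, E'_apply]⟩, repr_eq_zero⟩

end ExtendToBasis

/-! ### Submodules of free modules over a domain -/

section FreeModule

variable {R : Type*} [CommRing R] [UniqueFactorizationMonoid R]

theorem exists_smul_isRelPrime_coords {M κ : Type*} [AddCommGroup M]
    [Module R M] [Finite κ] (b : Module.Basis κ R M) {x : M} (hx : x ≠ 0) :
    ∃ (g : R) (v : M), g ≠ 0 ∧ x = g • v ∧ ∀ c d, (∀ i, c ∣ d * b.repr v i) → c ∣ d := by
  cases nonempty_fintype κ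
  let := UniqueFactorizationMonoid.strongNormalizationMonoid (α := R)
  let := UniqueFactorizationMonoid.toNormalizedGCDMonoid R
  have nonempty : (Finset.univ : Finset κ).Nonempty := by
    rw [Finset.univ_nonempty_iff, ← not_isEmpty_iff]
    exact fun _ ↦ hx (b.ext_elem fun i ↦ isEmptyElim i)
  obtain ⟨y, hy, gcd_eq_one⟩ := Finset.extract_gcd (b.repr x) nonempty
  have hv : x = Finset.univ.gcd (b.repr x) • ∑ i, y i • b i := b.ext_elem fun i ↦ by
    rw [map_smul, Finsupp.smul_apply, smul_eq_mul, b.repr_sum_self, hy i (Finset.mem_univ i)]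
  refine ⟨_, ∑ i, y i • b i, fun h ↦ hx (by rw [hv, h, zero_smul]), hv, fun c d h ↦ ?_⟩
  have dvd_gcd : c ∣ Finset.univ.gcd fun i ↦ d * y i :=
    Finset.dvd_gcd fun i _ ↦ by simpa only [b.repr_sum_self] using h i
  have gcd_dvd := Finset.gcd_mul_left' (s := Finset.univ) (f := y) d
  rw [gcd_eq_one, mul_one] at gcd_dvd
  exact dvd_gcd.trans gcd_dvd.dvd

theorem exists_le_span_singleton_of_finrank_le_one [IsNoetherianRing R] [IsDomain R]
    {M κ : Type*} [AddCommGroup M] [Module R M] [Finite κ]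
    (b : Module.Basis κ R M) {P : Submodule R M}
    (hP : ∀ {c : R} {x : M}, c ≠ 0 → c • x ∈ P → x ∈ P) (rank_le : Module.finrank R P ≤ 1) :
    ∃ v ∈ P, P ≤ Submodule.span R {v} := by
  have := Module.Finite.of_basis b
  by_cases hbot : P = ⊥
  · exact ⟨0, P.zero_mem, by simp [hbot]⟩
  obtain ⟨x, hxP, hx⟩ := P.ne_bot_iff.1 hbot
  obtain ⟨g, v, hg, rfl, hv⟩ := exists_smul_isRelPrime_coords b hx
  refine ⟨v, hP hg hxP, fun y hy ↦ ?_⟩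
  obtain ⟨a, c, hac, h⟩ : ∃ a c : R, a • g • v + c • y = 0 ∧ ¬(a = 0 ∧ c = 0) := by
    by_contra! hcon
    have indep : LinearIndependent R ![(⟨g • v, hxP⟩ : P), ⟨y, hy⟩] :=
      LinearIndependent.pair_iff.2 fun a c h ↦ hcon a c (congrArg Subtype.val h)
    have := indep.fintype_card_le_finrank
    simp only [Fintype.card_fin] at this
    lia
  have coords_eq (i : κ) : c * b.repr y i = -(a * g) * b.repr v i := by
    have := DFunLike.congr_fun (congrArg b.repr hac) i
    simp only [map_add, map_smul, Finsupp.add_apply, Finsupp.smul_apply, smul_eq_mul, map_zero,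
      Finsupp.zero_apply] at this
    linear_combination this
  have : Module.IsTorsionFree R M := (Module.Free.of_basis b).instIsTorsionFree
  have hc : c ≠ 0 := by
    rintro rfl
    rw [zero_smul, add_zero] at hac
    exact h ⟨(smul_eq_zero.1 hac).resolve_right hx, rfl⟩
  obtain ⟨d, hd⟩ := hv c (-(a * g)) fun i ↦ coords_eq i ▸ dvd_mul_right _ _
  refine Submodule.mem_span_singleton.2 ⟨d, b.ext_elem fun i ↦ mul_left_cancel₀ hc ?_⟩
  rw [coords_eq, hd, map_smul, Finsupp.smul_apply, smul_eq_mul, mul_assoc]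

theorem exists_syzygy_generator [IsDomain R] (p q : R) (h : p ≠ 0 ∨ q ≠ 0) :
    ∃ p' q' : R, (p' ≠ 0 ∨ q' ≠ 0) ∧
      ∀ c d, c * p + d * q = 0 ↔ ∃ t, c = t * q' ∧ d = -(t * p') := by
  obtain ⟨g, p', q', hg, rfl, rfl, hrel⟩ :
      ∃ g p' q' : R, g ≠ 0 ∧ p = g * p' ∧ q = g * q' ∧ IsRelPrime p' q' := by
    rcases h with h | h
    · obtain ⟨p', q', g, hrel, rfl, rfl⟩ :=
        UniqueFactorizationMonoid.exists_reduced_factors p h q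
      exact ⟨g, p', q', left_ne_zero_of_mul h, rfl, rfl, hrel⟩
    · obtain ⟨p', q', g, hrel, rfl, rfl⟩ :=
        UniqueFactorizationMonoid.exists_reduced_factors' p q h
      exact ⟨g, p', q', left_ne_zero_of_mul h, rfl, rfl, hrel⟩
  refine ⟨p', q', h.imp right_ne_zero_of_mul right_ne_zero_of_mul, fun c d ↦ ⟨fun hcd ↦ ?_, ?_⟩⟩
  · have hcd' : c * p' + d * q' = 0 := mul_left_cancel₀ hg (by linear_combination hcd)
    by_cases hp' : p' = 0
    · subst hp'
      obtain ⟨u, rfl⟩ := isRelPrime_zero_left.1 hrel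
      rw [mul_zero, zero_add] at hcd'
      exact ⟨c * ↑u⁻¹, by simp, by simpa using hcd'⟩
    · have dvd : p' ∣ d * q' := ⟨-c, by linear_combination hcd'⟩
      obtain ⟨t, rfl⟩ := hrel.dvd_of_dvd_mul_right dvd
      exact ⟨-t, mul_right_cancel₀ hp' (by linear_combination hcd'), by ring⟩
  · rintro ⟨t, rfl, rfl⟩
    ring

end FreeModule

section Coordinates

variable {R M κ ι : Type*} [CommRing R] [AddCommGroup M] [Module R M] (b : Module.Basis κ R M)
  (s : ι ↪ κ)

theorem disjoint_span_iInf_ker_coord :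
    Disjoint (Submodule.span R (Set.range (b ∘ s))) (⨅ i, LinearMap.ker (b.coord (s i))) := by
  refine Submodule.disjoint_def.2 fun x hx hx' ↦ b.ext_elem fun j ↦ ?_
  rw [Set.range_comp, b.mem_span_image] at hx
  rw [map_zero, Finsupp.zero_apply]
  by_contra hj
  obtain ⟨i, rfl⟩ := hx (Finsupp.mem_support_iff.2 hj)
  exact hj (Submodule.mem_iInf _ |>.1 hx' i)

theorem span_sup_inf_iInf_ker_coord [Finite ι] {P : Submodule R M} (hP : ∀ i, b (s i) ∈ P) :
    Submodule.span R (Set.range (b ∘ s)) ⊔ P ⊓ ⨅ i, LinearMap.ker (b.coord (s i)) = P := by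
  cases nonempty_fintype ι
  have span_le : Submodule.span R (Set.range (b ∘ s)) ≤ P :=
    Submodule.span_le.2 (Set.range_subset_iff.2 hP)
  refine le_antisymm (sup_le span_le inf_le_left) fun x hx ↦ ?_
  have sum_mem : ∑ i, b.repr x (s i) • b (s i) ∈ Submodule.span R (Set.range (b ∘ s)) :=
    sum_mem fun i _ ↦ Submodule.smul_mem _ _ (Submodule.subset_span ⟨i, rfl⟩)
  refine Submodule.mem_sup.2 ⟨_, sum_mem, x - ∑ i, b.repr x (s i) • b (s i),
    ⟨sub_mem hx (span_le sum_mem), Submodule.mem_iInf _ |>.2 fun i ↦ ?_⟩, add_sub_cancel _ _⟩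
  classical
  simp [Finsupp.single_apply]

variable [IsDomain R] [IsNoetherianRing R] [Finite κ] [Fintype ι]

theorem finrank_inf_iInf_ker_coord_add_card {P : Submodule R M} (hP : ∀ i, b (s i) ∈ P) :
    Module.finrank R (P ⊓ ⨅ i, LinearMap.ker (b.coord (s i)) : Submodule R M) + Fintype.card ι =
      Module.finrank R P := by
  have := Module.Finite.of_basis b
  have rank_eq := Submodule.rank_sup_add_rank_inf_eq (Submodule.span R (Set.range (b ∘ s)))
    (P ⊓ ⨅ i, LinearMap.ker (b.coord (s i)))
  rw [span_sup_inf_iInf_ker_coord b s hP,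
    ((disjoint_span_iInf_ker_coord b s).mono_right inf_le_right).eq_bot, rank_bot, add_zero]
    at rank_eq
  simp only [← Module.finrank_eq_rank] at rank_eq
  rw [finrank_span_eq_card (b.linearIndependent.comp _ s.injective)] at rank_eq
  rw [add_comm]
  exact_mod_cast rank_eq.symm

theorem eq_span_of_finrank_le_card {N P : Submodule R M} (hNP : N ≤ P)
    (rank_le : Module.finrank R P ≤ Fintype.card ι) (hN : ∀ i, b (s i) ∈ N) :
    N = Submodule.span R (Set.range (b ∘ s)) := by
  have := Module.Finite.of_basis b
  have : Module.IsTorsionFree R M := (Module.Free.of_basis b).instIsTorsionFree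
  have hP i : b (s i) ∈ P := hNP (hN i)
  have eq_bot : P ⊓ ⨅ i, LinearMap.ker (b.coord (s i)) = ⊥ := by
    have := finrank_inf_iInf_ker_coord_add_card b s hP
    exact Submodule.finrank_eq_zero.1 (by lia)
  refine le_antisymm (hNP.trans ?_) (Submodule.span_le.2 (Set.range_subset_iff.2 hN))
  rw [← span_sup_inf_iInf_ker_coord b s hP, eq_bot, sup_bot_eq]

end Coordinates

section ProjectiveDimension

variable {R : Type u} [CommRing R] [IsDomain R] {M : Type u} [AddCommGroup M] [Module R M]
  [Module.IsTorsionFree R M]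

theorem add_smul_eq_zero_iff_of_disjoint {L : Submodule R M} {v : M}
    (disjoint : Disjoint L (Submodule.span R {v})) (hv : v ≠ 0) {x : M} (hx : x ∈ L) {a : R} :
    x + a • v = 0 ↔ x = 0 ∧ a = 0 := by
  refine ⟨fun h ↦ ?_, fun ⟨hx, ha⟩ ↦ by rw [hx, ha, zero_smul, add_zero]⟩
  have hx0 : x = 0 := Submodule.disjoint_def.1 disjoint x hx <|
    Submodule.mem_span_singleton.2 ⟨-a, by rw [neg_smul, eq_comm, eq_neg_iff_add_eq_zero, h]⟩
  rw [hx0, zero_add] at h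
  exact ⟨hx0, (smul_eq_zero.1 h).resolve_right hv⟩

theorem hasProjectiveDimensionLE_one_sup_span_pair [UniqueFactorizationMonoid R]
    {L : Submodule R M} [Module.Projective R L] {v : M}
    (disjoint : Disjoint L (Submodule.span R {v})) (p q : R) :
    HasProjectiveDimensionLE
      (ModuleCat.of R (L ⊔ Submodule.span R {p • v, q • v} : Submodule R M)) 1 := by
  by_cases hzero : p • v = 0 ∧ q • v = 0
  · rw [hzero.1, hzero.2, Set.pair_eq_singleton, Submodule.span_zero_singleton, sup_bot_eq]
    have := (hasProjectiveDimensionLE_zero_iff (A := R) L).2 inferInstance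
    exact hasProjectiveDimensionLT_of_ge _ 1 2 one_le_two
  have hv : v ≠ 0 := by
    rintro rfl
    exact hzero ⟨smul_zero p, smul_zero q⟩
  have hpq : p ≠ 0 ∨ q ≠ 0 := by
    by_contra! h
    exact hzero ⟨by rw [h.1, zero_smul], by rw [h.2, zero_smul]⟩
  obtain ⟨p', q', hpq', syzygy⟩ := exists_syzygy_generator p q hpq
  let g : L × R × R →ₗ[R] M := L.subtype.coprod
    ((LinearMap.toSpanSingleton R M (p • v)).coprod (LinearMap.toSpanSingleton R M (q • v)))
  have range_g : LinearMap.range g = L ⊔ Submodule.span R {p • v, q • v} := by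
    simp only [g, LinearMap.range_coprod, Submodule.range_subtype, LinearMap.range_toSpanSingleton,
      Submodule.span_insert]
  let f : R →ₗ[R] L × R × R := LinearMap.toSpanSingleton R _ (0, q', -p')
  rw [← range_g]
  refine (hasProjectiveDimensionLE_succ_iff_of_exact (f := f) (g := g.rangeRestrict) ?_
    g.surjective_rangeRestrict (fun x ↦ ?_) 0).2 ((hasProjectiveDimensionLE_zero_iff R).2
    inferInstance)
  · refine (injective_iff_map_eq_zero f).2 fun t ht ↦ ?_
    simp only [f, LinearMap.toSpanSingleton_apply, Prod.smul_mk, smul_zero, smul_eq_mul,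
      Prod.mk_eq_zero, mul_neg, neg_eq_zero, mul_eq_zero, true_and] at ht
    exact hpq'.elim ht.2.resolve_right ht.1.resolve_right
  obtain ⟨x, c, d⟩ := x
  have hg : g (x, c, d) = x + (c * p + d * q) • v := by
    simp [g, add_smul, mul_smul]
  rw [← Subtype.coe_inj, Submodule.coe_zero, show (g.rangeRestrict (x, c, d) : M) = _ from hg,
    add_smul_eq_zero_iff_of_disjoint disjoint hv x.2, syzygy]
  simp [f, eq_comm, Prod.ext_iff]

theorem span_singleton_eq_sup_span_pair {R A : Type*} [CommRing R] [CommRing A] [Algebra R A]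
    {P : Ideal A} {L : Submodule R A} {v : A} (hv : v ∈ P)
    (hP : ∀ a ∈ P, ∃ w ∈ L, ∃ t : R, a = w + t • v) {x z : A} (hz : z ∈ L) (hxz : x * z ∈ L)
    (hL : L ≤ (Ideal.span {z}).restrictScalars R) {l : Fin 2 → A} {d : Fin 2 → R}
    (hd : ∀ m, d m • v = l m * z)
    (spans : ∀ a, ∃ r r' : R, a - (r • 1 + r' • x) ∈ Ideal.span {l 0, l 1}) :
    (Ideal.span {z}).restrictScalars R = L ⊔ Submodule.span R {d 0 • v, d 1 • v} := by
  have smul_mem (m : Fin 2) : d m • v ∈ Submodule.span R {d 0 • v, d 1 • v} := by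
    fin_cases m <;> exact Submodule.subset_span (by simp)
  refine le_antisymm (fun y hy ↦ ?_) (sup_le hL (Submodule.span_le.2 ?_))
  · obtain ⟨a, rfl⟩ := Ideal.mem_span_singleton'.1 ((Submodule.restrictScalars_mem _ _ _).1 hy)
    obtain ⟨r, r', ha⟩ := spans a
    obtain ⟨h₀, h₁, hh⟩ := Ideal.mem_span_pair.1 ha
    have mem (h : A) (m : Fin 2) :
        d m • (h * v) ∈ L ⊔ Submodule.span R {d 0 • v, d 1 • v} := by
      obtain ⟨w, hw, t, ht⟩ := hP (h * v) (P.mul_mem_left h hv)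
      rw [ht, smul_add, smul_comm]
      exact add_mem (Submodule.mem_sup_left (L.smul_mem _ hw))
        (Submodule.mem_sup_right (Submodule.smul_mem _ _ (smul_mem m)))
    have eq_add : a * z = (r • z + r' • (x * z)) + (d 0 • (h₀ * v) + d 1 • (h₁ * v)) := by
      have hd' (h : A) (m : Fin 2) : d m • (h * v) = h * l m * z := by
        rw [← mul_smul_comm, hd, mul_assoc]
      rw [hd', hd', ← sub_add_cancel a (r • 1 + r' • x), ← hh]
      simp only [add_mul, smul_mul_assoc, one_mul]
      exact add_comm _ _
    rw [eq_add]
    exact add_mem (Submodule.mem_sup_left (add_mem (L.smul_mem r hz) (L.smul_mem r' hxz)))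
      (add_mem (mem h₀ 0) (mem h₁ 1))
  · have mem (m : Fin 2) : d m • v ∈ (Ideal.span {z}).restrictScalars R :=
      hd m ▸ Ideal.mul_mem_left _ _ (Ideal.mem_span_singleton_self z)
    rintro _ (rfl | rfl)
    exacts [mem 0, mem 1]

theorem hasProjectiveDimensionLE_one_span_singleton {A : Type u} {κ : Type*} [CommRing A]
    [Algebra R A] [Finite κ] [UniqueFactorizationMonoid R] [IsNoetherianRing R]
    (b : Module.Basis κ R A) {P : Ideal A}
    (hP : ∀ {c : R} {a : A}, c ≠ 0 → c • a ∈ P → a ∈ P)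
    (rank_le : Module.finrank R (P.restrictScalars R) ≤ 3) {i j : κ} (hij : i ≠ j) (hi : b i ∈ P)
    {x : A} (hj : b j = x * b i) (l : Fin 2 → A)
    (hl : ∀ m, b.repr (l m * b i) i = 0 ∧ b.repr (l m * b i) j = 0)
    (spans : ∀ a, ∃ r r' : R, a - (r • 1 + r' • x) ∈ Ideal.span {l 0, l 1}) :
    HasProjectiveDimensionLE
      (ModuleCat.of R ((Ideal.span {b i}).restrictScalars R)) 1 := by
  obtain ⟨s, hsi, hsj⟩ : ∃ s : Fin 2 ↪ κ, s 0 = i ∧ s 1 = j :=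
    ⟨⟨![i, j], by simpa [Function.Injective, Fin.forall_fin_two] using ⟨hij, hij.symm⟩⟩, rfl, rfl⟩
  let L := Submodule.span R (Set.range (b ∘ s))
  let V := ⨅ m, LinearMap.ker (b.coord (s m))
  have mem_V {a : A} : a ∈ V ↔ b.repr a i = 0 ∧ b.repr a j = 0 := by
    simp [V, hsi, hsj, Fin.forall_fin_two]
  have hbP : ∀ m, b (s m) ∈ P.restrictScalars R :=
    Fin.forall_fin_two.2 ⟨hsi ▸ hi, hsj ▸ show b j ∈ P from hj ▸ P.mul_mem_left x hi⟩
  obtain ⟨v, ⟨hvP, hvV⟩, le_span⟩ := exists_le_span_singleton_of_finrank_le_one b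
    (P := P.restrictScalars R ⊓ V) (fun hc ⟨haP, haV⟩ ↦
      ⟨hP hc haP, mem_V.2 (by simpa [hc] using mem_V.1 haV)⟩)
    (by
      have h : Module.finrank R (P.restrictScalars R ⊓ V : Submodule R A) + Fintype.card (Fin 2) =
        _ := finrank_inf_iInf_ker_coord_add_card b s hbP
      rw [Fintype.card_fin] at h
      omega)
  have exists_smul (a : A) (ha : a ∈ P) : ∃ w ∈ L, ∃ t : R, a = w + t • v := by
    rw [← Submodule.restrictScalars_mem R P, ← span_sup_inf_iInf_ker_coord b s hbP] at ha
    obtain ⟨w, hw, y, hy, rfl⟩ := Submodule.mem_sup.1 ha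
    obtain ⟨t, rfl⟩ := Submodule.mem_span_singleton.1 (le_span hy)
    exact ⟨w, hw, t, rfl⟩
  have exists_eq_smul (m : Fin 2) : ∃ d : R, d • v = l m * b i :=
    Submodule.mem_span_singleton.1 (le_span ⟨P.mul_mem_left _ hi, mem_V.2 (hl m)⟩)
  choose d hd using exists_eq_smul
  have hi_mem : b i ∈ L := Submodule.subset_span ⟨0, congrArg b hsi⟩
  have hj_mem : x * b i ∈ L := hj ▸ Submodule.subset_span ⟨1, congrArg b hsj⟩
  have hL : L ≤ (Ideal.span {b i}).restrictScalars R := by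
    refine Submodule.span_le.2 (Set.range_subset_iff.2 (Fin.forall_fin_two.2 ⟨?_, ?_⟩))
    · exact hsi ▸ Ideal.mem_span_singleton_self _
    · simpa [hsj, hj] using Ideal.mul_mem_left _ x (Ideal.mem_span_singleton_self (b i))
  have : Module.IsTorsionFree R A := (Module.Free.of_basis b).instIsTorsionFree
  have : Module.Projective R L :=
    Module.Projective.of_basis (Module.Basis.span (b.linearIndependent.comp _ s.injective))
  rw [span_singleton_eq_sup_span_pair hvP exists_smul hi_mem hj_mem hL hd spans]
  exact hasProjectiveDimensionLE_one_sup_span_pair ((disjoint_span_iInf_ker_coord b s).mono_right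
    ((Submodule.span_singleton_le_iff_mem _ _).2 hvV)) _ _

end ProjectiveDimension

/-! ### Ideals over a complete intersection of three quadrics -/

section LeadingForm

open MvPolynomial

theorem InGeneralPosition.map {k K : Type*} [Field k] [Field K] {F : Fin 3 → MvPolynomial (Fin 3) k}
    (hF : InGeneralPosition F) (ψ : k →+* K) :
    InGeneralPosition fun i ↦ MvPolynomial.map ψ (F i) := by
  have X_mem {J : Ideal (MvPolynomial (Fin 3) k)} {j : Fin 3} (h : X j ∈ J.radical) :
      X j ∈ (J.map (MvPolynomial.map ψ)).radical := by
    simpa using Ideal.map_radical_le _ (Ideal.mem_map_of_mem (MvPolynomial.map ψ) h)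
  refine ⟨fun i ↦ (hF.isHomogeneous i).map ψ, ?_, ?_, fun j ↦ ?_⟩
  · simpa [Ideal.map_sup, Ideal.map_span] using X_mem hF.X_two_mem_radical
  · simpa [Ideal.map_sup, Ideal.map_span] using X_mem hF.X_one_mem_radical
  · simpa [Ideal.map_span, ← Set.range_comp, Function.comp_def] using X_mem (hF.X_mem_radical j)

theorem hasLeadingForm_homogeneousComponent {σ K : Type*} [Field K] {t : ℕ} {p : MvPolynomial σ K}
    (hp : p ∈ totalDegreeLT σ K (t + 1)) : HasLeadingForm K t (homogeneousComponent t p) p := by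
  refine ⟨homogeneousComponent_isHomogeneous t p, mem_totalDegreeLT.2 fun m hm ↦ ?_⟩
  rw [mem_support_iff, coeff_sub, Algebra.algebraMap_self, map_id, coeff_homogeneousComponent]
    at hm
  split_ifs at hm with h
  · exact absurd (sub_self _) hm
  · rw [sub_zero] at hm
    exact (Nat.le_of_lt_succ (mem_totalDegreeLT.1 hp m (mem_support_iff.2 hm))).lt_of_ne h

theorem exists_mem_totalDegreeLT_mk_eq {k σ ι R : Type*} [Field k] [CommRing R] [Algebra k R]
    [Finite ι] {F : ι → MvPolynomial σ k} {f : ι → MvPolynomial σ R}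
    (hf : ∀ i, HasLeadingForm R 2 (F i) (f i)) {t : ℕ} {φ : MvPolynomial σ k}
    {q : MvPolynomial σ R} (hq : HasLeadingForm R (t + 2) φ q)
    (hφ : φ ∈ Ideal.span (Set.range F)) :
    ∃ g ∈ totalDegreeLT σ R (t + 2),
      Ideal.Quotient.mk (Ideal.span (Set.range f)) q = Ideal.Quotient.mk _ g := by
  cases nonempty_fintype ι
  obtain ⟨c, hc, rfl⟩ :=
    exists_isHomogeneous_coeffs_of_mem_span (fun i ↦ (hf i).isHomogeneous) hq.isHomogeneous hφ
  refine ⟨q - ∑ i, MvPolynomial.map (algebraMap k R) (c i) * f i, hq.sub_mem_of_eq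
    (HasLeadingForm.sum _ fun i _ ↦ (HasLeadingForm.map_algebraMap (hc i)).mul (hf i)), ?_⟩
  rw [Ideal.Quotient.mk_eq_mk_iff_sub_mem, sub_sub_cancel]
  exact sum_mem fun i _ ↦ Ideal.mul_mem_left _ _ (Ideal.subset_span ⟨i, rfl⟩)

end LeadingForm

section CompleteIntersection

open MvPolynomial

variable {k R : Type u} [Field k] [CommRing R] [Algebra k R] {F : Fin 3 → MvPolynomial (Fin 3) k}
  {f : Fin 3 → MvPolynomial (Fin 3) R}

theorem exists_linearIndependent_mul_of_hasLeadingForm (hF : InGeneralPosition F)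
    (hf : ∀ i, HasLeadingForm R 2 (F i) (f i)) {φ : MvPolynomial (Fin 3) k} (hφ : φ ≠ 0)
    {l : MvPolynomial (Fin 3) R} (hl : HasLeadingForm R 1 φ l) :
    ∃ m : Fin 4 → Fin 3 →₀ ℕ, LinearIndependent R fun i ↦
      Ideal.Quotient.mk (Ideal.span (Set.range f)) (monomial (m i) 1 * l) := by
  obtain ⟨p, q, hpq⟩ := hF.exists_linearIndependent_X_mul hl.isHomogeneous hφ
  have mul_notMem : X p * φ ∉ Ideal.span (Set.range F) := fun h ↦
    hpq.ne_zero 0 (Ideal.Quotient.eq_zero_iff_mem.2 h)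
  have notMem : φ ∉ Ideal.span (Set.range F) := fun h ↦ mul_notMem (Ideal.mul_mem_left _ _ h)
  have hlp := (HasLeadingForm.X p).mul hl
  obtain ⟨j, hj⟩ := hF.exists_X_mul_notMem hlp.isHomogeneous (by decide) mul_notMem
  let m : Fin 4 → Fin 3 →₀ ℕ := ![0, Finsupp.single p 1, Finsupp.single q 1,
    Finsupp.single j 1 + Finsupp.single p 1]
  let ψ : Fin 4 → MvPolynomial (Fin 3) k := ![φ, X p * φ, X q * φ, X j * (X p * φ)]
  have hE (i : Fin 4) : HasLeadingForm R (![1, 2, 2, 3] i) (ψ i) (monomial (m i) 1 * l) := by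
    fin_cases i
    · simpa [m, ψ] using hl
    · exact hlp
    · exact (HasLeadingForm.X q).mul hl
    · simpa [m, ψ, X, monomial_mul, ← mul_assoc] using (HasLeadingForm.X j).mul hlp
  have indep (t : ℕ) : LinearIndepOn k (fun i ↦ Ideal.Quotient.mk (Ideal.span (Set.range F)) (ψ i))
      {i | ![1, 2, 2, 3] i = t} := by
    have fiber : {i : Fin 4 | ![1, 2, 2, 3] i = t} =
        if t = 1 then {0} else if t = 2 then {1, 2} else if t = 3 then {3} else ∅ := by
      ext i
      fin_cases i <;> simp <;> grind
    rw [fiber]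
    split_ifs
    · exact (linearIndepOn_singleton_iff k).2 (mt Ideal.Quotient.eq_zero_iff_mem.1 notMem)
    · exact (LinearIndepOn.pair_iff _ (by decide)).2 fun c d h ↦ by
        have := Fintype.linearIndependent_iff.1 hpq ![c, d] (by simpa [ψ] using h)
        exact ⟨this 0, this 1⟩
    · exact (linearIndepOn_singleton_iff k).2 (mt Ideal.Quotient.eq_zero_iff_mem.1 hj)
    · exact linearIndepOn_empty k _
  obtain ⟨s, b, hs, -⟩ :=
    exists_basis_extending_of_hasLeadingForm hF.hilbertFunction_eq_choose hf hE indep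
  refine ⟨m, ?_⟩
  simp only [← fun i ↦ (hs i).2]
  exact b.linearIndependent.comp _ s.injective

theorem exists_linearIndependent_mul [IsDomain R] (hF : InGeneralPosition F)
    (hf : ∀ i, HasLeadingForm R 2 (F i) (f i)) {l : MvPolynomial (Fin 3) R}
    (hl : l ∈ totalDegreeLT (Fin 3) R 2) (hl' : l ∉ totalDegreeLT (Fin 3) R 1) :
    ∃ m : Fin 4 → Fin 3 →₀ ℕ, LinearIndependent R fun i ↦
      Ideal.Quotient.mk (Ideal.span (Set.range f)) (monomial (m i) 1 * l) := by
  let K := FractionRing R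
  have map_mem : MvPolynomial.map (algebraMap R K) l ∈ totalDegreeLT (Fin 3) K 2 :=
    map_mem_totalDegreeLT _ hl
  have hl_lead := hasLeadingForm_homogeneousComponent map_mem
  have ne_zero : homogeneousComponent 1 (MvPolynomial.map (algebraMap R K) l) ≠ 0 := fun h ↦ by
    have mem := hl_lead.sub_mem
    rw [h, map_zero, sub_zero, mem_totalDegreeLT,
      support_map_of_injective _ (IsFractionRing.injective R K), ← mem_totalDegreeLT] at mem
    exact hl' mem
  have hf' (i : Fin 3) : HasLeadingForm K 2 (MvPolynomial.map (algebraMap k K) (F i))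
      (MvPolynomial.map (algebraMap R K) (f i)) := by
    refine ⟨(hF.isHomogeneous i).map _, ?_⟩
    simpa [map_map, ← IsScalarTower.algebraMap_eq k R K] using
      map_mem_totalDegreeLT (algebraMap R K) (hf i).sub_mem
  obtain ⟨m, hm⟩ := exists_linearIndependent_mul_of_hasLeadingForm (hF.map (algebraMap k K)) hf'
    ne_zero hl_lead
  have le_comap : Ideal.span (Set.range f) ≤
      (Ideal.span (Set.range fun i ↦ MvPolynomial.map (algebraMap R K) (f i))).comap
        (mapAlgHom (Algebra.ofId R K)) :=
    Ideal.span_le.2 (Set.range_subset_iff.2 fun i ↦ Ideal.subset_span ⟨i, rfl⟩)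
  refine ⟨m, .of_comp (Ideal.quotientMapₐ _ _ le_comap).toLinearMap ?_⟩
  have map_mul_eq (i : Fin 4) : monomial (m i) 1 * MvPolynomial.map (algebraMap R K) l =
      MvPolynomial.map (algebraMap R K) (monomial (m i) 1 * l) := by
    rw [map_mul, map_monomial, RingHom.map_one]
  simp only [map_mul_eq] at hm
  exact hm.restrict_scalars' R

end CompleteIntersection

section PowersModulo

open MvPolynomial

variable {σ R : Type*} [CommRing R]

/-- The polynomials congruent modulo `J` to a combination of `1, X j, …, X j ^ (t - 1)`. -/
noncomputable def powersModulo (J : Ideal (MvPolynomial σ R)) (j : σ) (t : ℕ) :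
    Submodule R (MvPolynomial σ R) :=
  Submodule.span R ((X j ^ ·) '' Set.Iio t) ⊔ J.restrictScalars R

variable {J : Ideal (MvPolynomial σ R)} {j : σ}

theorem powersModulo_mono : Monotone (powersModulo J j) := fun _ _ h ↦
  sup_le_sup_right (Submodule.span_mono (Set.image_mono (Set.Iio_subset_Iio h))) _

theorem mem_powersModulo_of_mem {g : MvPolynomial σ R} (hg : g ∈ J) (t : ℕ) :
    g ∈ powersModulo J j t :=
  Submodule.mem_sup_right hg

theorem X_pow_mem_powersModulo {s t : ℕ} (h : s < t) :
    (X j : MvPolynomial σ R) ^ s ∈ powersModulo J j t :=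
  Submodule.mem_sup_left (Submodule.subset_span ⟨s, h, rfl⟩)

theorem exists_sub_mem_of_mem_powersModulo_two {g : MvPolynomial σ R}
    (hg : g ∈ powersModulo J j 2) : ∃ r r' : R, g - (r • 1 + r' • X j) ∈ J := by
  have image_eq : (fun n ↦ (X j : MvPolynomial σ R) ^ n) '' Set.Iio 2 = {1, X j} := by
    rw [show Set.Iio 2 = {0, 1} by ext; simp; lia, Set.image_pair, pow_zero, pow_one]
  rw [powersModulo, image_eq] at hg
  obtain ⟨y, hy, z, hz, rfl⟩ := Submodule.mem_sup.1 hg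
  obtain ⟨r, r', rfl⟩ := Submodule.mem_span_pair.1 hy
  exact ⟨r, r', by rwa [add_sub_cancel_left]⟩

variable {k : Type*} [Field k] [Algebra k R] {c : σ → k} {β : σ → R}

theorem X_mul_mem_powersModulo {t : ℕ} {g : MvPolynomial σ R} (hg : g ∈ powersModulo J j t)
    (hJ : ∀ i, X i - (c i • X j + C (β i)) ∈ J) (i : σ) : X i * g ∈ powersModulo J j (t + 1) := by
  suffices powersModulo J j t ≤ (powersModulo J j (t + 1)).comap (LinearMap.mulLeft R (X i)) from
    this hg
  refine sup_le (Submodule.span_le.2 ?_) fun g hg ↦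
    mem_powersModulo_of_mem (J.mul_mem_left _ hg) _
  rintro _ ⟨s, hs, rfl⟩
  have split : X i * X j ^ s =
      X j ^ s * (X i - (c i • X j + C (β i))) + (c i • X j ^ (s + 1) + β i • X j ^ s) := by
    simp only [smul_eq_C_mul, ← algebraMap_smul R (c i)]
    ring
  rw [SetLike.mem_coe, Submodule.mem_comap, LinearMap.mulLeft_apply, split]
  exact add_mem (mem_powersModulo_of_mem (J.mul_mem_left _ (hJ i)) _)
    (add_mem (Submodule.smul_of_tower_mem _ _ (X_pow_mem_powersModulo (Nat.succ_lt_succ hs)))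
      (Submodule.smul_mem _ _ (X_pow_mem_powersModulo (Nat.lt_succ_of_lt hs))))

theorem monomial_sub_mem_powersModulo (hJ : ∀ i, X i - (c i • X j + C (β i)) ∈ J) {t : ℕ}
    {m : σ →₀ ℕ} (hm : m.degree = t) :
    monomial m 1 - eval c (monomial m 1) • X j ^ t ∈ powersModulo J j t := by
  induction t generalizing m with
  | zero => simp [(Finsupp.degree_eq_zero_iff m).1 hm]
  | succ t ih =>
    have ne_zero : m ≠ 0 := by
      rintro rfl
      simp at hm
    obtain ⟨i, hi⟩ := Finsupp.support_nonempty_iff.2 ne_zero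
    rw [Finsupp.mem_support_iff] at hi
    obtain ⟨m, rfl⟩ : ∃ m', m = m' + Finsupp.single i 1 :=
      ⟨_, (Finsupp.sub_add_single_one_cancel hi).symm⟩
    have hm' : m.degree = t := by simpa using hm
    have split : monomial (m + Finsupp.single i 1) 1 -
        eval c (monomial (m + Finsupp.single i 1) 1) • X j ^ (t + 1) =
          X i * (monomial m 1 - eval c (monomial m 1) • X j ^ t) +
            eval c (monomial m 1) •
              (X j ^ t * (X i - (c i • X j + C (β i))) + β i • X j ^ t) := by
      simp only [monomial_add_single, map_mul, pow_one, eval_X, mul_smul, smul_eq_C_mul _ (β i)]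
      simp only [← algebraMap_smul R (eval c _), ← algebraMap_smul R (c i), smul_eq_C_mul]
      ring
    rw [split]
    exact add_mem (X_mul_mem_powersModulo (ih hm') hJ i) <| Submodule.smul_of_tower_mem _ _ <|
      add_mem (mem_powersModulo_of_mem (J.mul_mem_left _ (hJ i)) _)
        (Submodule.smul_mem _ _ (X_pow_mem_powersModulo t.lt_succ_self))

theorem totalDegreeLT_le_powersModulo (hJ : ∀ i, X i - (c i • X j + C (β i)) ∈ J) (t : ℕ) :
    totalDegreeLT σ R t ≤ powersModulo J j t :=
  totalDegreeLT_le fun m hm ↦ by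
    rw [← sub_add_cancel (monomial m 1) (eval c (monomial m 1) • X j ^ m.degree)]
    exact add_mem (powersModulo_mono hm.le (monomial_sub_mem_powersModulo hJ rfl))
      (Submodule.smul_of_tower_mem _ _ (X_pow_mem_powersModulo hm))

theorem sub_smul_X_pow_mem_powersModulo (hJ : ∀ i, X i - (c i • X j + C (β i)) ∈ J) {t : ℕ}
    {φ : MvPolynomial σ k} {f : MvPolynomial σ R} (hf : HasLeadingForm R t φ f) :
    f - eval c φ • X j ^ t ∈ powersModulo J j t := by
  have split : f - eval c φ • X j ^ t = (f - MvPolynomial.map (algebraMap k R) φ) +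
      ∑ m ∈ φ.support, coeff m φ • (monomial m 1 - eval c (monomial m 1) • X j ^ t) := by
    have map_eq : MvPolynomial.map (algebraMap k R) φ =
        ∑ m ∈ φ.support, coeff m φ • monomial m (1 : R) := by
      conv_lhs => rw [φ.as_sum, map_sum]
      simp only [map_monomial, ← algebraMap_smul R (coeff _ φ), smul_monomial, smul_eq_mul, mul_one]
    have eval_eq : eval c φ = ∑ m ∈ φ.support, coeff m φ * eval c (monomial m 1) := by
      rw [eval_eq]
      simp only [eval_monomial, one_mul, Finsupp.prod]
    simp only [smul_sub, Finset.sum_sub_distrib, ← map_eq, smul_smul, ← Finset.sum_smul, ← eval_eq]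
    ring
  rw [split]
  refine add_mem (totalDegreeLT_le_powersModulo hJ t hf.sub_mem) (sum_mem fun m hm ↦
    Submodule.smul_of_tower_mem _ _ (monomial_sub_mem_powersModulo hJ ?_))
  rw [Finsupp.degree_eq_weight_one]
  exact hf.isHomogeneous (mem_support_iff.1 hm)

theorem powersModulo_eq_top (hJ : ∀ i, X i - (c i • X j + C (β i)) ∈ J) {t : ℕ}
    {φ : MvPolynomial σ k} {f : MvPolynomial σ R} (hf : HasLeadingForm R t φ f) (hfJ : f ∈ J)
    (hc : eval c φ ≠ 0) : powersModulo J j t = ⊤ := by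
  have X_pow_mem : X j ^ t ∈ powersModulo J j t := by
    rw [← inv_smul_smul₀ hc (X j ^ t : MvPolynomial σ R)]
    refine Submodule.smul_of_tower_mem _ _ ?_
    rw [← sub_sub_cancel f (eval c φ • X j ^ t)]
    exact sub_mem (mem_powersModulo_of_mem hfJ t) (sub_smul_X_pow_mem_powersModulo hJ hf)
  have succ_le : powersModulo J j (t + 1) ≤ powersModulo J j t := by
    refine sup_le (Submodule.span_le.2 ?_) le_sup_right
    rintro _ ⟨s, hs, rfl⟩
    obtain h | rfl := (Nat.lt_succ_iff_lt_or_eq.1 hs)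
    exacts [X_pow_mem_powersModulo h, X_pow_mem]
  refine eq_top_iff.2 fun g _ ↦ ?_
  induction g using MvPolynomial.induction_on with
  | C a =>
    rw [← mul_one (C a), ← smul_eq_C_mul, ← pow_zero (X j)]
    exact Submodule.smul_mem _ a (succ_le (X_pow_mem_powersModulo t.succ_pos))
  | add p q hp hq => exact add_mem (hp trivial) (hq trivial)
  | mul_X p i hp =>
    rw [mul_comm]
    exact succ_le (X_mul_mem_powersModulo (hp trivial) hJ i)

end PowersModulo

section CompleteIntersection

open MvPolynomial

theorem eq_C_of_mem_totalDegreeLT_one {σ R : Type*} [CommRing R] {g : MvPolynomial σ R}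
    (hg : g ∈ totalDegreeLT σ R 1) : g = C (coeff 0 g) :=
  totalDegree_eq_zero_iff_eq_C.1 <| (totalDegree_eq_zero_iff _ g).2 fun m hm ↦ by
    have := Nat.lt_one_iff.1 (mem_totalDegreeLT.1 hg m hm)
    simp [(Finsupp.degree_eq_zero_iff m).1 this]

variable {k R : Type u} [Field k] [CommRing R] [Algebra k R] {F : Fin 3 → MvPolynomial (Fin 3) k}
  {f : Fin 3 → MvPolynomial (Fin 3) R}

theorem exists_basis_of_inGeneralPosition (hF : InGeneralPosition F)
    (hf : ∀ i, HasLeadingForm R 2 (F i) (f i)) :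
    Nonempty (Module.Basis (Finset (Fin 3)) R
      (MvPolynomial (Fin 3) R ⧸ Ideal.span (Set.range f))) := by
  obtain ⟨-, b, -⟩ := exists_basis_extending_of_hasLeadingForm (κ := Empty) (d := Empty.elim)
    (φ := Empty.elim) (E := Empty.elim) hF.hilbertFunction_eq_choose hf (fun i ↦ i.elim)
    fun t ↦ by simp [Set.eq_empty_of_isEmpty]
  exact ⟨b⟩

variable [IsDomain R] [IsNoetherianRing R]
  {P : Ideal (MvPolynomial (Fin 3) R ⧸ Ideal.span (Set.range f))}

theorem eq_zero_of_mk_mem (hF : InGeneralPosition F) (hf : ∀ i, HasLeadingForm R 2 (F i) (f i))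
    (hP : ∀ {c : R} {a}, c ≠ 0 → c • a ∈ P → a ∈ P)
    (rank_le : Module.finrank R (P.restrictScalars R) ≤ 3) {g : MvPolynomial (Fin 3) R}
    (hg : g ∈ totalDegreeLT (Fin 3) R 2) (hgP : Ideal.Quotient.mk _ g ∈ P) : g = 0 := by
  obtain ⟨b⟩ := exists_basis_of_inGeneralPosition hF hf
  have := Module.Finite.of_basis b
  by_cases hg' : g ∈ totalDegreeLT (Fin 3) R 1
  · have hgC := eq_C_of_mem_totalDegreeLT_one hg'
    by_contra hne
    have one_mem : (1 : MvPolynomial (Fin 3) R ⧸ Ideal.span (Set.range f)) ∈ P := by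
      refine hP (c := coeff 0 g) (fun h ↦ hne (by rw [hgC, h, map_zero])) ?_
      rwa [← Algebra.algebraMap_eq_smul_one,
        IsScalarTower.algebraMap_apply R (MvPolynomial (Fin 3) R), MvPolynomial.algebraMap_eq,
        ← hgC]
    rw [(Ideal.eq_top_iff_one P).2 one_mem, Submodule.restrictScalars_top, finrank_top,
      Module.finrank_eq_card_basis b] at rank_le
    exact absurd rank_le (by decide)
  · obtain ⟨m, hm⟩ := exists_linearIndependent_mul hF hf hg hg'
    have mem (i : Fin 4) :
        Ideal.Quotient.mk _ (monomial (m i) 1 * g) ∈ P.restrictScalars R := by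
      rw [map_mul]
      exact P.mul_mem_left _ hgP
    have indep : LinearIndependent R fun i ↦ (⟨_, mem i⟩ : P.restrictScalars R) :=
      .of_comp (P.restrictScalars R).subtype hm
    have := indep.fintype_card_le_finrank
    simp only [Fintype.card_fin] at this
    lia

theorem mk_eq_zero_of_mem_span (hF : InGeneralPosition F)
    (hf : ∀ i, HasLeadingForm R 2 (F i) (f i))
    (hP : ∀ {c : R} {a}, c ≠ 0 → c • a ∈ P → a ∈ P)
    (rank_le : Module.finrank R (P.restrictScalars R) ≤ 3) {φ : MvPolynomial (Fin 3) k}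
    {q : MvPolynomial (Fin 3) R} (hq : HasLeadingForm R 2 φ q) (hqP : Ideal.Quotient.mk _ q ∈ P)
    (hφ : φ ∈ Ideal.span (Set.range F)) :
    Ideal.Quotient.mk (Ideal.span (Set.range f)) q = 0 := by
  obtain ⟨g, hg, hqg⟩ := exists_mem_totalDegreeLT_mk_eq hf (t := 0) hq hφ
  rw [hqg, eq_zero_of_mk_mem hF hf hP rank_le hg (hqg ▸ hqP), map_zero]

theorem projective_of_linearIndependent_pair (hF : InGeneralPosition F)
    (hf : ∀ i, HasLeadingForm R 2 (F i) (f i))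
    (rank_le : Module.finrank R (P.restrictScalars R) ≤ 3)
    {N : Ideal (MvPolynomial (Fin 3) R ⧸ Ideal.span (Set.range f))} (hNP : N ≤ P)
    {φ ψ : MvPolynomial (Fin 3) k} {p q : MvPolynomial (Fin 3) R} (hp : HasLeadingForm R 2 φ p)
    (hq : HasLeadingForm R 2 ψ q) (hpN : Ideal.Quotient.mk _ p ∈ N)
    (hqN : Ideal.Quotient.mk _ q ∈ N)
    (indep : LinearIndependent k
      ![Ideal.Quotient.mk (Ideal.span (Set.range F)) φ, Ideal.Quotient.mk _ ψ]) :
    Module.Projective R (N.restrictScalars R) := by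
  have notMem : φ ∉ Ideal.span (Set.range F) := fun h ↦
    indep.ne_zero 0 (Ideal.Quotient.eq_zero_iff_mem.2 h)
  obtain ⟨j, hj⟩ := hF.exists_X_mul_notMem hp.isHomogeneous (by decide) notMem
  let E : Fin 3 → MvPolynomial (Fin 3) R := ![p, q, X j * p]
  let χ : Fin 3 → MvPolynomial (Fin 3) k := ![φ, ψ, X j * φ]
  have hE (i : Fin 3) : HasLeadingForm R (![2, 2, 3] i) (χ i) (E i) := by
    fin_cases i
    exacts [hp, hq, (HasLeadingForm.X j).mul hp]
  have indep' (t : ℕ) : LinearIndepOn k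
      (fun i ↦ Ideal.Quotient.mk (Ideal.span (Set.range F)) (χ i)) {i | ![2, 2, 3] i = t} := by
    have fiber : {i : Fin 3 | ![2, 2, 3] i = t} =
        if t = 2 then {0, 1} else if t = 3 then {2} else ∅ := by
      ext i
      fin_cases i <;> simp <;> grind
    rw [fiber]
    split_ifs
    · exact (LinearIndepOn.pair_iff _ (by decide)).2 (LinearIndependent.pair_iff.1 indep)
    · exact (linearIndepOn_singleton_iff k).2 (mt Ideal.Quotient.eq_zero_iff_mem.1 hj)
    · exact linearIndepOn_empty k _
  obtain ⟨s, b, hs, -⟩ :=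
    exists_basis_extending_of_hasLeadingForm hF.hilbertFunction_eq_choose hf hE indep'
  have mem (i : Fin 3) : b (s i) ∈ N.restrictScalars R := by
    rw [(hs i).2]
    fin_cases i
    · exact hpN
    · exact hqN
    · simpa [E] using N.mul_mem_left (Ideal.Quotient.mk _ (X j)) hpN
  rw [eq_span_of_finrank_le_card b s (P := P.restrictScalars R) hNP (by simpa using rank_le) mem]
  exact Module.Projective.of_basis (Module.Basis.span (b.linearIndependent.comp _ s.injective))

end CompleteIntersection

section CompleteIntersection

open MvPolynomial

variable {k R : Type u} [Field k] [CommRing R] [Algebra k R] {F : Fin 3 → MvPolynomial (Fin 3) k}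
  {f : Fin 3 → MvPolynomial (Fin 3) R}

theorem exists_basis_apply_eq_mk_and_X_mul (hF : InGeneralPosition F)
    (hf : ∀ i, HasLeadingForm R 2 (F i) (f i)) {φ : MvPolynomial (Fin 3) k}
    {q : MvPolynomial (Fin 3) R} (hq : HasLeadingForm R 2 φ q)
    {j : Fin 3} (hj : X j * φ ∉ Ideal.span (Set.range F)) :
    ∃ (b : Module.Basis (Finset (Fin 3)) R (MvPolynomial (Fin 3) R ⧸ Ideal.span (Set.range f)))
      (s s' : Finset (Fin 3)), s ≠ s' ∧ b s = Ideal.Quotient.mk _ q ∧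
      b s' = Ideal.Quotient.mk _ (X j * q) ∧
      ∀ {ψ p}, HasLeadingForm R 3 ψ p → ψ ∈ Ideal.span (Set.range F) →
        b.repr (Ideal.Quotient.mk _ p) s' = 0 := by
  let E : Fin 2 → MvPolynomial (Fin 3) R := ![q, X j * q]
  let χ : Fin 2 → MvPolynomial (Fin 3) k := ![φ, X j * φ]
  have hE (i : Fin 2) : HasLeadingForm R (![2, 3] i) (χ i) (E i) := by
    fin_cases i
    exacts [hq, (HasLeadingForm.X j).mul hq]
  have hφ : φ ∉ Ideal.span (Set.range F) := mt (Ideal.mul_mem_left _ (X j)) hj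
  have indep (t : ℕ) : LinearIndepOn k
      (fun i ↦ Ideal.Quotient.mk (Ideal.span (Set.range F)) (χ i)) {i | ![2, 3] i = t} := by
    have fiber : {i : Fin 2 | ![2, 3] i = t} =
        if t = 2 then {0} else if t = 3 then {1} else ∅ := by
      ext i
      fin_cases i <;> simp <;> grind
    rw [fiber]
    split_ifs
    · exact (linearIndepOn_singleton_iff k).2 (mt Ideal.Quotient.eq_zero_iff_mem.1 hφ)
    · exact (linearIndepOn_singleton_iff k).2 (mt Ideal.Quotient.eq_zero_iff_mem.1 hj)
    · exact linearIndepOn_empty k _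
  obtain ⟨s, b, hs, hb⟩ :=
    exists_basis_extending_of_hasLeadingForm hF.hilbertFunction_eq_choose hf hE indep
  refine ⟨b, s 0, s 1, s.injective.ne (by decide), (hs 0).2, (hs 1).2, fun hp hψ ↦ ?_⟩
  obtain ⟨g, hg, hpg⟩ := exists_mem_totalDegreeLT_mk_eq hf (t := 1) hp hψ
  rw [hpg]
  exact hb hg _ (hs 1).1.ge

theorem exists_sub_mem_span_pair (hF : InGeneralPosition F)
    (hf : ∀ i, HasLeadingForm R 2 (F i) (f i)) {j : Fin 3} {c : Fin 3 → k} {β : Fin 3 → R}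
    (hc : c j = 1) (hβ : β j = 0) (a : MvPolynomial (Fin 3) R ⧸ Ideal.span (Set.range f)) :
    let l i := Ideal.Quotient.mk (Ideal.span (Set.range f)) (X i - (c i • X j + C (β i)))
    ∃ r r' : R, a - (r • 1 + r' • Ideal.Quotient.mk _ (X j)) ∈
      Ideal.span {l (j.succAbove 0), l (j.succAbove 1)} := by
  intro l
  let J := (Ideal.span {l (j.succAbove 0), l (j.succAbove 1)}).comap (Ideal.Quotient.mk _)
  have l_mem (i : Fin 3) : X i - (c i • X j + C (β i)) ∈ J := by
    obtain rfl | ⟨m, rfl⟩ := j.eq_self_or_eq_succAbove i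
    · simp [hc, hβ]
    · refine Ideal.mem_comap.2 (Ideal.subset_span ?_)
      fin_cases m <;> simp [l]
  have hc0 : c ≠ 0 := fun h ↦ one_ne_zero (hc.symm.trans (congrFun h j))
  obtain ⟨m, hm⟩ := hF.exists_eval_ne_zero hc0
  have f_mem : f m ∈ J := by
    rw [Ideal.mem_comap,
      Ideal.Quotient.eq_zero_iff_mem.2 (Ideal.subset_span (Set.mem_range_self m))]
    exact zero_mem _
  obtain ⟨g, rfl⟩ := Ideal.Quotient.mk_surjective a
  have hg : g ∈ powersModulo J j 2 := powersModulo_eq_top l_mem (hf m) f_mem hm ▸ trivial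
  obtain ⟨r, r', h⟩ := exists_sub_mem_of_mem_powersModulo_two hg
  exact ⟨r, r', h⟩

variable [IsDomain R] [IsNoetherianRing R] [UniqueFactorizationMonoid R]
  {P : Ideal (MvPolynomial (Fin 3) R ⧸ Ideal.span (Set.range f))}

theorem hasProjectiveDimensionLE_one_span_singleton_mk (hF : InGeneralPosition F)
    (hf : ∀ i, HasLeadingForm R 2 (F i) (f i))
    (hP : ∀ {c : R} {a}, c ≠ 0 → c • a ∈ P → a ∈ P)
    (rank_le : Module.finrank R (P.restrictScalars R) ≤ 3) {φ : MvPolynomial (Fin 3) k}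
    {q : MvPolynomial (Fin 3) R} (hq : HasLeadingForm R 2 φ q) (hqP : Ideal.Quotient.mk _ q ∈ P)
    (hφ : φ ∉ Ideal.span (Set.range F)) :
    HasProjectiveDimensionLE
      (ModuleCat.of R ((Ideal.span {Ideal.Quotient.mk (Ideal.span (Set.range f)) q}).restrictScalars
        R)) 1 := by
  obtain ⟨j, hj⟩ := hF.exists_X_mul_notMem hq.isHomogeneous (by decide) hφ
  choose c hc using fun i ↦ hF.exists_sub_smul_mem ((isHomogeneous_X _ i).mul hq.isHomogeneous)
    ((isHomogeneous_X _ j).mul hq.isHomogeneous) hj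
  have hcj : c j = 1 := by
    by_contra h
    refine hj ((Submodule.smul_mem_iff _ (sub_ne_zero.2 (Ne.symm h))).1 ?_)
    simpa [sub_smul] using hc j
  obtain ⟨b, s, s', hne, hs, hs', hb⟩ := exists_basis_apply_eq_mk_and_X_mul hF hf hq hj
  have leading (i : Fin 3) :
      HasLeadingForm R 3 (X i * φ - c i • (X j * φ)) (X i * q - c i • (X j * q)) := by
    simpa only [neg_smul, ← sub_eq_add_neg] using
      ((HasLeadingForm.X i).mul hq).add (((HasLeadingForm.X j).mul hq).smul (-c i))
  let β (i : Fin 3) : R := b.repr (Ideal.Quotient.mk _ (X i * q - c i • (X j * q))) s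
  let l (i : Fin 3) : MvPolynomial (Fin 3) R := X i - (c i • X j + C (β i))
  have l_mul (i : Fin 3) : Ideal.Quotient.mk (Ideal.span (Set.range f)) (l i) * b s =
      Ideal.Quotient.mk _ (X i * q - c i • (X j * q)) - β i • b s := by
    rw [hs, ← Ideal.Quotient.mkₐ_eq_mk R, ← map_mul, ← map_smul, ← map_sub]
    congr 1
    simp only [l, smul_eq_C_mul, ← algebraMap_smul R (c i)]
    ring
  have hβ : β j = 0 := by simp [β, hcj]
  rw [← hs] at hqP ⊢
  refine hasProjectiveDimensionLE_one_span_singleton b hP rank_le hne hqP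
    (by rw [hs', map_mul, hs] : b s' = Ideal.Quotient.mk _ (X j) * b s)
    (fun m ↦ Ideal.Quotient.mk _ (l (j.succAbove m))) (fun m ↦ ?_) fun a ↦ ?_
  · rw [l_mul, map_sub, map_smul, b.repr_self]
    exact ⟨by simp [β], by rw [Finsupp.sub_apply, hb (leading _) (hc _)]; simp [hne.symm]⟩
  · exact exists_sub_mem_span_pair hF hf hcj hβ a

end CompleteIntersection

section CompleteIntersection

open MvPolynomial

variable {k R : Type u} [Field k] [CommRing R] [Algebra k R] [IsDomain R]
  {F : Fin 3 → MvPolynomial (Fin 3) k} {f : Fin 3 → MvPolynomial (Fin 3) R}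

theorem finrank_map_mk_le {p : Ideal (MvPolynomial (Fin 3) R)} (hF : InGeneralPosition F)
    (hf : ∀ i, HasLeadingForm R 2 (F i) (f i)) (hfp : Ideal.span (Set.range f) ≤ p)
    (le_rank : 5 ≤ Module.finrank R (MvPolynomial (Fin 3) R ⧸ p)) :
    Module.finrank R ((p.map (Ideal.Quotient.mk (Ideal.span (Set.range f)))).restrictScalars R) ≤
      3 := by
  obtain ⟨b⟩ := exists_basis_of_inGeneralPosition hF hf
  have := Module.Finite.of_basis b
  set P := p.map (Ideal.Quotient.mk (Ideal.span (Set.range f)))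
  have quotient_eq : Module.finrank R (_ ⧸ P.restrictScalars R) =
      Module.finrank R (MvPolynomial (Fin 3) R ⧸ p) :=
    (Submodule.Quotient.restrictScalarsEquiv R P).finrank_eq.trans
      (DoubleQuot.quotQuotEquivQuotOfLEₐ R hfp).toLinearEquiv.finrank_eq
  have add_eq := Submodule.finrank_quotient_add_finrank (P.restrictScalars R)
  rw [quotient_eq, Module.finrank_eq_card_basis b, Fintype.card_finset, Fintype.card_fin] at add_eq
  lia

variable [IsNoetherianRing R]

theorem mk_mem_span_singleton_of_sub_smul_mem
    {P : Ideal (MvPolynomial (Fin 3) R ⧸ Ideal.span (Set.range f))} (hF : InGeneralPosition F)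
    (hf : ∀ i, HasLeadingForm R 2 (F i) (f i))
    (hP : ∀ {c : R} {a}, c ≠ 0 → c • a ∈ P → a ∈ P)
    (rank_le : Module.finrank R (P.restrictScalars R) ≤ 3)
    {φ ψ : MvPolynomial (Fin 3) k} {p q : MvPolynomial (Fin 3) R} (hp : HasLeadingForm R 2 φ p)
    (hq : HasLeadingForm R 2 ψ q) (hpP : Ideal.Quotient.mk _ p ∈ P)
    (hqP : Ideal.Quotient.mk _ q ∈ P) {a : k} (ha : ψ - a • φ ∈ Ideal.span (Set.range F)) :
    Ideal.Quotient.mk (Ideal.span (Set.range f)) q ∈ Ideal.span {Ideal.Quotient.mk _ p} := by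
  have leading : HasLeadingForm R 2 (ψ - a • φ) (q - a • p) := by
    simpa only [neg_smul, ← sub_eq_add_neg] using hq.add (hp.smul (-a))
  have smul_eq : a • p = C (algebraMap k R a) * p := by rw [← smul_eq_C_mul, algebraMap_smul]
  have mk_eq : Ideal.Quotient.mk (Ideal.span (Set.range f)) (q - a • p) = 0 := by
    refine mk_eq_zero_of_mem_span hF hf hP rank_le leading ?_ ha
    rw [smul_eq, map_sub, map_mul]
    exact sub_mem hqP (P.mul_mem_left _ hpP)
  rw [smul_eq, map_sub, map_mul, sub_eq_zero] at mk_eq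
  rw [mk_eq]
  exact Ideal.mul_mem_left _ _ (Ideal.mem_span_singleton_self _)

variable [UniqueFactorizationMonoid R]

theorem hasProjectiveDimensionLE_one_span_range_mk
    {P : Ideal (MvPolynomial (Fin 3) R ⧸ Ideal.span (Set.range f))} (hF : InGeneralPosition F)
    (hf : ∀ i, HasLeadingForm R 2 (F i) (f i))
    (hP : ∀ {c : R} {a}, c ≠ 0 → c • a ∈ P → a ∈ P)
    (rank_le : Module.finrank R (P.restrictScalars R) ≤ 3) {ι : Type*}
    {φ : ι → MvPolynomial (Fin 3) k} {q : ι → MvPolynomial (Fin 3) R}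
    (hq : ∀ i, HasLeadingForm R 2 (φ i) (q i)) (hqP : ∀ i, Ideal.Quotient.mk _ (q i) ∈ P) :
    HasProjectiveDimensionLE (ModuleCat.of R ((Ideal.span (Set.range fun i ↦
      Ideal.Quotient.mk (Ideal.span (Set.range f)) (q i))).restrictScalars R)) 1 := by
  set N := Ideal.span (Set.range fun i ↦ Ideal.Quotient.mk (Ideal.span (Set.range f)) (q i))
  have mem (i : ι) : Ideal.Quotient.mk _ (q i) ∈ N := Ideal.subset_span ⟨i, rfl⟩
  have of_projective (h : Module.Projective R (N.restrictScalars R)) :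
      HasProjectiveDimensionLE (ModuleCat.of R (N.restrictScalars R)) 1 := by
    have := (hasProjectiveDimensionLE_zero_iff (A := R) (N.restrictScalars R)).2 h
    exact hasProjectiveDimensionLT_of_ge _ 1 2 one_le_two
  by_cases h₀ : ∀ i, φ i ∈ Ideal.span (Set.range F)
  · have eq_bot : N = ⊥ := Ideal.span_eq_bot.2 <| by
      rintro _ ⟨i, rfl⟩
      exact mk_eq_zero_of_mem_span hF hf hP rank_le (hq i) (hqP i) (h₀ i)
    rw [eq_bot, Submodule.restrictScalars_bot] at of_projective ⊢
    exact of_projective inferInstance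
  push Not at h₀
  obtain ⟨i, hi⟩ := h₀
  have mk_ne_zero := mt Ideal.Quotient.eq_zero_iff_mem.1 hi
  by_cases h₁ : ∃ j, ∀ a : k,
      a • Ideal.Quotient.mk (Ideal.span (Set.range F)) (φ i) ≠ Ideal.Quotient.mk _ (φ j)
  · obtain ⟨j, hj⟩ := h₁
    exact of_projective (projective_of_linearIndependent_pair hF hf rank_le
      (Ideal.span_le.2 (Set.range_subset_iff.2 hqP)) (hq i) (hq j) (mem i) (mem j)
      ((LinearIndependent.pair_iff' mk_ne_zero).2 hj))
  · push Not at h₁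
    have eq_span : N = Ideal.span {Ideal.Quotient.mk _ (q i)} := by
      refine le_antisymm (Ideal.span_le.2 (Set.range_subset_iff.2 fun j ↦ ?_))
        (Ideal.span_le.2 (Set.singleton_subset_iff.2 (mem i)))
      obtain ⟨a, ha⟩ := h₁ j
      exact mk_mem_span_singleton_of_sub_smul_mem hF hf hP rank_le (hq i) (hq j) (hqP i) (hqP j)
        (Ideal.Quotient.eq.1 ha.symm)
    rw [eq_span]
    exact hasProjectiveDimensionLE_one_span_singleton_mk hF hf hP rank_le (hq i) (hqP i) hi

theorem hasProjectiveDimensionLE_two_quotient {p : Ideal (MvPolynomial (Fin 3) R)}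
    (hF : InGeneralPosition F) (hf : ∀ i, HasLeadingForm R 2 (F i) (f i))
    (hfp : ∀ i, f i ∈ p) (hp : ∀ {c : R} {g}, c ≠ 0 → c • g ∈ p → g ∈ p)
    (le_rank : 5 ≤ Module.finrank R (MvPolynomial (Fin 3) R ⧸ p)) {ι : Type*}
    {φ : ι → MvPolynomial (Fin 3) k} {q : ι → MvPolynomial (Fin 3) R}
    (hq : ∀ i, HasLeadingForm R 2 (φ i) (q i)) (hqp : ∀ i, q i ∈ p) :
    HasProjectiveDimensionLE (ModuleCat.of R
      (MvPolynomial (Fin 3) R ⧸ Ideal.span (Set.range f) ⊔ Ideal.span (Set.range q))) 2 := by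
  have hJp : Ideal.span (Set.range f) ≤ p := Ideal.span_le.2 (Set.range_subset_iff.2 hfp)
  set J := Ideal.span (Set.range f)
  obtain ⟨b⟩ := exists_basis_of_inGeneralPosition hF hf
  have hP {c : R} {a : MvPolynomial (Fin 3) R ⧸ J} (hc : c ≠ 0)
      (ha : c • a ∈ p.map (Ideal.Quotient.mk J)) : a ∈ p.map (Ideal.Quotient.mk J) := by
    obtain ⟨g, rfl⟩ := Ideal.Quotient.mk_surjective a
    exact (Ideal.mem_quotient_iff_mem hJp).2 (hp hc ((Ideal.mem_quotient_iff_mem hJp).1 ha))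
  have hN := hasProjectiveDimensionLE_one_span_range_mk hF hf hP
    (finrank_map_mk_le hF hf hJp le_rank) hq fun i ↦ Ideal.mem_map_of_mem _ (hqp i)
  set N := Ideal.span (Set.range fun i ↦ Ideal.Quotient.mk J (q i))
  have hNI : (J ⊔ Ideal.span (Set.range q)).map (Ideal.Quotient.mk J) = N := by
    rw [Ideal.map_sup, Ideal.map_quotient_self, bot_sup_eq, Ideal.map_span, ← Set.range_comp]
    rfl
  have exact : Function.Exact (N.restrictScalars R).subtype
      (Ideal.Quotient.factorₐ R (J := J ⊔ Ideal.span (Set.range q)) le_sup_left).toLinearMap := by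
    intro a
    obtain ⟨g, rfl⟩ := Ideal.Quotient.mk_surjective a
    have mem_iff : Ideal.Quotient.mk J g ∈ N ↔ g ∈ J ⊔ Ideal.span (Set.range q) := by
      rw [← hNI, Ideal.mem_quotient_iff_mem le_sup_left]
    simpa [mem_iff] using Ideal.Quotient.eq_zero_iff_mem
  have : Module.Projective R (MvPolynomial (Fin 3) R ⧸ J) := .of_basis b
  refine (hasProjectiveDimensionLE_succ_iff_of_exact (Submodule.subtype_injective _)
    (Ideal.Quotient.factor_surjective le_sup_left) exact 1).2 hN

end CompleteIntersection

/-! ### Heights and general elements -/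

section Height

theorem le_height_iff {S : Type*} [CommRing S] {b : Ideal S} {t : ℕ∞} :
    t ≤ b.height ↔ ∀ P : Ideal S, P.IsPrime → b ≤ P → t ≤ P.height := by
  refine ⟨fun h P _ hP ↦ h.trans (Ideal.height_mono hP), fun h ↦ ?_⟩
  rw [Ideal.height_eq_inf_minimalPrimes]
  exact le_iInf₂ fun P hP ↦ h P hP.1.1 hP.1.2

variable {k S ι : Type*} [Field k] [CommRing S] [IsNoetherianRing S] [Algebra k S]

theorem exists_height_le_height_sup_span_singleton [Infinite k] [Finite ι] (W : Submodule k S)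
    (c : ι → Ideal S) :
    ∃ w ∈ W, ∀ i, min ((c i).height + 1) (Ideal.span (W : Set S)).height ≤
      (c i ⊔ Ideal.span {w}).height := by
  have finite_minimalPrimes (i) : Finite (c i).minimalPrimes :=
    Set.finite_coe_iff.2 (Ideal.finite_minimalPrimes_of_isNoetherianRing S (c i))
  let ι' := {x : Σ i, (c i).minimalPrimes // ¬ (W : Set S) ⊆ (x.2 : Ideal S)}
  let q : ι' → Subspace k W := fun x ↦
    (Submodule.restrictScalars k (x.1.2 : Ideal S)).comap W.subtype
  have exists_avoiding : ⋃ x, (q x : Set W) ≠ Set.univ := fun h ↦ by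
    obtain ⟨x, hx⟩ := Subspace.exists_eq_top_of_iUnion_eq_univ h
    exact x.2 fun w hw ↦ show (⟨w, hw⟩ : W) ∈ q x from hx ▸ Submodule.mem_top
  obtain ⟨w, hw⟩ := (Set.ne_univ_iff_exists_notMem _).1 exists_avoiding
  refine ⟨w, w.2, fun i ↦ le_height_iff.2 fun Q hQ hcQ ↦ ?_⟩
  obtain ⟨P, hP, hPQ⟩ := Ideal.exists_minimalPrimes_le (le_sup_left.trans hcQ)
  have : P.IsPrime := hP.1.1
  by_cases hWP : (W : Set S) ⊆ P
  · exact (min_le_right _ _).trans (Ideal.height_mono ((Ideal.span_le.2 hWP).trans hPQ))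
  · have hwQ : (w : S) ∈ Q := hcQ (Submodule.mem_sup_right (Ideal.mem_span_singleton_self _))
    have hwP : (w : S) ∉ P := fun h ↦ hw (Set.mem_iUnion.2 ⟨⟨⟨i, P, hP⟩, hWP⟩, h⟩)
    have hlt : P < Q := hPQ.lt_of_ne fun h ↦ hwP (h ▸ hwQ)
    calc min ((c i).height + 1) (Ideal.span (W : Set S)).height
        ≤ (c i).height + 1 := min_le_left _ _
      _ ≤ P.height + 1 := by gcongr; exact hP.1.2
      _ ≤ Q.height := Ideal.height_add_one_le_of_lt_of_isPrime hlt

theorem exists_sequence_height_le [Infinite k] [Finite ι] (W : Submodule k S) (c : ι → Ideal S) :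
    ∃ z : ℕ → S, (∀ j, z j ∈ W) ∧ ∀ i (j : ℕ),
      min ((c i).height + j) (Ideal.span (W : Set S)).height ≤
        (c i ⊔ Ideal.span (z '' Set.Iio j)).height := by
  choose w hwW hw using exists_height_le_height_sup_span_singleton (ι := ι) W
  let b : ℕ → ι → Ideal S := fun j ↦ Nat.rec c (fun _ b i ↦ b i ⊔ Ideal.span {w b}) j
  have b_eq (i) (j : ℕ) : b j i = c i ⊔ Ideal.span ((fun l ↦ w (b l)) '' Set.Iio j) := by
    induction j with
    | zero => simp [b]
    | succ j ih =>
      rw [show Set.Iio (j + 1) = insert j (Set.Iio j) from Order.Iio_succ_eq_insert j,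
      Set.image_insert_eq, Ideal.span_insert, sup_comm (Ideal.span _), ← sup_assoc, ← ih]
  refine ⟨fun j ↦ w (b j), fun j ↦ hwW _, fun i j ↦ ?_⟩
  rw [← b_eq]
  induction j with
  | zero => exact (min_le_left _ _).trans (by simp [b])
  | succ j ih =>
    refine le_trans (le_min ?_ (min_le_right _ _)) (hw (b j) i)
    rw [Nat.cast_add, Nat.cast_one, ← add_assoc]
    calc min ((c i).height + j + 1) (Ideal.span (W : Set S)).height
        ≤ min ((c i).height + j + 1) ((Ideal.span (W : Set S)).height + 1) :=
          min_le_min_left _ le_self_add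
      _ = min ((c i).height + j) (Ideal.span (W : Set S)).height + 1 := min_add_add_right _ _ _
      _ ≤ (b j i).height + 1 := by gcongr

theorem height_span_le_finrank {s : Set S} [FiniteDimensional k (Submodule.span k s)]
    (hs : Ideal.span s ≠ ⊤) :
    (Ideal.span s).height ≤ Module.finrank k (Submodule.span k s) := by
  obtain ⟨v, -, span_v, -⟩ := Submodule.exists_fun_fin_finrank_span_eq k s
  have ideal_span_v : Ideal.span s = Ideal.span (Set.range v) := by
    have := congrArg (fun W : Submodule k S ↦ Submodule.span S (W : Set S)) span_v
    simpa only [Submodule.span_span_of_tower] using this.symm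
  refine (Ideal.height_le_spanFinrank _ hs).trans (Nat.cast_le.2 ?_)
  rw [ideal_span_v]
  refine (Submodule.spanFinrank_span_le_ncard_of_finite (Set.finite_range v)).trans ?_
  simpa using Set.ncard_image_le (f := v) Set.finite_univ

end Height

section Variables

open MvPolynomial

attribute [local instance] MvPolynomial.gradedAlgebra

variable {σ k : Type*} [Field k]

theorem card_le_height_idealOfVars [Fintype σ] :
    (Fintype.card σ : ℕ∞) ≤ (idealOfVars σ k).height := by
  classical
  let φ : Finset σ → MvPolynomial σ k →ₐ[k] MvPolynomial σ k := fun s ↦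
    aeval fun i ↦ if i ∈ s then 0 else X i
  have prime_ker (s) : (RingHom.ker (φ s)).IsPrime := RingHom.ker_isPrime _
  have ker_lt (s) (i) (hi : i ∉ s) : RingHom.ker (φ s) < RingHom.ker (φ (insert i s)) := by
    have φ_insert : φ (insert i s) = (φ (insert i s)).comp (φ s) := by
      ext j
      by_cases hj : j ∈ s <;> simp [φ, hj]
    refine SetLike.lt_iff_le_and_exists.2 ⟨fun x hx ↦ ?_, X i, by simp [φ, RingHom.mem_ker],
      by simp [φ, RingHom.mem_ker, hi]⟩
    rw [RingHom.mem_ker] at hx ⊢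
    rw [φ_insert, AlgHom.comp_apply, hx, map_zero]
  have card_le (s : Finset σ) : (s.card : ℕ∞) ≤ (RingHom.ker (φ s)).height := by
    induction s using Finset.induction_on with
    | empty => simp
    | insert i s hi ih =>
      rw [Finset.card_insert_of_notMem hi, Nat.cast_add, Nat.cast_one]
      exact (add_le_add_left ih 1).trans
        (Ideal.height_add_one_le_of_lt_of_isPrime (ker_lt s i hi))
  refine (card_le Finset.univ).trans (Ideal.height_mono fun x hx ↦ ?_)
  have mk_comp : (Ideal.Quotient.mkₐ k (idealOfVars σ k)).comp (φ Finset.univ) =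
      Ideal.Quotient.mkₐ k (idealOfVars σ k) := by
    ext j
    have := Ideal.Quotient.eq_zero_iff_mem.2
      (Ideal.subset_span (Set.mem_range_self j) : X j ∈ idealOfVars σ k)
    simp [φ, this]
  rw [← Ideal.Quotient.eq_zero_iff_mem, ← Ideal.Quotient.mkₐ_eq_mk k, ← mk_comp,
    AlgHom.comp_apply, hx, map_zero]

theorem height_le_card [Fintype σ] {P : Ideal (MvPolynomial σ k)} (hP : P ≠ ⊤) :
    P.height ≤ Fintype.card σ := by
  have := Ideal.height_le_ringKrullDim_of_ne_top hP
  rw [MvPolynomial.ringKrullDim_of_isNoetherianRing, ringKrullDim_eq_zero_of_field, zero_add,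
    Nat.card_eq_fintype_card] at this
  exact_mod_cast this

theorem idealOfVars_ne_top : idealOfVars σ k ≠ ⊤ := fun h ↦ by
  simpa [h] using C_mem_pow_idealOfVars_iff (σ := σ) (R := k) 1 1

theorem le_idealOfVars_of_isHomogeneous {I : Ideal (MvPolynomial σ k)}
    (hI : I.IsHomogeneous (homogeneousSubmodule σ k)) (hI_top : I ≠ ⊤) : I ≤ idealOfVars σ k := by
  intro x hx
  rw [← pow_one (idealOfVars σ k), mem_pow_idealOfVars_iff']
  intro m hm
  obtain rfl : m = 0 := (Finsupp.degree_eq_zero_iff m).1 (Nat.lt_one_iff.1 hm)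
  by_contra hne
  have mem : C (coeff 0 x) ∈ I := by
    rw [← homogeneousComponent_zero]
    exact homogeneousComponent_mem_of_mem hI hx 0
  exact hI_top (I.eq_top_of_isUnit_mem mem ((isUnit_iff_ne_zero.2 hne).map C))

theorem idealOfVars_le_radical_of_card_le_height [Fintype σ] {b : Ideal (MvPolynomial σ k)}
    (hb : b.IsHomogeneous (homogeneousSubmodule σ k)) (h : (Fintype.card σ : ℕ∞) ≤ b.height) :
    idealOfVars σ k ≤ b.radical := by
  rw [Ideal.radical_eq_sInf]
  refine le_sInf fun P ⟨hbP, (hP : P.IsPrime)⟩ ↦ ?_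
  let Q := (Ideal.homogeneousCore (homogeneousSubmodule σ k) P).toIdeal
  have hQ : Q.IsPrime := hP.homogeneousCore
  have hbQ : b ≤ Q := hb.toIdeal_homogeneousCore_eq_self.ge.trans (Ideal.homogeneousCore_mono _ hbP)
  have hQ_vars : Q ≤ idealOfVars σ k :=
    le_idealOfVars_of_isHomogeneous (Ideal.homogeneousCore _ P).isHomogeneous hQ.ne_top
  have : Q = idealOfVars σ k := Ideal.eq_of_le_of_height_le _ hQ_vars
    ((height_le_card idealOfVars_ne_top).trans (h.trans (Ideal.height_mono hbQ)))
  exact this ▸ Ideal.toIdeal_homogeneousCore_le _ _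

theorem isHomogeneous_mem_idealOfVars {t : ℕ} (ht : t ≠ 0) {p : MvPolynomial σ k}
    (hp : p.IsHomogeneous t) : p ∈ idealOfVars σ k := by
  rw [← pow_one (idealOfVars σ k)]
  exact mem_pow_idealOfVars_of_isHomogeneous hp (Nat.one_le_iff_ne_zero.2 ht)

theorem span_eq_homogeneousSubmodule_one {N : ℕ} {z : Fin N → MvPolynomial (Fin N) k}
    (hz : ∀ i, (z i).IsHomogeneous 1) (h : N ≤ (Ideal.span (Set.range z)).height) :
    Submodule.span k (Set.range z) = homogeneousSubmodule (Fin N) k 1 := by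
  have := FiniteDimensional.span_of_finite k (Set.finite_range z)
  have span_le : Ideal.span (Set.range z) ≤ idealOfVars (Fin N) k :=
    Ideal.span_le.2 <| Set.range_subset_iff.2 fun i ↦
      isHomogeneous_mem_idealOfVars one_ne_zero (hz i)
  refine Submodule.eq_of_le_of_finrank_le (Submodule.span_le.2 (Set.range_subset_iff.2 hz)) ?_
  rw [finrank_homogeneousSubmodule, Nat.add_sub_cancel, Nat.choose_one_right]
  exact_mod_cast h.trans
    (height_span_le_finrank (k := k) (ne_top_of_le_ne_top idealOfVars_ne_top span_le))

end Variables

/-! ### Adapted linear coordinates -/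

section Coordinates

open MvPolynomial

attribute [local instance] MvPolynomial.gradedAlgebra

theorem injective_of_surjective_ringHom {A : Type*} [CommRing A] [IsNoetherianRing A]
    {φ : A →+* A} (hφ : Function.Surjective φ) : Function.Injective φ := by
  have comap_strictMono : StrictMono (Ideal.comap φ) := Monotone.strictMono_of_injective
    (fun _ _ ↦ Ideal.comap_mono) (Ideal.comap_injective_of_surjective φ hφ)
  refine (RingHom.injective_iff_ker_eq_bot φ).2 (not_not.1 fun h ↦ ?_)
  exact not_strictMono_of_wellFoundedGT _
    (comap_strictMono.strictMono_iterate_of_lt_map (bot_lt_iff_ne_bot.2 h))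

variable {σ τ k : Type*} [Field k]

theorem exists_algEquiv_apply_eq_X [Finite σ] {z : σ → MvPolynomial σ k}
    (hz : Submodule.span k (Set.range z) = homogeneousSubmodule σ k 1) :
    ∃ Θ : MvPolynomial σ k ≃ₐ[k] MvPolynomial σ k, ∀ i, Θ (z i) = X i := by
  let φ : MvPolynomial σ k →ₐ[k] MvPolynomial σ k := aeval z
  have range_eq_top : φ.range = ⊤ := by
    refine top_le_iff.1 (adjoin_range_X.ge.trans (Algebra.adjoin_le ?_))
    have span_le : Submodule.span k (Set.range z) ≤ Subalgebra.toSubmodule φ.range :=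
      Submodule.span_le.2 <| Set.range_subset_iff.2 fun i ↦ ⟨X i, aeval_X z i⟩
    exact Set.range_subset_iff.2 fun i ↦ span_le (hz ▸ isHomogeneous_X k i)
  have surjective := (AlgHom.range_eq_top φ).1 range_eq_top
  have injective := injective_of_surjective_ringHom (φ := φ.toRingHom) surjective
  exact ⟨(AlgEquiv.ofBijective φ ⟨injective, surjective⟩).symm, fun i ↦
    (AlgEquiv.symm_apply_eq _).2 (aeval_X z i).symm⟩

/-- The substitution of zero for the variables of the coefficient ring. In adapted coordinates it
takes a form to its leading form. -/
noncomputable def coeffsAtZero (σ τ k : Type*) [Field k] :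
    MvPolynomial σ (MvPolynomial τ k) →ₐ[k] MvPolynomial σ k :=
  mapAlgHom (aeval 0)

theorem coeffsAtZero_C_X (i : τ) : coeffsAtZero σ τ k (C (X i)) = 0 := by
  simp [coeffsAtZero]

theorem coeffsAtZero_X (i : σ) : coeffsAtZero σ τ k (X i) = X i := by
  simp [coeffsAtZero]

theorem hasLeadingForm_of_span_eq {R ι : Type*} [CommRing R] [Algebra k R]
    {Θ : MvPolynomial τ k →ₐ[k] MvPolynomial σ R} {ρ : MvPolynomial τ k →ₐ[k] MvPolynomial σ k}
    {z : ι → MvPolynomial τ k}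
    (hz : Submodule.span k (Set.range z) = homogeneousSubmodule τ k 1)
    (hΘz : ∀ i, HasLeadingForm R 1 (ρ (z i)) (Θ (z i)))
    {t : ℕ} {q : MvPolynomial τ k} (hq : q.IsHomogeneous t) :
    HasLeadingForm R t (ρ q) (Θ q) := by
  have linear (l) (hl : l ∈ Submodule.span k (Set.range z)) : HasLeadingForm R 1 (ρ l) (Θ l) := by
    induction hl using Submodule.span_induction with
    | mem x hx => obtain ⟨i, rfl⟩ := hx; exact hΘz i
    | zero => simpa only [map_zero] using HasLeadingForm.zero 1
    | add x y _ _ hx hy => simpa only [map_add] using hx.add hy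
    | smul a x _ hx => simpa only [map_smul] using hx.smul a
  replace hq : q ∈ Submodule.span k (Set.range z) ^ t := by
    rwa [hz, homogeneousSubmodule_one_pow]
  induction hq using Submodule.pow_induction_on_left' with
  | algebraMap a =>
    simpa using HasLeadingForm.map_algebraMap (R := R) (isHomogeneous_C σ a)
  | add x y t _ _ hx hy => simpa only [map_add] using hx.add hy
  | mem_mul l hl t x _ hx =>
    simpa only [map_mul, Nat.succ_eq_add_one, add_comm t] using (linear l hl).mul hx

/-- A change of coordinates splitting the variables of a polynomial ring over `k` into those of a
coefficient ring `k[τ]` and those indexed by `σ`. It is linear: forms have leading forms of the same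
degree with coefficients in `k`, and the variables of `k[τ]` correspond to linear forms. -/
structure IsLinearChange {υ : Type*}
    (Θ : MvPolynomial υ k ≃ₐ[k] MvPolynomial σ (MvPolynomial τ k)) : Prop where
  hasLeadingForm {t : ℕ} {q : MvPolynomial υ k} : q.IsHomogeneous t →
    HasLeadingForm (MvPolynomial τ k) t (coeffsAtZero σ τ k (Θ q)) (Θ q)
  isHomogeneous_symm_C_X (i : τ) : (Θ.symm (C (X i))).IsHomogeneous 1

theorem exists_isLinearChange {c d : ℕ} {z : Fin (d + c) → MvPolynomial (Fin (d + c)) k}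
    (hz : Submodule.span k (Set.range z) = homogeneousSubmodule (Fin (d + c)) k 1) :
    ∃ Θ : MvPolynomial (Fin (d + c)) k ≃ₐ[k] MvPolynomial (Fin c) (MvPolynomial (Fin d) k),
      IsLinearChange Θ ∧ (∀ i, Θ (z (Fin.castAdd c i)) = C (X i)) ∧
        ∀ i, Θ (z (Fin.natAdd d i)) = X i := by
  obtain ⟨Θ₀, hΘ₀⟩ := exists_algEquiv_apply_eq_X hz
  let Θ := (Θ₀.trans (renameEquiv k (finSumFinEquiv.symm.trans (Equiv.sumComm _ _)))).trans
    (sumAlgEquiv k (Fin c) (Fin d))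
  have apply_castAdd (i) : Θ (z (Fin.castAdd c i)) = C (X i) := by simp [Θ, hΘ₀]
  have apply_natAdd (i) : Θ (z (Fin.natAdd d i)) = X i := by simp [Θ, hΘ₀]
  refine ⟨Θ, ⟨hasLeadingForm_of_span_eq (Θ := Θ.toAlgHom)
    (ρ := (coeffsAtZero _ _ k).comp Θ.toAlgHom) hz fun i ↦ ?_, fun i ↦ ?_⟩,
    apply_castAdd, apply_natAdd⟩
  · change HasLeadingForm _ 1 (coeffsAtZero _ _ k (Θ (z i))) (Θ (z i))
    induction i using Fin.addCases with
    | left i =>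
      rw [apply_castAdd, coeffsAtZero_C_X]
      refine ⟨isHomogeneous_zero _ _ _, ?_⟩
      rw [map_zero, sub_zero]
      exact mem_totalDegreeLT_of_isHomogeneous (isHomogeneous_C _ _)
    | right i =>
      rw [apply_natAdd, coeffsAtZero_X]
      exact HasLeadingForm.X i
  · rw [← apply_castAdd, AlgEquiv.symm_apply_apply]
    exact hz.le (Submodule.subset_span (Set.mem_range_self _))

theorem exists_sequences_le_height [Infinite k] {N c : ℕ}
    {V : Submodule k (MvPolynomial (Fin N) k)}
    (hV : (c : ℕ∞) ≤ (Ideal.span (V : Set (MvPolynomial (Fin N) k))).height) :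
    ∃ g z : ℕ → MvPolynomial (Fin N) k, (∀ i, g i ∈ V) ∧ (∀ j, (z j).IsHomogeneous 1) ∧
      ∀ i j, i ≤ c → i + j ≤ N →
        ((i + j : ℕ) : ℕ∞) ≤
          (Ideal.span (g '' Set.Iio i) ⊔ Ideal.span (z '' Set.Iio j)).height := by
  obtain ⟨g, g_mem, hg⟩ := exists_sequence_height_le V
    fun _ : Unit ↦ (⊥ : Ideal (MvPolynomial (Fin N) k))
  obtain ⟨z, z_mem, hz⟩ := exists_sequence_height_le (homogeneousSubmodule (Fin N) k 1)
    fun i : Fin (c + 1) ↦ Ideal.span (g '' Set.Iio i.1)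
  refine ⟨g, z, g_mem, z_mem, fun i j hi hij ↦ (le_min ?_ ?_).trans (hz ⟨i, by lia⟩ j)⟩
  · have le_height : (i : ℕ∞) ≤ (Ideal.span (g '' Set.Iio i)).height := by
      have : (i : ℕ∞) ≤ c := by exact_mod_cast hi
      simpa [this.trans hV] using hg () i
    push_cast
    gcongr
  · calc ((i + j : ℕ) : ℕ∞) ≤ Fintype.card (Fin N) := by simpa using mod_cast hij
      _ ≤ (idealOfVars (Fin N) k).height := card_le_height_idealOfVars
      _ ≤ _ := Ideal.height_mono <| Ideal.span_mono <|
        Set.range_subset_iff.2 fun i ↦ isHomogeneous_X k i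

theorem map_mem_radical_of_card_le_height [Fintype τ] {A : Type*} [CommRing A]
    {ρ : MvPolynomial τ k →+* A} {b : Ideal (MvPolynomial τ k)} {J : Ideal A}
    (hb : b.IsHomogeneous (homogeneousSubmodule τ k)) (le_height : Fintype.card τ ≤ b.height)
    (hbJ : b ≤ J.comap ρ) {t : ℕ} (ht : t ≠ 0) {q : MvPolynomial τ k} (hq : q.IsHomogeneous t) :
    ρ q ∈ J.radical := by
  have h := Ideal.radical_mono hbJ <| idealOfVars_le_radical_of_card_le_height hb le_height <|
    isHomogeneous_mem_idealOfVars ht hq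
  rwa [← Ideal.comap_radical] at h

theorem X_mem_radical_of_le_height {c d : ℕ} {g z : ℕ → MvPolynomial (Fin (d + c)) k}
    {ρ : MvPolynomial (Fin (d + c)) k →+* MvPolynomial (Fin c) k}
    (hg : ∀ i, (g i).IsHomogeneous 2) (hz : ∀ j, (z j).IsHomogeneous 1)
    (ρ_z : ∀ j < d, ρ (z j) = 0) (ρ_z_add : ∀ a : Fin c, ρ (z (d + a)) = X a) {i j : ℕ}
    (le_height : ((d + c : ℕ) : ℕ∞) ≤
      (Ideal.span (g '' Set.Iio i) ⊔ Ideal.span (z '' Set.Iio (d + j))).height)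
    (hj : j ≤ c) {J : Ideal (MvPolynomial (Fin c) k)} (hgJ : ∀ m < i, ρ (g m) ∈ J)
    (hXJ : ∀ a : Fin c, a < j → X a ∈ J) (a : Fin c) : X a ∈ J.radical := by
  rw [← ρ_z_add]
  refine map_mem_radical_of_card_le_height ?_ (by simpa using le_height)
    (sup_le (Ideal.span_le.2 ?_) (Ideal.span_le.2 ?_)) one_ne_zero (hz _)
  · rw [← Ideal.span_union]
    refine Ideal.homogeneous_span _ _ ?_
    rintro x (⟨a, -, rfl⟩ | ⟨a, -, rfl⟩)
    exacts [⟨2, hg a⟩, ⟨1, hz a⟩]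
  · rintro _ ⟨m, hm, rfl⟩
    exact hgJ m hm
  · rintro _ ⟨m, hm, rfl⟩
    change ρ (z m) ∈ J
    rcases lt_or_ge m d with hmd | hdm
    · simp only [ρ_z m hmd, zero_mem]
    · obtain ⟨a, rfl⟩ := Nat.exists_eq_add_of_le hdm
      have ha : a < j := Nat.lt_of_add_lt_add_left hm
      exact ρ_z_add ⟨a, ha.trans_le hj⟩ ▸ hXJ ⟨a, ha.trans_le hj⟩ ha

theorem inGeneralPosition_of_le_height {d : ℕ} {g z : ℕ → MvPolynomial (Fin (d + 3)) k}
    {ρ : MvPolynomial (Fin (d + 3)) k →+* MvPolynomial (Fin 3) k}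
    (hg : ∀ i, (g i).IsHomogeneous 2) (hz : ∀ j, (z j).IsHomogeneous 1)
    (hρg : ∀ i, (ρ (g i)).IsHomogeneous 2)
    (ρ_z : ∀ j < d, ρ (z j) = 0) (ρ_z_add : ∀ a : Fin 3, ρ (z (d + a)) = X a)
    (le_height : ∀ i j, i ≤ 3 → i + j ≤ d + 3 → ((i + j : ℕ) : ℕ∞) ≤
      (Ideal.span (g '' Set.Iio i) ⊔ Ideal.span (z '' Set.Iio j)).height) :
    InGeneralPosition fun i : Fin 3 ↦ ρ (g i.rev) := by
  have X_mem (i j : ℕ) (hij : i + j = 3) {J : Ideal (MvPolynomial (Fin 3) k)} :=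
    X_mem_radical_of_le_height (J := J) hg hz ρ_z ρ_z_add (i := i) (j := j)
      (by simpa [show i + (d + j) = d + 3 by lia] using le_height i (d + j) (by lia) (by lia))
      (by lia)
  refine ⟨fun i ↦ hρg _, X_mem 1 2 rfl ?_ ?_ 2, X_mem 2 1 rfl ?_ ?_ 1, X_mem 3 0 rfl ?_ (by simp)⟩
  · intro m hm
    obtain rfl : m = 0 := by lia
    exact Ideal.mem_sup_right (Ideal.mem_span_singleton_self _)
  · intro a ha
    refine Ideal.mem_sup_left ?_
    obtain rfl | rfl : a = 0 ∨ a = 1 := by lia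
    exacts [Ideal.mem_sup_left (Ideal.mem_span_singleton_self _),
      Ideal.mem_sup_right (Ideal.mem_span_singleton_self _)]
  · intro m hm
    obtain rfl | rfl : m = 0 ∨ m = 1 := by lia
    exacts [Ideal.mem_sup_left (Ideal.mem_sup_right (Ideal.mem_span_singleton_self _)),
      Ideal.mem_sup_right (Ideal.mem_span_singleton_self _)]
  · intro a ha
    obtain rfl : a = 0 := by lia
    exact Ideal.mem_sup_left (Ideal.mem_sup_left (Ideal.mem_span_singleton_self _))
  · intro m hm
    obtain ⟨i, rfl⟩ : ∃ i : Fin 3, m = i.rev := ⟨(⟨m, hm⟩ : Fin 3).rev, by simp⟩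
    exact Ideal.subset_span (Set.mem_range_self i)

theorem exists_isLinearChange_inGeneralPosition [Infinite k] {d : ℕ}
    {V : Submodule k (MvPolynomial (Fin (d + 3)) k)}
    (hV : V ≤ homogeneousSubmodule (Fin (d + 3)) k 2)
    (le_height : 3 ≤ (Ideal.span (V : Set (MvPolynomial (Fin (d + 3)) k))).height) :
    ∃ (Θ : MvPolynomial (Fin (d + 3)) k ≃ₐ[k] MvPolynomial (Fin 3) (MvPolynomial (Fin d) k))
      (g : Fin 3 → MvPolynomial (Fin (d + 3)) k), IsLinearChange Θ ∧ (∀ i, g i ∈ V) ∧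
        3 ≤ (Ideal.span (Set.range g)).height ∧
        InGeneralPosition fun i ↦ coeffsAtZero _ _ k (Θ (g i)) := by
  obtain ⟨g, z, g_mem, hz, le_height_sup⟩ := exists_sequences_le_height le_height
  have range_eq {n : ℕ} (w : ℕ → MvPolynomial (Fin (d + 3)) k) :
      Set.range (fun i : Fin n ↦ w i) = w '' Set.Iio n := by
    rw [← Fin.range_val, ← Set.range_comp]; rfl
  have span_z : Submodule.span k (Set.range fun i : Fin (d + 3) ↦ z i) =
      homogeneousSubmodule (Fin (d + 3)) k 1 := by
    refine span_eq_homogeneousSubmodule_one (fun i ↦ hz i) ?_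
    simpa [range_eq] using le_height_sup 0 (d + 3) (by lia) (by lia)
  obtain ⟨Θ, hΘ, Θ_castAdd, Θ_natAdd⟩ := exists_isLinearChange span_z
  refine ⟨Θ, fun i ↦ g i.rev, hΘ, fun i ↦ g_mem _, ?_, inGeneralPosition_of_le_height
    (ρ := ((coeffsAtZero _ _ k).comp Θ.toAlgHom).toRingHom) (fun i ↦ hV (g_mem i)) hz
    (fun i ↦ (hΘ.hasLeadingForm (hV (g_mem i))).isHomogeneous) (fun j hj ↦ ?_) (fun a ↦ ?_)
    le_height_sup⟩
  · have range_rev : Set.range (fun i : Fin 3 ↦ g i.rev) = g '' Set.Iio 3 :=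
      (Fin.rev_surjective.range_comp fun i : Fin 3 ↦ g i).trans (range_eq g)
    rw [range_rev]
    simpa using le_height_sup 3 0 le_rfl (by lia)
  · simpa [coeffsAtZero_C_X] using congrArg (coeffsAtZero _ _ k) (Θ_castAdd ⟨j, hj⟩)
  · simpa [coeffsAtZero_X] using congrArg (coeffsAtZero _ _ k) (Θ_natAdd a)

end Coordinates

/-! ### Multiplicity and rank -/

section Multiplicity

open MvPolynomial Filter

attribute [local instance] MvPolynomial.gradedAlgebra

theorem coeff_nonneg_of_eventually_eval_nonneg {P : Polynomial ℚ}
    (hP : ∀ᶠ n : ℕ in atTop, 0 ≤ P.eval (n : ℚ)) {m : ℕ} (hm : P.natDegree ≤ m) :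
    0 ≤ P.coeff m := by
  rcases hm.lt_or_eq with hm | rfl
  · exact (Polynomial.coeff_eq_zero_of_natDegree_lt hm).ge
  rw [Polynomial.coeff_natDegree]
  by_contra! leadingCoeff_neg
  rcases Nat.eq_zero_or_pos P.natDegree with h | h
  · obtain ⟨n, hn⟩ := hP.exists
    rw [Polynomial.eq_C_of_natDegree_eq_zero h, Polynomial.eval_C] at hn
    rw [Polynomial.leadingCoeff, h] at leadingCoeff_neg
    exact hn.not_gt leadingCoeff_neg
  · have tendsto_atBot := (P.tendsto_atBot_of_leadingCoeff_nonpos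
      (Polynomial.natDegree_pos_iff_degree_pos.1 h) leadingCoeff_neg.le).comp
      tendsto_natCast_atTop_atTop
    obtain ⟨n, hn, hn'⟩ := (hP.and (tendsto_atBot.eventually_lt_atBot 0)).exists
    exact hn.not_gt hn'

theorem factorial_mul_leadingCoeff_le {P : Polynomial ℚ} {D e r : ℕ}
    (le_eval : ∀ᶠ t : ℕ in atTop, ((t + D).choose D : ℚ) ≤ P.eval (t : ℚ))
    (eval_le : ∀ᶠ t : ℕ in atTop, P.eval (t : ℚ) ≤ r * ((t + e + D).choose D : ℚ)) :
    P.natDegree.factorial * P.leadingCoeff ≤ r := by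
  let Q := Polynomial.preHilbertPoly ℚ D 0
  let Q' := Q.comp (Polynomial.X + Polynomial.C (e : ℚ))
  have eval_Q (t : ℕ) : Q.eval (t : ℚ) = (t + D).choose D := by
    simpa using Polynomial.preHilbertPoly_eq_choose_sub_add ℚ D (Nat.zero_le t)
  have eval_Q' (t : ℕ) : Q'.eval (t : ℚ) = (t + e + D).choose D := by
    simpa [Q'] using eval_Q (t + e)
  have natDegree_Q : Q.natDegree = D := Polynomial.natDegree_preHilbertPoly ℚ D 0
  have natDegree_Q' : Q'.natDegree = D := by
    rw [Polynomial.natDegree_comp, natDegree_Q, Polynomial.natDegree_X_add_C, mul_one]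
  have coeff_Q : Q.coeff D = (D.factorial : ℚ)⁻¹ := Polynomial.coeff_preHilbertPoly_self ℚ D 0
  have coeff_Q' : Q'.coeff D = (D.factorial : ℚ)⁻¹ := by
    rw [← coeff_Q, ← natDegree_Q, Polynomial.coeff_natDegree, natDegree_Q, ← natDegree_Q',
      Polynomial.coeff_natDegree,
      Polynomial.leadingCoeff_comp (Polynomial.natDegree_X_add_C (e : ℚ) ▸ one_ne_zero),
      Polynomial.leadingCoeff_X_add_C, one_pow, mul_one]
  have le_coeff {m : ℕ} (hP : P.natDegree ≤ m) (hD : D ≤ m) : Q.coeff m ≤ P.coeff m := by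
    rw [← sub_nonneg, ← Polynomial.coeff_sub]
    refine coeff_nonneg_of_eventually_eval_nonneg (le_eval.mono fun t ht ↦ ?_)
      ((Polynomial.natDegree_sub_le_of_le hP (natDegree_Q.trans_le hD)).trans (max_self m).le)
    rwa [Polynomial.eval_sub, eval_Q, sub_nonneg]
  have coeff_le {m : ℕ} (hP : P.natDegree ≤ m) (hD : D ≤ m) : P.coeff m ≤ r * Q'.coeff m := by
    rw [← sub_nonneg, ← Polynomial.coeff_C_mul, ← Polynomial.coeff_sub]
    refine coeff_nonneg_of_eventually_eval_nonneg (eval_le.mono fun t ht ↦ ?_)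
      ((Polynomial.natDegree_sub_le_of_le
        ((Polynomial.natDegree_C_mul_le _ _).trans (natDegree_Q'.trans_le hD)) hP).trans
          (max_self m).le)
    rwa [Polynomial.eval_sub, Polynomial.eval_C_mul, eval_Q', sub_nonneg]
  rcases lt_trichotomy P.natDegree D with h | h | h
  · have := le_coeff h.le le_rfl
    rw [coeff_Q, Polynomial.coeff_eq_zero_of_natDegree_lt h, inv_nonpos] at this
    exact absurd this (by exact_mod_cast D.factorial_pos.not_ge)
  · have := coeff_le h.le le_rfl
    rw [coeff_Q', ← h, Polynomial.coeff_natDegree] at this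
    rwa [mul_comm, ← le_mul_inv_iff₀ (by positivity)]
  · have le_zero := coeff_le le_rfl h.le
    have zero_le := le_coeff le_rfl h.le
    rw [Polynomial.coeff_eq_zero_of_natDegree_lt (natDegree_Q'.trans_lt h), mul_zero] at le_zero
    rw [Polynomial.coeff_eq_zero_of_natDegree_lt (natDegree_Q.trans_lt h)] at zero_le
    have := Polynomial.leadingCoeff_eq_zero.1 (le_antisymm le_zero zero_le)
    simp [this] at h

theorem finrank_homogeneousSubmodule_le (k : Type*) [Field k] (d : ℕ) {s t : ℕ} (hs : s ≠ 0)
    (hst : s ≤ t) : Module.finrank k (homogeneousSubmodule (Fin d) k s) ≤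
      Module.finrank k (homogeneousSubmodule (Fin d) k t) := by
  simp only [finrank_homogeneousSubmodule]
  rcases d with - | D
  · rw [Nat.choose_eq_zero_of_lt (by lia)]
    exact Nat.zero_le _
  · rw [← Nat.choose_symm (by lia), ← Nat.choose_symm (n := D + 1 + t - 1) (by lia)]
    have sub_eq (n : ℕ) : D + 1 + n - 1 - n = D := by lia
    rw [sub_eq, sub_eq]
    exact Nat.choose_le_choose _ (by lia)

theorem exists_smul_mem_span_of_span_eq_top {R A ι : Type*} [CommRing R] [IsDomain R]
    [AddCommGroup A] [Module R A] [Module.Finite R A] {v : ι → A}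
    (hv : Submodule.span R (Set.range v) = ⊤) :
    ∃ s : Finset ι, s.card ≤ Module.finrank R A ∧ ∃ a : R, a ≠ 0 ∧
      ∀ y : A, a • y ∈ Submodule.span R (v '' s) := by
  obtain ⟨s, hs, hs'⟩ := exists_maximal_linearIndepOn R v
  have : Finite s := LinearIndependent.finite hs
  have := Fintype.ofFinite s
  refine ⟨s.toFinset, by simpa using LinearIndependent.fintype_card_le_finrank hs, ?_⟩
  rw [Set.coe_toFinset]
  let M := Submodule.span R (v '' s)
  have isTorsion : Module.IsTorsion R (A ⧸ M) := by
    have top_le : ⊤ ≤ Submodule.torsion R (A ⧸ M) := by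
      rw [← M.range_mkQ, LinearMap.range_eq_map, ← hv, Submodule.map_span, Submodule.span_le]
      rintro _ ⟨_, ⟨i, rfl⟩, rfl⟩
      by_cases hi : i ∈ s
      · have mkQ_eq_zero : M.mkQ (v i) = 0 := (Submodule.Quotient.mk_eq_zero M).2
          (Submodule.subset_span (Set.mem_image_of_mem v hi))
        exact mkQ_eq_zero ▸ zero_mem _
      · obtain ⟨a, ha, hav⟩ := hs' i hi
        exact ⟨⟨a, mem_nonZeroDivisors_of_ne_zero ha⟩, (Submodule.Quotient.mk_eq_zero M).2 hav⟩
    exact fun x ↦ top_le (x := x) trivial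
  obtain ⟨a, ha, ha'⟩ := Submodule.annihilator_top_inter_nonZeroDivisors isTorsion
  refine ⟨a, nonZeroDivisors.ne_zero ha', fun y ↦ ?_⟩
  rw [← Submodule.Quotient.mk_eq_zero, Submodule.Quotient.mk_smul]
  exact Submodule.mem_annihilator.1 ha _ trivial

variable {k : Type u} [Field k] {N d : ℕ}

theorem hilbertFunction_ker {A : Type*} [CommRing A] [Algebra k A]
    (π : MvPolynomial (Fin N) k →ₐ[k] A) (t : ℕ) : hilbertFunction k (RingHom.ker π) t =
      Module.finrank k ((homogeneousSubmodule (Fin N) k t).map π.toLinearMap) := by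
  have comp_eq : π.toLinearMap = (Ideal.kerLiftAlg π).toLinearMap ∘ₗ
      (Ideal.Quotient.mkₐ k (RingHom.ker π)).toLinearMap := rfl
  rw [comp_eq, Submodule.map_comp]
  exact (Submodule.equivMapOfInjective _ (Ideal.kerLiftAlg_injective π) _).finrank_eq

theorem homogeneousComponent_algHom_apply {σ τ : Type*}
    {ψ : MvPolynomial σ k →ₐ[k] MvPolynomial τ k} (hψ : ∀ i, (ψ (X i)).IsHomogeneous 1) (n : ℕ)
    (r : MvPolynomial σ k) :
    homogeneousComponent n (ψ r) = ψ (homogeneousComponent n r) := by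
  have isHomogeneous {t : ℕ} {r : MvPolynomial σ k} (hr : r.IsHomogeneous t) :
      (ψ r).IsHomogeneous t := by
    rw [aeval_unique ψ, ← one_mul t]
    exact hr.aeval _ hψ
  conv_lhs => rw [← sum_homogeneousComponent r, map_sum, map_sum]
  conv_rhs => rw [← sum_homogeneousComponent r, map_sum, map_sum]
  refine Finset.sum_congr rfl fun i _ ↦ ?_
  have component_isHomogeneous := homogeneousComponent_isHomogeneous i r
  rw [homogeneousComponent_of_mem component_isHomogeneous,
    homogeneousComponent_of_mem (isHomogeneous component_isHomogeneous)]
  split_ifs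
  exacts [rfl, (map_zero ψ).symm]

variable {A : Type*} [CommRing A] [Algebra k A] [Algebra (MvPolynomial (Fin d) k) A]
  [IsScalarTower k (MvPolynomial (Fin d) k) A] {π : MvPolynomial (Fin N) k →ₐ[k] A}

theorem exists_algHom_lift (hX : ∀ i, algebraMap (MvPolynomial (Fin d) k) A (X i) ∈
      (homogeneousSubmodule (Fin N) k 1).map π.toLinearMap) :
    ∃ ψ : MvPolynomial (Fin d) k →ₐ[k] MvPolynomial (Fin N) k,
      (∀ i, (ψ (X i)).IsHomogeneous 1) ∧ ∀ r, π (ψ r) = algebraMap _ A r := by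
  choose l hl hπl using hX
  refine ⟨aeval l, fun i ↦ by simpa using hl i, fun r ↦ ?_⟩
  have : π.comp (aeval l) = IsScalarTower.toAlgHom k (MvPolynomial (Fin d) k) A :=
    algHom_ext fun i ↦ by simpa using hπl i
  exact DFunLike.congr_fun this r

theorem map_homogeneousComponent_eq
    (hker : (RingHom.ker π).IsHomogeneous (homogeneousSubmodule (Fin N) k))
    {x y : MvPolynomial (Fin N) k} (h : π x = π y) (n : ℕ) :
    π (homogeneousComponent n x) = π (homogeneousComponent n y) := by
  have sub_mem : x - y ∈ RingHom.ker π := by rw [RingHom.mem_ker, map_sub, h, sub_self]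
  have := homogeneousComponent_mem_of_mem hker sub_mem n
  rwa [map_sub, RingHom.mem_ker, map_sub, sub_eq_zero] at this

theorem homogeneousComponent_smul_eq
    (hker : (RingHom.ker π).IsHomogeneous (homogeneousSubmodule (Fin N) k))
    (hX : ∀ i, algebraMap (MvPolynomial (Fin d) k) A (X i) ∈
      (homogeneousSubmodule (Fin N) k 1).map π.toLinearMap)
    {ι : Type*} [Fintype ι] {a : MvPolynomial (Fin d) k} {c : ι → MvPolynomial (Fin d) k}
    {x : MvPolynomial (Fin N) k} {m : ι → MvPolynomial (Fin N) k} {δ : ι → ℕ} {e t : ℕ}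
    (h : a • π x = ∑ j, c j • π (m j)) (hx : x.IsHomogeneous t)
    (hm : ∀ j, (m j).IsHomogeneous (δ j)) (hδ : ∀ j, δ j ≤ t + e) :
    homogeneousComponent e a • π x =
      ∑ j, homogeneousComponent (t + e - δ j) (c j) • π (m j) := by
  obtain ⟨ψ, hψ, hπψ⟩ := exists_algHom_lift hX
  simp only [Algebra.smul_def, ← hπψ, ← map_mul, ← map_sum] at h ⊢
  have := map_homogeneousComponent_eq hker h (e + t)
  rw [homogeneousComponent_add_mul hx, homogeneousComponent_algHom_apply hψ, map_sum] at this
  rw [this]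
  congr 1
  refine Finset.sum_congr rfl fun j _ ↦ ?_
  rw [← Nat.sub_add_cancel ((hδ j).trans_eq (add_comm t e)),
    homogeneousComponent_add_mul (hm j), homogeneousComponent_algHom_apply hψ, add_comm e t]

theorem finrank_homogeneousSubmodule_le_hilbertFunction_ker
    [FaithfulSMul (MvPolynomial (Fin d) k) A]
    (hX : ∀ i, algebraMap (MvPolynomial (Fin d) k) A (X i) ∈
      (homogeneousSubmodule (Fin N) k 1).map π.toLinearMap) (t : ℕ) :
    Module.finrank k (homogeneousSubmodule (Fin d) k t) ≤
      hilbertFunction k (RingHom.ker π) t := by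
  obtain ⟨ψ, hψ, hπψ⟩ := exists_algHom_lift hX
  have injective : Function.Injective (π.comp ψ).toLinearMap := fun r r' h ↦
    FaithfulSMul.algebraMap_injective (MvPolynomial (Fin d) k) A
      ((hπψ r).symm.trans (h.trans (hπψ r')))
  rw [hilbertFunction_ker, (Submodule.equivMapOfInjective _ injective _).finrank_eq]
  refine Submodule.finrank_mono ?_
  rintro _ ⟨r, hr, rfl⟩
  refine ⟨ψ r, ?_, rfl⟩
  rw [SetLike.mem_coe, mem_homogeneousSubmodule] at hr ⊢
  rw [← homogeneousComponent_eq_self hr, ← homogeneousComponent_algHom_apply hψ]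
  exact homogeneousComponent_isHomogeneous t _

theorem hilbertFunction_ker_le_of_smul_mem_span [IsDomain A]
    [FaithfulSMul (MvPolynomial (Fin d) k) A]
    (hker : (RingHom.ker π).IsHomogeneous (homogeneousSubmodule (Fin N) k))
    (hX : ∀ i, algebraMap (MvPolynomial (Fin d) k) A (X i) ∈
      (homogeneousSubmodule (Fin N) k 1).map π.toLinearMap)
    {ι : Type*} [Fintype ι] {m : ι → MvPolynomial (Fin N) k} {δ : ι → ℕ}
    (hm : ∀ j, (m j).IsHomogeneous (δ j)) {a : MvPolynomial (Fin d) k}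
    (smul_mem : ∀ y, a • y ∈ Submodule.span (MvPolynomial (Fin d) k) (Set.range (π ∘ m)))
    {e t : ℕ} (he : homogeneousComponent e a ≠ 0) (hδ : ∀ j, δ j < t) :
    hilbertFunction k (RingHom.ker π) t ≤
      Fintype.card ι * Module.finrank k (homogeneousSubmodule (Fin d) k (t + e)) := by
  let μ : A →ₗ[k] A := Algebra.lsmul k k A (homogeneousComponent e a)
  have μ_injective : Function.Injective μ := smul_right_injective A he
  let Φ : ((j : ι) → homogeneousSubmodule (Fin d) k (t + e - δ j)) →ₗ[k] A :=
    ∑ j, (LinearMap.toSpanSingleton (MvPolynomial (Fin d) k) A (π (m j))).restrictScalars k ∘ₗ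
      (Submodule.subtype _) ∘ₗ LinearMap.proj j
  have map_le : ((homogeneousSubmodule (Fin N) k t).map π.toLinearMap).map μ ≤ Φ.range := by
    rintro _ ⟨_, ⟨x, hx, rfl⟩, rfl⟩
    obtain ⟨c, hc⟩ := (Submodule.mem_span_range_iff_exists_fun _).1 (smul_mem (π x))
    have smul_eq := homogeneousComponent_smul_eq hker hX hc.symm hx hm fun j ↦
      ((hδ j).trans_le (Nat.le_add_right t e)).le
    refine ⟨fun j ↦ ⟨homogeneousComponent (t + e - δ j) (c j),
      homogeneousComponent_isHomogeneous _ _⟩, Eq.trans ?_ smul_eq.symm⟩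
    simp [Φ]
  rw [hilbertFunction_ker, (Submodule.equivMapOfInjective μ μ_injective _).finrank_eq]
  calc _ ≤ Module.finrank k Φ.range := Submodule.finrank_mono map_le
    _ ≤ _ := Φ.finrank_range_le
    _ = ∑ j, Module.finrank k (homogeneousSubmodule (Fin d) k (t + e - δ j)) :=
      Module.finrank_pi_fintype k
    _ ≤ ∑ _ : ι, Module.finrank k (homogeneousSubmodule (Fin d) k (t + e)) :=
      Finset.sum_le_sum fun j _ ↦ finrank_homogeneousSubmodule_le k d
        (by have := hδ j; lia) (Nat.sub_le _ _)
    _ = _ := by rw [Finset.sum_const, Finset.card_univ, smul_eq_mul]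

theorem exists_hilbertFunction_ker_le [IsDomain A] [Module.Finite (MvPolynomial (Fin d) k) A]
    [FaithfulSMul (MvPolynomial (Fin d) k) A] (hπ : Function.Surjective π)
    (hker : (RingHom.ker π).IsHomogeneous (homogeneousSubmodule (Fin N) k))
    (hX : ∀ i, algebraMap (MvPolynomial (Fin d) k) A (X i) ∈
      (homogeneousSubmodule (Fin N) k 1).map π.toLinearMap) :
    ∃ e, ∀ᶠ t in atTop, hilbertFunction k (RingHom.ker π) t ≤
      Module.finrank (MvPolynomial (Fin d) k) A *
        Module.finrank k (homogeneousSubmodule (Fin d) k (t + e)) := by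
  let m := basisMonomials (Fin N) k
  have span_eq_top : Submodule.span (MvPolynomial (Fin d) k) (Set.range (π ∘ m)) = ⊤ := by
    rw [← Submodule.span_span_of_tower k, Set.range_comp, ← AlgHom.coe_toLinearMap,
      ← Submodule.map_span, Module.Basis.span_eq, Submodule.map_top,
      LinearMap.range_eq_top.2 hπ, Submodule.top_coe, Submodule.span_univ]
  obtain ⟨s, card_le, a, ha, smul_mem⟩ := exists_smul_mem_span_of_span_eq_top span_eq_top
  obtain ⟨e, he⟩ : ∃ e, homogeneousComponent e a ≠ 0 := by
    by_contra! h
    exact ha (by rw [← sum_homogeneousComponent a, Finset.sum_eq_zero fun i _ ↦ h i])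
  refine ⟨e, ?_⟩
  filter_upwards [eventually_gt_atTop (s.sup Finsupp.degree)] with t ht
  rw [Set.image_eq_range] at smul_mem
  refine (hilbertFunction_ker_le_of_smul_mem_span hker hX (m := fun j : s ↦ m j)
    (fun j ↦ isHomogeneous_monomial _ rfl) smul_mem he
    fun j ↦ (Finset.le_sup j.2).trans_lt ht).trans ?_
  rw [Fintype.card_coe]
  exact Nat.mul_le_mul_right _ card_le

theorem hilbertSamuelMultiplicity_ker_le_finrank [IsDomain A]
    [Module.Finite (MvPolynomial (Fin d) k) A]
    [FaithfulSMul (MvPolynomial (Fin d) k) A] (hπ : Function.Surjective π)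
    (hker : (RingHom.ker π).IsHomogeneous (homogeneousSubmodule (Fin N) k))
    (hX : ∀ i, algebraMap (MvPolynomial (Fin d) k) A (X i) ∈
      (homogeneousSubmodule (Fin N) k 1).map π.toLinearMap) :
    hilbertSamuelMultiplicity k (RingHom.ker π) ≤ Module.finrank (MvPolynomial (Fin d) k) A := by
  obtain ⟨e, hilbertFunction_le⟩ := exists_hilbertFunction_ker_le hπ hker hX
  have le_hilbertFunction := finrank_homogeneousSubmodule_le_hilbertFunction_ker hX
  rw [hilbertSamuelMultiplicity]
  split_ifs with h
  swap
  · exact Nat.cast_nonneg _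
  have eq_eval := h.choose_spec
  generalize h.choose = P at *
  simp only [finrank_homogeneousSubmodule] at hilbertFunction_le le_hilbertFunction
  rcases d with - | D
  · have eval_eq_zero : ∀ᶠ t : ℕ in atTop, P.eval (t : ℚ) = 0 := by
      filter_upwards [eq_eval, hilbertFunction_le, eventually_gt_atTop 0] with t eq_eval le ht
      rw [Nat.choose_eq_zero_of_lt (by lia), mul_zero, Nat.le_zero] at le
      rw [← eq_eval, le, Nat.cast_zero]
    have : P = 0 := by
      by_contra hne
      obtain ⟨t, h, h'⟩ := (eval_eq_zero.and (tendsto_natCast_atTop_atTop.eventually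
        (Polynomial.eventually_atTop_not_isRoot P hne))).exists
      exact h' h
    simp [this]
  · have choose_eq (t : ℕ) : (D + 1 + t - 1).choose t = (t + D).choose D := by
      rw [show D + 1 + t - 1 = t + D by lia, Nat.choose_symm_add]
    simp only [choose_eq] at hilbertFunction_le le_hilbertFunction
    refine factorial_mul_leadingCoeff_le (D := D) (e := e) ?_ ?_
    · filter_upwards [eq_eval] with t ht
      rw [← ht]
      exact_mod_cast le_hilbertFunction t
    · filter_upwards [eq_eval, hilbertFunction_le] with t ht ht'
      rw [← ht]
      exact_mod_cast ht'

end Multiplicity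

/-! ### Heights and homogeneous primes -/

section Contraction

theorem under_eq_bot_of_flat_quotient (R : Type*) {A : Type*} [CommRing R] [IsDomain R] [CommRing A]
    [Algebra R A] {J p : Ideal A} [Module.Flat R (A ⧸ J)] [hp : p.IsPrime] (hJp : J ≤ p)
    (height_le : p.height ≤ J.height) (height_ne_top : p.height ≠ ⊤) : p.under R = ⊥ := by
  let π := Ideal.Quotient.mk J
  have π_surjective : Function.Surjective π := Ideal.Quotient.mk_surjective
  have ker_le : RingHom.ker π ≤ p := by rwa [Ideal.mk_ker]
  have : (p.map π).IsPrime := Ideal.map_isPrime_of_surjective π_surjective ker_le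
  have comap_map : (p.map π).comap π = p := by
    rw [Ideal.comap_map_of_surjective _ π_surjective, ← RingHom.ker_eq_comap_bot,
      sup_eq_left.2 ker_le]
  by_contra under_ne_bot
  have bot_lt : (⊥ : Ideal R) < (p.map π).under R :=
    (bot_lt_iff_ne_bot.2 under_ne_bot).trans_le (Ideal.comap_mono comap_map.ge)
  obtain ⟨Q, hQ, _, -⟩ := Ideal.exists_ideal_lt_liesOver_of_lt (p.map π) bot_lt
  have lt_p : Q.comap π < p := comap_map ▸
    Monotone.strictMono_of_injective (fun _ _ ↦ Ideal.comap_mono)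
      (Ideal.comap_injective_of_surjective π π_surjective) hQ
  have le_comap : J ≤ Q.comap π := Ideal.mk_ker.ge.trans (Ideal.comap_mono bot_le)
  have height_lt := (ENat.add_one_le_iff
    (ne_top_of_le_ne_top height_ne_top (Ideal.height_mono lt_p.le))).1
    (Ideal.height_add_one_le_of_lt_of_isPrime lt_p)
  exact height_lt.not_ge (height_le.trans (Ideal.height_mono le_comap))

theorem mem_of_smul_mem {R A : Type*} [CommRing R] [CommRing A] [Algebra R A] {p : Ideal A}
    [hp : p.IsPrime] (under_eq_bot : p.under R = ⊥) {c : R} {a : A} (hc : c ≠ 0)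
    (h : c • a ∈ p) : a ∈ p := by
  rw [Algebra.smul_def] at h
  exact (hp.mem_or_mem h).resolve_left fun hcp ↦ hc (under_eq_bot.le hcp)

end Contraction

section Transport

theorem heightENat_eq_height {A : Type u} [CommRing A] (I : Ideal A) : I.heightENat = I.height := by
  refine le_antisymm ?_ (le_iInf₂ fun Q hQ ↦
    (Ideal.height_mono hQ).trans_eq (PrimeSpectrum.height_eq_orderHeight Q))
  rw [Ideal.height_eq_inf_minimalPrimes]
  exact le_iInf₂ fun P hP ↦ iInf₂_le_of_le ⟨P, hP.1.1⟩ hP.1.2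
    (PrimeSpectrum.height_eq_orderHeight ⟨P, hP.1.1⟩).ge

theorem le_of_isAssociatedPrime_quotient {A : Type*} [CommRing A] {I p : Ideal A}
    (hp : IsAssociatedPrime p (A ⧸ I)) : I ≤ p := by
  simpa only [Submodule.annihilator_top, Ideal.annihilator_quotient] using hp.annihilator_le

theorem isHomogeneous_of_height_le {ι σ A : Type*} [CommRing A] [AddCommMonoid ι] [LinearOrder ι]
    [IsOrderedCancelAddMonoid ι] [SetLike σ A] [AddSubmonoidClass σ A] {𝒜 : ι → σ} [GradedRing 𝒜]
    {I p : Ideal A} [hp : p.IsPrime] [p.FiniteHeight] (hI : I.IsHomogeneous 𝒜) (hIp : I ≤ p)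
    (height_le : p.height ≤ I.height) : p.IsHomogeneous 𝒜 := by
  let q := (p.homogeneousCore 𝒜).toIdeal
  have : q.IsPrime := hp.homogeneousCore
  have hqp : q ≤ p := Ideal.toIdeal_homogeneousCore_le _ _
  have hIq : I ≤ q := hI.toIdeal_homogeneousCore_eq_self.ge.trans (Ideal.homogeneousCore_mono _ hIp)
  have : q.FiniteHeight := Ideal.finiteHeight_of_le hqp hp.ne_top
  have hq : q = p := Ideal.eq_of_le_of_height_le _ hqp (height_le.trans (Ideal.height_mono hIq))
  exact hq ▸ (p.homogeneousCore 𝒜).isHomogeneous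

theorem faithfulSMul_quotient_of_under_eq_bot {R A : Type*} [CommRing R] [CommRing A]
    [Algebra R A] {p : Ideal A} (under_eq_bot : p.under R = ⊥) : FaithfulSMul R (A ⧸ p) := by
  refine (faithfulSMul_iff_algebraMap_injective R (A ⧸ p)).2
    ((injective_iff_map_eq_zero (algebraMap R (A ⧸ p))).2 fun a ha ↦ ?_)
  have : a ∈ p.under R := Ideal.Quotient.eq_zero_iff_mem (I := p).1 ha
  rwa [under_eq_bot, Ideal.mem_bot] at this

theorem map_span_range {ι A B : Type*} [CommRing A] [CommRing B] (e : A ≃+* B) (h : ι → A) :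
    (Ideal.span (Set.range h)).map (e : A →+* B) = Ideal.span (Set.range (e ∘ h)) := by
  rw [Ideal.map_span, ← Set.range_comp, RingHom.coe_coe]

open MvPolynomial

attribute [local instance] MvPolynomial.gradedAlgebra

theorem hilbertSamuelMultiplicity_comap_le_finrank {k : Type u} [Field k] {N d : ℕ} {σ : Type*}
    {Θ : MvPolynomial (Fin N) k ≃ₐ[k] MvPolynomial σ (MvPolynomial (Fin d) k)}
    (hΘ : IsLinearChange Θ) {p : Ideal (MvPolynomial σ (MvPolynomial (Fin d) k))} [p.IsPrime]
    [Module.Finite (MvPolynomial (Fin d) k) (MvPolynomial σ (MvPolynomial (Fin d) k) ⧸ p)]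
    (under_eq_bot : p.under (MvPolynomial (Fin d) k) = ⊥)
    (hp : (p.comap Θ).IsHomogeneous (homogeneousSubmodule (Fin N) k)) :
    hilbertSamuelMultiplicity k (p.comap Θ) ≤
      Module.finrank (MvPolynomial (Fin d) k)
        (MvPolynomial σ (MvPolynomial (Fin d) k) ⧸ p) := by
  let π := (Ideal.Quotient.mkₐ k p).comp Θ.toAlgHom
  have ker_eq : RingHom.ker π = p.comap Θ := Ideal.ext fun _ ↦ Ideal.Quotient.eq_zero_iff_mem
  have := faithfulSMul_quotient_of_under_eq_bot under_eq_bot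
  have hπ : Function.Surjective π := Ideal.Quotient.mk_surjective.comp Θ.surjective
  have hX (i : Fin d) : algebraMap (MvPolynomial (Fin d) k) _ (X i) ∈
      (homogeneousSubmodule (Fin N) k 1).map π.toLinearMap :=
    ⟨Θ.symm (C (X i)), hΘ.isHomogeneous_symm_C_X i,
      congrArg (Ideal.Quotient.mk p) (Θ.apply_symm_apply (C (X i)))⟩
  rw [← ker_eq] at hp ⊢
  have le_finrank := hilbertSamuelMultiplicity_ker_le_finrank (d := d)
    (A := MvPolynomial σ (MvPolynomial (Fin d) k) ⧸ p) (π := π)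
  exact le_finrank hπ hp hX

variable {k : Type u} [Field k]

theorem hasProjectiveDimensionLE_five_of_isLinearChange {N d : ℕ}
    {Θ : MvPolynomial (Fin N) k ≃ₐ[k] MvPolynomial (Fin 3) (MvPolynomial (Fin d) k)}
    (hΘ : IsLinearChange Θ) {g : Fin 3 → MvPolynomial (Fin N) k}
    (hg : ∀ i, (g i).IsHomogeneous 2)
    (le_height : 3 ≤ (Ideal.span (Set.range g)).height)
    (hF : InGeneralPosition fun i ↦ coeffsAtZero _ _ k (Θ (g i)))
    {ι : Type*} {f : ι → MvPolynomial (Fin N) k} (hf : ∀ i, (f i).IsHomogeneous 2)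
    {p : Ideal (MvPolynomial (Fin N) k)} [p.IsPrime]
    (hp : p.IsHomogeneous (homogeneousSubmodule (Fin N) k)) (hgp : ∀ i, g i ∈ p)
    (hfp : ∀ i, f i ∈ p) (height_eq : p.height = 3)
    (le_multiplicity : 5 ≤ hilbertSamuelMultiplicity k p) :
    HasProjectiveDimensionLE (ModuleCat.of (MvPolynomial (Fin N) k)
      (MvPolynomial (Fin N) k ⧸ Ideal.span (Set.range g) ⊔ Ideal.span (Set.range f))) 5 := by
  let R := MvPolynomial (Fin d) k
  let e := Θ.toRingEquiv
  let J := Ideal.span (Set.range (e ∘ g))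
  let P := p.map (e : _ →+* MvPolynomial (Fin 3) R)
  have mem_P {x} (hx : x ∈ p) : e x ∈ P := Ideal.mem_map_of_mem _ hx
  have comap_P : P.comap Θ = p := Ideal.comap_map_of_bijective _ e.bijective
  have : P.IsPrime := Ideal.map_isPrime_of_equiv e
  have hJP : J ≤ P := Ideal.span_le.2 (Set.range_subset_iff.2 fun i ↦ mem_P (hgp i))
  have height_P : P.height = 3 := (RingEquiv.height_map e p).trans height_eq
  have height_J : 3 ≤ J.height :=
    le_height.trans_eq <| (RingEquiv.height_map e _).symm.trans
      (congrArg Ideal.height (map_span_range e g))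
  have leading_g (i) := hΘ.hasLeadingForm (hg i)
  obtain ⟨b⟩ := exists_basis_of_inGeneralPosition (R := R) (f := e ∘ g) hF leading_g
  have : Module.Free R (MvPolynomial (Fin 3) R ⧸ J) := .of_basis b
  have : Module.Finite R (MvPolynomial (Fin 3) R ⧸ J) := .of_basis b
  have : Module.Finite R (MvPolynomial (Fin 3) R ⧸ P) := .of_surjective
    (Ideal.Quotient.factorₐ R hJP).toLinearMap (Ideal.Quotient.factor_surjective hJP)
  have under_eq_bot : P.under R = ⊥ := under_eq_bot_of_flat_quotient R hJP
    (height_P.trans_le height_J) (height_P ▸ ENat.natCast_ne_top 3)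
  have le_finrank : 5 ≤ Module.finrank R (MvPolynomial (Fin 3) R ⧸ P) := by
    have := hilbertSamuelMultiplicity_comap_le_finrank hΘ under_eq_bot (comap_P ▸ hp)
    rw [comap_P] at this
    exact_mod_cast le_multiplicity.trans this
  refine hasProjectiveDimensionLE_quotient_of_map_ringEquiv e _ ?_
  rw [Ideal.map_sup, map_span_range, map_span_range]
  exact hasProjectiveDimensionLE_mvPolynomial 3 2 _ <| hasProjectiveDimensionLE_two_quotient hF
    leading_g (fun i ↦ mem_P (hgp i)) (mem_of_smul_mem under_eq_bot) le_finrank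
    (fun i ↦ hΘ.hasLeadingForm (hf i)) fun i ↦ mem_P (hfp i)

end Transport

open MvPolynomial in
attribute [local instance] MvPolynomial.gradedAlgebra in
theorem pd_le_of_assoc_prime_mult_five_general {k : Type u} [Field k] [Infinite k] {N : ℕ}
    {ι : Type*} {f : ι → MvPolynomial (Fin N) k} (hf : ∀ i, (f i).IsHomogeneous 2)
    (le_height : 3 ≤ (Ideal.span (Set.range f)).heightENat)
    {p : Ideal (MvPolynomial (Fin N) k)} [p.IsPrime] (hIp : Ideal.span (Set.range f) ≤ p)
    (height_eq : p.heightENat = 3) (le_multiplicity : 5 ≤ hilbertSamuelMultiplicity k p) :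
    projDim (MvPolynomial (Fin N) k) (MvPolynomial (Fin N) k ⧸ Ideal.span (Set.range f)) ≤
      (5 : ℕ) := by
  rw [heightENat_eq_height] at le_height height_eq
  have hI : (Ideal.span (Set.range f)).IsHomogeneous (homogeneousSubmodule (Fin N) k) :=
    Ideal.homogeneous_span _ _ (Set.forall_mem_range.2 fun i ↦ ⟨2, hf i⟩)
  have hp := isHomogeneous_of_height_le hI hIp (height_eq.trans_le le_height)
  obtain ⟨d, rfl⟩ : ∃ d, N = d + 3 := Nat.exists_eq_add_of_le' <| by
    simpa [height_eq] using height_le_card (Ideal.IsPrime.ne_top ‹p.IsPrime›)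
  let V := Submodule.span k (Set.range f)
  have span_V : Ideal.span (V : Set (MvPolynomial (Fin (d + 3)) k)) = Ideal.span (Set.range f) :=
    Submodule.span_span_of_tower k _ _
  have hV : V ≤ homogeneousSubmodule _ k 2 := Submodule.span_le.2 (Set.range_subset_iff.2 hf)
  obtain ⟨Θ, g, hΘ, hgV, height_g, hF⟩ :=
    exists_isLinearChange_inGeneralPosition hV (span_V ▸ le_height)
  have hgI (i) : g i ∈ Ideal.span (Set.range f) := span_V ▸ Ideal.subset_span (hgV i)
  have := hasProjectiveDimensionLE_five_of_isLinearChange hΘ (fun i ↦ hV (hgV i)) height_g hF hf hp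
    (fun i ↦ hIp (hgI i)) (fun i ↦ hIp (Ideal.subset_span ⟨i, rfl⟩)) height_eq le_multiplicity
  rw [sup_eq_right.2 (Ideal.span_le.2 (Set.range_subset_iff.2 hgI))] at this
  exact projDim_le_of_hasProjectiveDimensionLE _ _ _ this

/-- If `I` is a homogeneous ideal generated by `n` quadrics in a polynomial ring over an
algebraically closed field, and `I` has an associated prime `p` with `height p = 3` and
Hilbert–Samuel multiplicity `e(S/p) = 5`, then the stated bound on `pd_S(S/I)` holds. -/
theorem pd_le_of_assoc_prime_mult_five (k : Type u) [Field k] [IsAlgClosed k] (N : ℕ) (n : ℕ)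
    (f : Fin n → MvPolynomial (Fin N) k)
    (hf : ∀ i, (f i).IsHomogeneous 2)
    (I : Ideal (MvPolynomial (Fin N) k))
    (hI : I = Ideal.span (Set.range f))
    (hht : I.heightENat = 3)
    (p : Ideal (MvPolynomial (Fin N) k))
    (hp : IsAssociatedPrime p (MvPolynomial (Fin N) k ⧸ I))
    (hpht : p.heightENat = 3)
    (hpe : hilbertSamuelMultiplicity k p = 5) :
    projDim (MvPolynomial (Fin N) k) (MvPolynomial (Fin N) k ⧸ I) ≤ (6 : ℕ) := by
  subst hI
  have := hp.isPrime
  exact (pd_le_of_assoc_prime_mult_five_general hf hht.ge (le_of_isAssociatedPrime_quotient hp)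
    hpht hpe.ge).trans (by norm_num)
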